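/- arXiv:2102.06935 — 2 statements merged into one kernel-verified Lean document; each statement's English description precedes it below -/
import Mathlib

section
/- Strong forward Brascamp–Lieb inequality (single-function version): let α ∈ [0,α_max], q ∈ [1,∞), and p* ∈ [0,∞] be such that 1/p* is a subgradient of Θ_{q'} at α, where q' = q/(q−1) is the Hölder conjugate of q (q' = ∞ when q = 1). Then for every p ∈ (0,∞), every n ≥ 1, and all measurable f : 𝒳ⁿ → [0,∞) (not a.e. zero) such that (1/n) Ent_{p,p*}(f) ≥ α if p ≥ p* and (1/n) Ent_{p,p*}(f) ≤ α if p ≤ p*, one has ‖P_{X|Y}^{⊗n}(f)‖_q ≤ exp(−n (Θ_{q'}(α) − α/p)) · ‖f‖_p. -/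
open MeasureTheory ProbabilityTheory Set Filter
open scoped ENNReal NNReal BigOperators Classical Topology

noncomputable section

namespace BL

variable {X : Type*} {Y : Type*} [MeasurableSpace X] [MeasurableSpace Y]

/-! ### Extended logarithm, exponential, and division conventions -/

/-- Extended logarithm `ℝ≥0∞ → EReal`, with `log 0 = ⊥` and `log ⊤ = ⊤`. -/
def elog (x : ℝ≥0∞) : EReal :=
  if x = 0 then ⊥ else if x = ⊤ then ⊤ else ((Real.log x.toReal : ℝ) : EReal)

/-- Extended exponential `EReal → ℝ≥0∞`, with `exp ⊥ = 0` and `exp ⊤ = ⊤`. -/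
def eexp (x : EReal) : ℝ≥0∞ :=
  if x = ⊥ then 0 else if x = ⊤ then ⊤ else ENNReal.ofReal (Real.exp x.toReal)

/-- Division of an extended real by a real, with the conventions `a/0 = +∞` for `a > 0`,
`a/0 = -∞` for `a < 0` and `0/0 = 0`. -/
def ediv (x : EReal) (c : ℝ) : EReal :=
  if c = 0 then (if 0 < x then ⊤ else if x < 0 then ⊥ else 0)
  else x * ((c⁻¹ : ℝ) : EReal)

/-- Division of a real by an extended real, with the convention `t/(±∞) = 0`. -/
def divE (t : ℝ) (r : EReal) : EReal :=
  if r = ⊤ ∨ r = ⊥ then 0 else ((t / r.toReal : ℝ) : EReal)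

/-- Hölder conjugate, as an extended real (`conj 1 = ⊤`). -/
def conj (q : ℝ) : EReal := if q = 1 then ⊤ else ((q / (q - 1) : ℝ) : EReal)

/-! ### Norms with a real (possibly negative) exponent -/

/-- `p`-"norm" of an `ℝ≥0∞`-valued function (`p` a nonzero real). -/
def enorm (P : Measure X) (F : X → ℝ≥0∞) (p : ℝ) : ℝ≥0∞ :=
  (∫⁻ x, F x ^ p ∂P) ^ (1 / p)

/-- `∞`-norm (essential supremum) of an `ℝ≥0∞`-valued function. -/
def enormInf (P : Measure X) (F : X → ℝ≥0∞) : ℝ≥0∞ := essSup F P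

/-- `p`-"norm" of a nonnegative real-valued function. -/
def rnorm (P : Measure X) (f : X → ℝ) (p : ℝ) : ℝ≥0∞ :=
  enorm P (fun x => ENNReal.ofReal (f x)) p

/-- `∞`-norm of a nonnegative real-valued function. -/
def rnormInf (P : Measure X) (f : X → ℝ) : ℝ≥0∞ :=
  enormInf P (fun x => ENNReal.ofReal (f x))

/-! ### Divergences -/

/-- Kullback--Leibler divergence, valued in `EReal` (equal to `⊤` when undefined). -/
def KL (Q P : Measure X) : EReal :=
  if Q ≪ P ∧ Integrable (fun x => Real.log (Q.rnDeriv P x).toReal) Q then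
    ((∫ x, Real.log (Q.rnDeriv P x).toReal ∂Q : ℝ) : EReal)
  else ⊤

/-- Rényi divergence of order `s` (`s = 1` gives the KL divergence). -/
def Renyi (s : ℝ) (Q P : Measure X) : EReal :=
  if s = 1 then KL Q P
  else (((s - 1)⁻¹ : ℝ) : EReal) *
    elog (∫⁻ x, Q.rnDeriv (Q + P) x ^ s * P.rnDeriv (Q + P) x ^ (1 - s) ∂(Q + P))

/-- First marginal of a measure on a product space. -/
def m1 (P : Measure (X × Y)) : Measure X := P.map Prod.fst

/-- Second marginal of a measure on a product space. -/
def m2 (P : Measure (X × Y)) : Measure Y := P.map Prod.snd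

/-- Couplings of a pair of (probability) measures. -/
def couplings (μ : Measure X) (ν : Measure Y) : Set (Measure (X × Y)) :=
  {π | IsProbabilityMeasure π ∧ π.map Prod.fst = μ ∧ π.map Prod.snd = ν}

/-- `𝔻(QX, QY ‖ P)` : minimum relative entropy over couplings. -/
def Dmin (QX : Measure X) (QY : Measure Y) (P : Measure (X × Y)) : EReal :=
  ⨅ (π : Measure (X × Y)) (_ : π ∈ couplings QX QY), KL π P

/-! ### The functions φ and their envelopes -/

/-- `φ̲(s,t)`. -/
def phiL (P : Measure (X × Y)) (s t : ℝ) : EReal :=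
  ⨅ (QX : Measure X) (QY : Measure Y) (_ : IsProbabilityMeasure QX)
    (_ : IsProbabilityMeasure QY) (_ : QX ≪ m1 P) (_ : QY ≪ m2 P)
    (_ : KL QX (m1 P) = (s : EReal)) (_ : KL QY (m2 P) = (t : EReal)),
    Dmin QX QY P

/-- `φ̄(s,t)`. -/
def phiU (P : Measure (X × Y)) (s t : ℝ) : EReal :=
  ⨆ (QX : Measure X) (QY : Measure Y) (_ : IsProbabilityMeasure QX)
    (_ : IsProbabilityMeasure QY) (_ : QX ≪ m1 P) (_ : QY ≪ m2 P)
    (_ : KL QX (m1 P) = (s : EReal)) (_ : KL QY (m2 P) = (t : EReal)),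
    Dmin QX QY P

/-- Lower convex envelope on `[0,∞)²`, via convex combinations of (at most) 4 points
(Carathéodory). -/
def lce2 (F : ℝ → ℝ → EReal) (a b : ℝ) : EReal :=
  ⨅ (q : Fin 4 → ℝ) (x : Fin 4 → ℝ × ℝ) (_ : ∀ i, 0 ≤ q i) (_ : ∑ i, q i = 1)
    (_ : ∀ i, 0 ≤ (x i).1 ∧ 0 ≤ (x i).2)
    (_ : ∑ i, q i * (x i).1 = a) (_ : ∑ i, q i * (x i).2 = b),
    ∑ i, (q i : EReal) * F (x i).1 (x i).2

/-- Upper concave envelope on `[0,∞)²`. -/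
def uce2 (F : ℝ → ℝ → EReal) (a b : ℝ) : EReal :=
  ⨆ (q : Fin 4 → ℝ) (x : Fin 4 → ℝ × ℝ) (_ : ∀ i, 0 ≤ q i) (_ : ∑ i, q i = 1)
    (_ : ∀ i, 0 ≤ (x i).1 ∧ 0 ≤ (x i).2)
    (_ : ∑ i, q i * (x i).1 = a) (_ : ∑ i, q i * (x i).2 = b),
    ∑ i, (q i : EReal) * F (x i).1 (x i).2

/-- Lower convex envelope on `[0,∞)`. -/
def lce1 (F : ℝ → EReal) (a : ℝ) : EReal :=
  ⨅ (q : Fin 3 → ℝ) (x : Fin 3 → ℝ) (_ : ∀ i, 0 ≤ q i) (_ : ∑ i, q i = 1)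
    (_ : ∀ i, 0 ≤ x i) (_ : ∑ i, q i * x i = a),
    ∑ i, (q i : EReal) * F (x i)

/-- Upper concave envelope on `[0,∞)`. -/
def uce1 (F : ℝ → EReal) (a : ℝ) : EReal :=
  ⨆ (q : Fin 3 → ℝ) (x : Fin 3 → ℝ) (_ : ∀ i, 0 ≤ q i) (_ : ∑ i, q i = 1)
    (_ : ∀ i, 0 ≤ x i) (_ : ∑ i, q i * x i = a),
    ∑ i, (q i : EReal) * F (x i)

/-- `Θ̲(α,β)`: increasing lower convex envelope of `φ̲`. -/
def ThetaL (P : Measure (X × Y)) (α β : ℝ) : EReal :=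
  ⨅ (s : ℝ) (t : ℝ) (_ : α ≤ s) (_ : β ≤ t), lce2 (phiL P) s t

/-- `Θ̄(α,β)`: increasing upper concave envelope of `φ̄`. -/
def ThetaU (P : Measure (X × Y)) (α β : ℝ) : EReal :=
  ⨆ (s : ℝ) (t : ℝ) (_ : 0 ≤ s) (_ : s ≤ α) (_ : 0 ≤ t) (_ : t ≤ β), uce2 (phiU P) s t

/-- `φ_r(s) = inf_{t ≥ 0} (φ̲(s,t) - t/r)` for `r ∈ [1,∞]` (`r` an extended real). -/
def phiRinf (P : Measure (X × Y)) (r : EReal) (s : ℝ) : EReal :=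
  ⨅ (t : ℝ) (_ : 0 ≤ t), phiL P s t - divE t r

/-- `Θ_r(α)` for `r ∈ [1,∞]`. -/
def ThetaGe1 (P : Measure (X × Y)) (r : EReal) (α : ℝ) : EReal :=
  ⨅ (s : ℝ) (_ : α ≤ s), lce1 (phiRinf P r) s

/-- `φ_r(s) = sup_{t ≥ 0} (φ̄(s,t) - t/r)` for `r ∈ (0,1)`. -/
def phiSupR (P : Measure (X × Y)) (r : ℝ) (s : ℝ) : EReal :=
  ⨆ (t : ℝ) (_ : 0 ≤ t), phiU P s t - divE t (r : EReal)

/-- `φ_r(s)` for `r < 0`. -/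
def phiNeg (P : Measure (X × Y)) (r : ℝ) (s : ℝ) : EReal :=
  ⨆ (QX : Measure X) (_ : IsProbabilityMeasure QX) (_ : QX ≪ m1 P)
    (_ : KL QX (m1 P) = (s : EReal)),
    ⨅ (QY : Measure Y) (_ : IsProbabilityMeasure QY) (_ : QY ≪ m2 P),
      Dmin QX QY P - ediv (KL QY (m2 P)) r

/-- `φ_r(s)` for `r < 1`, `r ≠ 0`. -/
def phiLT1 (P : Measure (X × Y)) (r : ℝ) (s : ℝ) : EReal :=
  if 0 < r then phiSupR P r s else phiNeg P r s

/-- `Θ_r(α)` for `r < 1`, `r ≠ 0`. -/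
def ThetaLT1 (P : Measure (X × Y)) (r : ℝ) (α : ℝ) : EReal :=
  ⨆ (s : ℝ) (_ : 0 ≤ s) (_ : s ≤ α), uce1 (phiLT1 P r) s

/-- `α_max = sup {-log μ(A) : μ(A) > 0}`. -/
def alphaMax (μ : Measure X) : EReal :=
  ⨆ (A : Set X) (_ : MeasurableSet A) (_ : μ A ≠ 0), -elog (μ A)

/-! ### Entropies -/

/-- `Ent_{p,p}(f)`. -/
def entPP (P : Measure X) (f : X → ℝ) (p : ℝ) : EReal :=
  (((∫ x, f x ^ p * Real.log (f x ^ p) ∂P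
      - (∫ x, f x ^ p ∂P) * Real.log (∫ x, f x ^ p ∂P))
     / (∫ x, f x ^ p ∂P) : ℝ) : EReal)

/-- `Ent_{p,p̂}(f)` for a nonzero real `p` and a real `p̂`. -/
def ent (P : Measure X) (f : X → ℝ) (p phat : ℝ) : EReal :=
  if phat = p then entPP P f p
  else if phat = 0 then -elog (P {x | 0 < f x})
  else ((p * phat / (p - phat) : ℝ) : EReal) * (elog (rnorm P f p) - elog (rnorm P f phat))

/-- `Ent_{p,∞}(f)` for a nonzero real `p`. -/
def entTop (P : Measure X) (f : X → ℝ) (p : ℝ) : EReal :=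
  if rnormInf P f = ⊤ then (if 0 < p then ⊤ else ⊥)
  else ((-p : ℝ) : EReal) * (elog (rnorm P f p) - elog (rnormInf P f))

/-- `Ent_{p,p*}(f)` for a nonzero real `p` and `p* ∈ [0,∞]`. -/
def entE (P : Measure X) (f : X → ℝ) (p : ℝ) (ps : ℝ≥0∞) : EReal :=
  if ps = ⊤ then entTop P f p else ent P f p ps.toReal

/-- Admissible functions: measurable, nonnegative, not a.e. zero. -/
def Adm (P : Measure X) (f : X → ℝ) : Prop :=
  Measurable f ∧ (∀ x, 0 ≤ f x) ∧ ¬ f =ᵐ[P] (fun _ => 0)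

/-! ### Products -/

/-- `n`-fold product measure. -/
def piM (n : ℕ) (P : Measure X) : Measure (Fin n → X) := Measure.pi fun _ => P

def fstv {n : ℕ} (z : Fin n → X × Y) : Fin n → X := fun i => (z i).1
def sndv {n : ℕ} (z : Fin n → X × Y) : Fin n → Y := fun i => (z i).2

/-- `⟨f,g⟩ = ∫ f(xⁿ) g(yⁿ) dP^{⊗n}`. -/
def innerFG (P : Measure (X × Y)) (n : ℕ) (f : (Fin n → X) → ℝ) (g : (Fin n → Y) → ℝ) :
    ℝ≥0∞ :=
  ∫⁻ z, ENNReal.ofReal (f (fstv z)) * ENNReal.ofReal (g (sndv z)) ∂(piM n P)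

/-- The set `A × B` viewed inside `(X × Y)ⁿ`. -/
def prodSet {n : ℕ} (A : Set (Fin n → X)) (B : Set (Fin n → Y)) : Set (Fin n → X × Y) :=
  {z | fstv z ∈ A ∧ sndv z ∈ B}

/-! ### Kernels -/

/-- Product of kernel measures `⊗ᵢ κ(yᵢ)`. -/
def kpi {n : ℕ} (κ : Kernel Y X) (y : Fin n → Y) : Measure (Fin n → X) :=
  Measure.pi fun i => κ (y i)

/-- The conditional expectation operator `P_{X|Y}^{⊗n}(f)`. -/
def condOp {n : ℕ} (κ : Kernel Y X) (f : (Fin n → X) → ℝ) : (Fin n → Y) → ℝ≥0∞ :=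
  fun y => ∫⁻ x, ENNReal.ofReal (f x) ∂(kpi κ y)

/-- `κ` is a regular conditional probability of the first coordinate given the second. -/
def IsCondKernel (P : Measure (X × Y)) (κ : Kernel Y X) : Prop :=
  ∀ (A : Set X) (B : Set Y), MeasurableSet A → MeasurableSet B →
    P (A ×ˢ B) = ∫⁻ y in B, κ y A ∂(m2 P)

/-! ### η and `Λ̲*` -/

/-- The function `η_{p,p̂}(α,s)`. -/
def eta (p phat α : ℝ) (s : EReal) : EReal :=
  if 0 ≤ p ∧ 0 ≤ phat then max (ediv ((α : EReal) - s) p) (ediv ((α : EReal) - s) phat)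
  else if 0 < p ∧ phat < 0 then ediv ((α : EReal) - s) p
  else if 0 < phat ∧ p < 0 then ediv ((α : EReal) - s) phat
  else ⊥

/-- `Λ̲*_{p,q,p̂,q̂}(α,β)` (time sharing variable of size ≤ 4). -/
def LamLstar (P : Measure (X × Y)) (p q phat qhat α β : ℝ) : EReal :=
  ⨅ (w : Fin 4 → ℝ) (QX : Fin 4 → Measure X) (QY : Fin 4 → Measure Y)
    (_ : ∀ i, 0 ≤ w i) (_ : ∑ i, w i = 1)
    (_ : ∀ i, IsProbabilityMeasure (QX i)) (_ : ∀ i, QX i ≪ m1 P)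
    (_ : ∀ i, IsProbabilityMeasure (QY i)) (_ : ∀ i, QY i ≪ m2 P),
    (∑ i, (w i : EReal) * Dmin (QX i) (QY i) P)
      + eta p phat α (∑ i, (w i : EReal) * KL (QX i) (m1 P))
      + eta q qhat β (∑ i, (w i : EReal) * KL (QY i) (m2 P))

/-! ### Sub/supergradients (slopes in `[0,∞]`) -/

def IsSubgrad2 (F : ℝ → ℝ → EReal) (α β : ℝ) (u v : ℝ≥0∞) : Prop :=
  ∀ s t : ℝ, 0 ≤ s → 0 ≤ t →
    F α β + (u : EReal) * ((s - α : ℝ) : EReal) + (v : EReal) * ((t - β : ℝ) : EReal) ≤ F s t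

def IsSupergrad2 (F : ℝ → ℝ → EReal) (α β : ℝ) (u v : ℝ≥0∞) : Prop :=
  ∀ s t : ℝ, 0 ≤ s → 0 ≤ t →
    F s t ≤ F α β + (u : EReal) * ((s - α : ℝ) : EReal) + (v : EReal) * ((t - β : ℝ) : EReal)

def IsSubgrad1 (F : ℝ → EReal) (α : ℝ) (u : ℝ≥0∞) : Prop :=
  ∀ s : ℝ, 0 ≤ s → F α + (u : EReal) * ((s - α : ℝ) : EReal) ≤ F s

def IsSupergrad1 (F : ℝ → EReal) (α : ℝ) (u : ℝ≥0∞) : Prop :=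
  ∀ s : ℝ, 0 ≤ s → F s ≤ F α + (u : EReal) * ((s - α : ℝ) : EReal)


lemma kl_fin {Ω : Type*} [MeasurableSpace Ω] (ρ μ : Measure Ω) [IsProbabilityMeasure ρ]
    [IsProbabilityMeasure μ] (K : ℝ) (hK : ρ ≤ ENNReal.ofReal K • μ) :
    ρ ≪ μ ∧ Integrable (fun x => Real.log (ρ.rnDeriv μ x).toReal) ρ := by
  have hac : ρ ≪ μ := Measure.absolutelyContinuous_of_le_smul hK
  refine ⟨hac, ?_⟩
  have hle : ρ.rnDeriv μ ≤ᵐ[μ] fun _ => ENNReal.ofReal K := by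
    apply ae_le_of_forall_setLIntegral_le_of_sigmaFinite (Measure.measurable_rnDeriv _ _)
    intro s hs _
    refine (Measure.setLIntegral_rnDeriv_le s).trans ?_
    simpa using hK s
  have h2 : Integrable (fun a => (ρ.rnDeriv μ a).toReal * Real.log (ρ.rnDeriv μ a).toReal) μ := by
    obtain ⟨B, hB⟩ := (isCompact_Icc (a := (0:ℝ)) (b := max K 0)).exists_bound_of_continuousOn
      Real.continuous_mul_log.continuousOn
    refine Integrable.of_bound ?_ B ?_
    · have := (Measure.measurable_rnDeriv ρ μ)
      fun_prop
    · filter_upwards [hle] with x hx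
      apply hB
      refine ⟨ENNReal.toReal_nonneg, ?_⟩
      have := ENNReal.toReal_mono ENNReal.ofReal_ne_top hx
      simpa [ENNReal.toReal_ofReal'] using this
  exact (integrable_rnDeriv_mul_log_iff hac).1 h2

lemma KL_eq {Ω : Type*} [MeasurableSpace Ω] {ρ μ : Measure Ω}
    (h : ρ ≪ μ ∧ Integrable (fun x => Real.log (ρ.rnDeriv μ x).toReal) ρ) :
    KL ρ μ = ((∫ x, Real.log (ρ.rnDeriv μ x).toReal ∂ρ : ℝ) : EReal) := by
  unfold KL; rw [if_pos h]

lemma gibbs {Ω : Type*} [MeasurableSpace Ω] (ρ μ : Measure Ω) [IsProbabilityMeasure ρ]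
    [IsProbabilityMeasure μ] (hac : ρ ≪ μ)
    (hintg : Integrable (fun x => Real.log (ρ.rnDeriv μ x).toReal) ρ)
    (f : Ω → ℝ) (hfm : Measurable f) (hf0 : ∀ x, 0 ≤ f x) (hfpos : ∀ᵐ x ∂ρ, 0 < f x)
    (hfi : Integrable f μ) (hfl : Integrable (fun x => Real.log (f x)) ρ) :
    0 < ∫ x, f x ∂μ ∧ ∫ x, Real.log (f x) ∂ρ ≤ ∫ x, Real.log (ρ.rnDeriv μ x).toReal ∂ρ
      + Real.log (∫ x, f x ∂μ) := by
  have hM : 0 < ∫ x, f x ∂μ := by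
    rw [integral_pos_iff_support_of_nonneg hf0 hfi]
    by_contra hcon
    have h0 : μ (Function.support f) = 0 := by simpa using hcon
    have h1 := hac h0
    have h2 : ∀ᵐ x ∂ρ, x ∉ Function.support f := measure_eq_zero_iff_ae_notMem.1 h1
    have h3 : ∀ᵐ x ∂ρ, False := by
      filter_upwards [h2, hfpos] with x hx hx'
      simp at hx; linarith
    have := ae_iff.1 h3
    simp at this
  refine ⟨hM, ?_⟩
  set M := ∫ x, f x ∂μ with hMdef
  set r := ρ.rnDeriv μ with hr
  have hrm : Measurable r := Measure.measurable_rnDeriv _ _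
  have hl : ∫⁻ x, ENNReal.ofReal (f x / ((r x).toReal * M)) ∂ρ ≤ 1 := by
    rw [← lintegral_rnDeriv_mul hac (by fun_prop)]
    calc ∫⁻ x, r x * ENNReal.ofReal (f x / ((r x).toReal * M)) ∂μ
        ≤ ∫⁻ x, ENNReal.ofReal (f x / M) ∂μ := by
          apply lintegral_mono_ae
          filter_upwards [Measure.rnDeriv_ne_top ρ μ] with x hx
          have hx' : r x = ENNReal.ofReal (r x).toReal := (ENNReal.ofReal_toReal hx).symm
          rw [hx', ENNReal.toReal_ofReal ENNReal.toReal_nonneg]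
          rw [← ENNReal.ofReal_mul ENNReal.toReal_nonneg]
          apply ENNReal.ofReal_le_ofReal
          rcases eq_or_ne (r x).toReal 0 with h | h
          · rw [h]; simp; exact div_nonneg (hf0 x) hM.le
          · apply le_of_eq; field_simp
      _ = ENNReal.ofReal (∫ x, f x / M ∂μ) := by
          rw [ofReal_integral_eq_lintegral_ofReal (hfi.div_const _)]
          exact Eventually.of_forall fun x => div_nonneg (hf0 x) hM.le
      _ = 1 := by
          rw [integral_div, div_self hM.ne']; simp
  have hnn : ∀ x, 0 ≤ f x / ((r x).toReal * M) := fun x =>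
    div_nonneg (hf0 x) (mul_nonneg ENNReal.toReal_nonneg hM.le)
  have hqm : Measurable (fun x => f x / ((r x).toReal * M)) := by fun_prop
  have hi2 : Integrable (fun x => f x / ((r x).toReal * M)) ρ := by
    refine ⟨hqm.aestronglyMeasurable, ?_⟩
    rw [hasFiniteIntegral_iff_ofReal (Eventually.of_forall hnn)]
    exact hl.trans_lt (by simp)
  have hI : ∫ x, f x / ((r x).toReal * M) ∂ρ ≤ 1 := by
    rw [integral_eq_lintegral_of_nonneg_ae (Eventually.of_forall hnn) hqm.aestronglyMeasurable]
    exact ENNReal.toReal_le_of_le_ofReal zero_le_one (by simpa using hl)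
  have hmono : ∫ x, (Real.log (f x) - Real.log (r x).toReal - Real.log M) ∂ρ
      ≤ ∫ x, (f x / ((r x).toReal * M) - 1) ∂ρ := by
    apply integral_mono_ae ((hfl.sub hintg).sub (integrable_const _)) (hi2.sub (integrable_const _))
    filter_upwards [hfpos, Measure.rnDeriv_pos hac, hac.ae_le (Measure.rnDeriv_ne_top ρ μ)]
      with x hx hx1 hx2
    have hrp : 0 < (r x).toReal := ENNReal.toReal_pos hx1.ne' hx2
    have := Real.log_le_sub_one_of_pos (x := f x / ((r x).toReal * M)) (by positivity)
    rw [Real.log_div hx.ne' (by positivity), Real.log_mul hrp.ne' hM.ne'] at this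
    simp only [Pi.sub_apply]
    linarith
  have e1 : ∫ x, (Real.log (f x) - Real.log (r x).toReal - Real.log M) ∂ρ
      = ∫ x, (Real.log (f x) - Real.log (r x).toReal) ∂ρ - ∫ x, Real.log M ∂ρ :=
    integral_sub (hfl.sub hintg) (integrable_const _)
  rw [e1, integral_sub hfl hintg, integral_sub hi2 (integrable_const _)] at hmono
  simp at hmono
  linarith

lemma lce1_le (F : ℝ → EReal) (a : ℝ) (ha : 0 ≤ a) : lce1 F a ≤ F a := by
  unfold lce1
  refine iInf_le_of_le (fun i => if i = 0 then 1 else 0) ?_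
  refine iInf_le_of_le (fun _ => a) ?_
  refine iInf_le_of_le (fun i => by dsimp only; split_ifs <;> norm_num) ?_
  refine iInf_le_of_le (by simp) ?_
  refine iInf_le_of_le (fun _ => ha) ?_
  refine iInf_le_of_le (by simp) ?_
  simp [Fin.sum_univ_three]

lemma divE_conj (q t : ℝ) (hq : 1 ≤ q) : divE t (conj q) = (((1 - 1 / q) * t : ℝ) : EReal) := by
  unfold divE conj
  by_cases h : q = 1
  · subst h; simp
  · have : q - 1 ≠ 0 := sub_ne_zero.2 h
    have h0 : q ≠ 0 := by linarith
    rw [if_neg h, if_neg (by simp)]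
    congr 1
    rw [EReal.toReal_coe]
    field_simp

lemma marg_le {A B : Type*} [MeasurableSpace A] [MeasurableSpace B] {π P : Measure A} {K : ℝ≥0∞}
    (h : π ≤ K • P) {φ : A → B} (hφ : Measurable φ) : π.map φ ≤ K • P.map φ := by
  rw [← Measure.map_smul]
  exact Measure.map_mono h hφ

/-- log-density integral -/
def DD {Ω : Type*} [MeasurableSpace Ω] (ρ μ : Measure Ω) : ℝ :=
  ∫ x, Real.log (ρ.rnDeriv μ x).toReal ∂ρ

lemma DD_nonneg {Ω : Type*} [MeasurableSpace Ω] (ρ μ : Measure Ω) [IsProbabilityMeasure ρ]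
    [IsProbabilityMeasure μ] (h : ρ ≪ μ ∧ Integrable (fun x => Real.log (ρ.rnDeriv μ x).toReal) ρ) :
    0 ≤ DD ρ μ := by
  have := (gibbs ρ μ h.1 h.2 (fun _ => 1) measurable_const (by simp) (by simp) (by simp)
    (by simp)).2
  simpa [DD] using this

lemma theta_le (P : Measure (X × Y)) [IsProbabilityMeasure P] (q : ℝ) (hq : 1 ≤ q)
    (π : Measure (X × Y)) [IsProbabilityMeasure π] (K : ℝ) (hK : π ≤ ENNReal.ofReal K • P)
    (α' : ℝ) (hα' : α' ≤ DD (m1 π) (m1 P)) :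
    ThetaGe1 P (conj q) α' ≤
      ((DD π P - (1 - 1 / q) * DD (m2 π) (m2 P) : ℝ) : EReal) := by
  have hp1 : IsProbabilityMeasure (m1 P) := Measure.isProbabilityMeasure_map (by fun_prop)
  have hp2 : IsProbabilityMeasure (m2 P) := Measure.isProbabilityMeasure_map (by fun_prop)
  have hq1 : IsProbabilityMeasure (m1 π) := Measure.isProbabilityMeasure_map (by fun_prop)
  have hq2 : IsProbabilityMeasure (m2 π) := Measure.isProbabilityMeasure_map (by fun_prop)
  have k := kl_fin π P K hK
  have k1 := kl_fin (m1 π) (m1 P) K (marg_le hK measurable_fst)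
  have k2 := kl_fin (m2 π) (m2 P) K (marg_le hK measurable_snd)
  have n1 := DD_nonneg _ _ k1
  have n2 := DD_nonneg _ _ k2
  unfold ThetaGe1
  refine (iInf₂_le (DD (m1 π) (m1 P)) hα').trans ?_
  refine (lce1_le _ _ n1).trans ?_
  unfold phiRinf
  refine (iInf₂_le (DD (m2 π) (m2 P)) n2).trans ?_
  rw [divE_conj _ _ hq, EReal.coe_sub]
  refine EReal.sub_le_sub ?_ le_rfl
  unfold phiL
  refine iInf_le_of_le (m1 π) <| iInf_le_of_le (m2 π) <| iInf_le_of_le hq1 <| iInf_le_of_le hq2 <|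
    iInf_le_of_le k1.1 <| iInf_le_of_le k2.1 <| iInf_le_of_le (KL_eq k1) <|
    iInf_le_of_le (KL_eq k2) ?_
  unfold Dmin
  refine (iInf₂_le π ⟨inferInstance, rfl, rfl⟩).trans ?_
  rw [KL_eq k]; rfl

lemma log_bd {N x : ℝ} (hN : 1 ≤ N) (h : x = 0 ∨ (1 / N ≤ x ∧ x ≤ N)) :
    ‖Real.log x‖ ≤ Real.log N := by
  have hN0 : 0 < N := by linarith
  rcases h with h | ⟨h1, h2⟩
  · simp [h, Real.log_nonneg hN]
  · have hx : 0 < x := lt_of_lt_of_le (by positivity) h1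
    rw [Real.norm_eq_abs, abs_le]
    constructor
    · have := Real.log_le_log (by positivity) h1
      rw [Real.log_div one_ne_zero hN0.ne', Real.log_one] at this
      linarith
    · exact Real.log_le_log hx h2

lemma bd_nonneg {N x : ℝ} (hN : 1 ≤ N) (h : x = 0 ∨ (1 / N ≤ x ∧ x ≤ N)) : 0 ≤ x ∧ x ≤ N := by
  have hN0 : 0 < N := by linarith
  rcases h with h | ⟨h1, h2⟩
  · subst h; exact ⟨le_rfl, hN0.le⟩
  · exact ⟨le_trans (by positivity) h1, h2⟩

lemma SLb (P : Measure (X × Y)) [IsProbabilityMeasure P] (a θ L : ℝ) (ha : 0 < a) (hθ : 0 ≤ θ)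
    (c : ℝ≥0∞)
    (hD : ∀ π : Measure (X × Y), IsProbabilityMeasure π → ∀ K : ℝ, π ≤ ENNReal.ofReal K • P →
      (∃ A, MeasurableSet A ∧ m1 P A ≤ c ∧ m1 π Aᶜ = 0) →
      a * DD (m1 π) (m1 P) + θ * DD (m2 π) (m2 P) - DD π P ≤ L)
    (f : X → ℝ) (g : Y → ℝ) (hfm : Measurable f) (hgm : Measurable g) (N : ℝ) (hN : 1 ≤ N)
    (hf : ∀ x, f x = 0 ∨ (1 / N ≤ f x ∧ f x ≤ N)) (hg : ∀ y, g y = 0 ∨ (1 / N ≤ g y ∧ g y ≤ N))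
    (hg0 : θ = 0 → ∀ y, g y ≠ 0) (hsupp : m1 P {x | f x ≠ 0} ≤ c) :
    ∫ z, f z.1 ^ a * g z.2 ^ θ ∂P ≤
      Real.exp L * (∫ x, f x ∂(m1 P)) ^ a * (∫ y, g y ∂(m2 P)) ^ θ := by
  have hp1 : IsProbabilityMeasure (m1 P) := Measure.isProbabilityMeasure_map (by fun_prop)
  have hp2 : IsProbabilityMeasure (m2 P) := Measure.isProbabilityMeasure_map (by fun_prop)
  have hf0 : ∀ x, 0 ≤ f x := fun x => (bd_nonneg hN (hf x)).1
  have hg00 : ∀ x, 0 ≤ g x := fun x => (bd_nonneg hN (hg x)).1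
  have hN0 : 0 < N := by linarith
  set h : X × Y → ℝ := fun z => f z.1 ^ a * g z.2 ^ θ with hh
  have hhm : Measurable h := by fun_prop
  have hh0 : ∀ z, 0 ≤ h z := fun z =>
    mul_nonneg (Real.rpow_nonneg (hf0 _) _) (Real.rpow_nonneg (hg00 _) _)
  have hhB : ∀ z, h z ≤ N ^ a * N ^ θ := fun z =>
    mul_le_mul (Real.rpow_le_rpow (hf0 _) (bd_nonneg hN (hf _)).2 ha.le)
      (Real.rpow_le_rpow (hg00 _) (bd_nonneg hN (hg _)).2 hθ) (Real.rpow_nonneg (hg00 _) _)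
      (by positivity)
  have hhi : Integrable h P := Integrable.of_bound hhm.aestronglyMeasurable (N ^ a * N ^ θ)
    (Eventually.of_forall fun z => by rw [Real.norm_eq_abs, abs_of_nonneg (hh0 z)]; exact hhB z)
  have hR : 0 ≤ Real.exp L * (∫ x, f x ∂(m1 P)) ^ a * (∫ y, g y ∂(m2 P)) ^ θ := by
    have h1 := integral_nonneg (μ := m1 P) (f := f) (fun x => hf0 x)
    have h2 := integral_nonneg (μ := m2 P) (f := g) (fun x => hg00 x)
    have := Real.rpow_nonneg h1 a
    have := Real.rpow_nonneg h2 θ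
    positivity
  by_cases hZ : ∫ z, h z ∂P ≤ 0
  · exact hZ.trans hR
  push Not at hZ
  set Z := ∫ z, h z ∂P with hZdef
  set π := P.withDensity (fun z => ENNReal.ofReal (h z / Z)) with hπ
  have hdm : Measurable (fun z => ENNReal.ofReal (h z / Z)) := by fun_prop
  have hπp : IsProbabilityMeasure π := by
    constructor
    rw [hπ, withDensity_apply _ MeasurableSet.univ, Measure.restrict_univ,
      ← ofReal_integral_eq_lintegral_ofReal (hhi.div_const _)
        (Eventually.of_forall fun z => div_nonneg (hh0 z) hZ.le), integral_div, ← hZdef,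
      div_self hZ.ne', ENNReal.ofReal_one]
  have hπK : π ≤ ENNReal.ofReal (N ^ a * N ^ θ / Z) • P := by
    rw [← withDensity_const]
    apply withDensity_mono
    refine Eventually.of_forall fun z => ENNReal.ofReal_le_ofReal ?_
    exact div_le_div_of_nonneg_right (hhB z) hZ.le
  have hpos : ∀ᵐ z ∂π, 0 < h z := by
    rw [hπ, ae_withDensity_iff hdm]
    refine Eventually.of_forall fun z hz => ?_
    rcases (hh0 z).eq_or_lt with h1 | h1
    · exact absurd (by simp [← h1]) hz
    · exact h1
  have hfgpos : ∀ᵐ z ∂π, 0 < f z.1 ∧ 0 < g z.2 := by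
    filter_upwards [hpos] with z hz
    have h1 : f z.1 ≠ 0 := by
      intro h0
      simp only [hh, h0, Real.zero_rpow ha.ne', zero_mul, lt_irrefl] at hz
    have h2 : g z.2 ≠ 0 := by
      intro h0
      by_cases ht : θ = 0
      · exact hg0 ht _ h0
      · simp only [hh, h0, Real.zero_rpow ht, mul_zero, lt_irrefl] at hz
    exact ⟨lt_of_le_of_ne (hf0 _) h1.symm, lt_of_le_of_ne (hg00 _) h2.symm⟩
  have hq1 : IsProbabilityMeasure (m1 π) := Measure.isProbabilityMeasure_map (by fun_prop)
  have hq2 : IsProbabilityMeasure (m2 π) := Measure.isProbabilityMeasure_map (by fun_prop)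
  have k := kl_fin π P _ hπK
  have k1 := kl_fin (m1 π) (m1 P) _ (marg_le hπK measurable_fst)
  have k2 := kl_fin (m2 π) (m2 P) _ (marg_le hπK measurable_snd)
  have hlf : Measurable fun x => Real.log (f x) := by fun_prop
  have hlg : Measurable fun x => Real.log (g x) := by fun_prop
  have pf : ∀ᵐ x ∂(m1 π), 0 < f x := by
    rw [m1, ae_map_iff (by fun_prop) (measurableSet_lt measurable_const hfm)]
    exact hfgpos.mono fun z hz => hz.1
  have pg : ∀ᵐ x ∂(m2 π), 0 < g x := by
    rw [m2, ae_map_iff (by fun_prop) (measurableSet_lt measurable_const hgm)]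
    exact hfgpos.mono fun z hz => hz.2
  have if1 : Integrable f (m1 P) := Integrable.of_bound hfm.aestronglyMeasurable N
    (Eventually.of_forall fun z => by
      rw [Real.norm_eq_abs, abs_of_nonneg (hf0 z)]; exact (bd_nonneg hN (hf z)).2)
  have ig1 : Integrable g (m2 P) := Integrable.of_bound hgm.aestronglyMeasurable N
    (Eventually.of_forall fun z => by
      rw [Real.norm_eq_abs, abs_of_nonneg (hg00 z)]; exact (bd_nonneg hN (hg z)).2)
  obtain ⟨Mf, G1⟩ := gibbs (m1 π) (m1 P) k1.1 k1.2 f hfm hf0 pf if1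
    (Integrable.of_bound hlf.aestronglyMeasurable (Real.log N)
      (Eventually.of_forall fun z => log_bd hN (hf z)))
  obtain ⟨Mg, G2⟩ := gibbs (m2 π) (m2 P) k2.1 k2.2 g hgm hg00 pg ig1
    (Integrable.of_bound hlg.aestronglyMeasurable (Real.log N)
      (Eventually.of_forall fun z => log_bd hN (hg z)))
  have e1 : ∫ x, Real.log (f x) ∂(m1 π) = ∫ z, Real.log (f z.1) ∂π :=
    integral_map (by fun_prop) hlf.aestronglyMeasurable
  have e2 : ∫ x, Real.log (g x) ∂(m2 π) = ∫ z, Real.log (g z.2) ∂π :=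
    integral_map (by fun_prop) hlg.aestronglyMeasurable
  have i1 : Integrable (fun z : X × Y => Real.log (f z.1)) π :=
    Integrable.of_bound (hlf.comp measurable_fst).aestronglyMeasurable (Real.log N)
      (Eventually.of_forall fun z => log_bd hN (hf z.1))
  have i2 : Integrable (fun z : X × Y => Real.log (g z.2)) π :=
    Integrable.of_bound (hlg.comp measurable_snd).aestronglyMeasurable (Real.log N)
      (Eventually.of_forall fun z => log_bd hN (hg z.2))
  have e3 : DD π P = a * ∫ z, Real.log (f z.1) ∂π + θ * ∫ z, Real.log (g z.2) ∂π - Real.log Z := by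
    have : DD π P = ∫ z, (a * Real.log (f z.1) + θ * Real.log (g z.2) - Real.log Z) ∂π := by
      unfold DD
      apply integral_congr_ae
      filter_upwards [k.1.ae_le (Measure.rnDeriv_withDensity P hdm), hfgpos, hpos] with z hz hz1 hz2
      rw [← hπ] at hz
      rw [hz, ENNReal.toReal_ofReal (div_nonneg hz2.le hZ.le), Real.log_div hz2.ne' hZ.ne']
      simp only [hh]
      rw [Real.log_mul (Real.rpow_pos_of_pos hz1.1 _).ne' (Real.rpow_pos_of_pos hz1.2 _).ne',
        Real.log_rpow hz1.1, Real.log_rpow hz1.2]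
    rw [this]
    have j1 := i1.const_mul a
    have j2 := i2.const_mul θ
    have : ∫ z, (a * Real.log (f z.1) + θ * Real.log (g z.2) - Real.log Z) ∂π
      = ∫ z, (a * Real.log (f z.1) + θ * Real.log (g z.2)) ∂π - ∫ z, Real.log Z ∂π :=
      integral_sub (j1.add j2) (integrable_const _)
    rw [this, integral_add j1 j2, integral_const_mul, integral_const_mul]
    simp
  have key := hD π hπp _ hπK ⟨{x | f x ≠ 0}, (measurableSet_eq_fun hfm measurable_const).compl,
    hsupp, by
      have : {x | f x ≠ 0}ᶜ = {x | ¬ (f x ≠ 0)} := rfl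
      rw [this, ← ae_iff]
      exact pf.mono fun x hx => hx.ne'⟩
  rw [e1] at G1
  rw [e2] at G2
  change _ ≤ DD (m1 π) (m1 P) + _ at G1
  change _ ≤ DD (m2 π) (m2 P) + _ at G2
  have fin : Real.log Z ≤ L + a * Real.log (∫ x, f x ∂(m1 P)) + θ * Real.log (∫ y, g y ∂(m2 P)) := by
    have := mul_le_mul_of_nonneg_left G1 ha.le
    have := mul_le_mul_of_nonneg_left G2 hθ
    linarith
  calc Z = Real.exp (Real.log Z) := (Real.exp_log hZ).symm
    _ ≤ _ := Real.exp_le_exp.2 fin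
    _ = _ := by
      rw [Real.exp_add, Real.exp_add, Real.rpow_def_of_pos Mf, Real.rpow_def_of_pos Mg]
      ring_nf

lemma SLe (P : Measure (X × Y)) [IsProbabilityMeasure P] (a θ L : ℝ) (ha : 0 < a) (hθ : 0 ≤ θ)
    (c : ℝ≥0∞)
    (hD : ∀ π : Measure (X × Y), IsProbabilityMeasure π → ∀ K : ℝ, π ≤ ENNReal.ofReal K • P →
      (∃ A, MeasurableSet A ∧ m1 P A ≤ c ∧ m1 π Aᶜ = 0) →
      a * DD (m1 π) (m1 P) + θ * DD (m2 π) (m2 P) - DD π P ≤ L)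
    (f : X → ℝ≥0∞) (g : Y → ℝ≥0∞) (hfm : Measurable f) (hgm : Measurable g) (N : ℝ) (hN : 1 ≤ N)
    (hf : ∀ x, f x = 0 ∨ (ENNReal.ofReal (1 / N) ≤ f x ∧ f x ≤ ENNReal.ofReal N))
    (hg : ∀ y, g y = 0 ∨ (ENNReal.ofReal (1 / N) ≤ g y ∧ g y ≤ ENNReal.ofReal N))
    (hg0 : θ = 0 → ∀ y, g y ≠ 0) (hsupp : m1 P {x | f x ≠ 0} ≤ c) :
    ∫⁻ z, f z.1 ^ a * g z.2 ^ θ ∂P ≤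
      ENNReal.ofReal (Real.exp L) * (∫⁻ x, f x ∂(m1 P)) ^ a * (∫⁻ y, g y ∂(m2 P)) ^ θ := by
  have hp1 : IsProbabilityMeasure (m1 P) := Measure.isProbabilityMeasure_map (by fun_prop)
  have hp2 : IsProbabilityMeasure (m2 P) := Measure.isProbabilityMeasure_map (by fun_prop)
  have hN0 : 0 < N := by linarith
  have aux : ∀ v : ℝ≥0∞, v = 0 ∨ (ENNReal.ofReal (1 / N) ≤ v ∧ v ≤ ENNReal.ofReal N) →
      v ≠ ⊤ ∧ (v.toReal = 0 ∨ (1 / N ≤ v.toReal ∧ v.toReal ≤ N)) := by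
    rintro v (h | ⟨h1, h2⟩)
    · simp [h]
    · have hv : v ≠ ⊤ := ne_top_of_le_ne_top ENNReal.ofReal_ne_top h2
      refine ⟨hv, Or.inr ⟨(ENNReal.ofReal_le_iff_le_toReal hv).1 h1, ?_⟩⟩
      exact ENNReal.toReal_le_of_le_ofReal hN0.le h2
  have hft : ∀ x, f x ≠ ⊤ := fun x => (aux _ (hf x)).1
  have hgt : ∀ x, g x ≠ ⊤ := fun x => (aux _ (hg x)).1
  have key := SLb P a θ L ha hθ c hD (fun x => (f x).toReal) (fun y => (g y).toReal)
    hfm.ennreal_toReal hgm.ennreal_toReal N hN (fun x => (aux _ (hf x)).2)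
    (fun x => (aux _ (hg x)).2)
    (fun h y => by simpa [ENNReal.toReal_eq_zero_iff, hgt y] using hg0 h y)
    (by simpa [ENNReal.toReal_eq_zero_iff, hft] using hsupp)
  have E1 : ∫⁻ x, f x ∂(m1 P) = ENNReal.ofReal (∫ x, (f x).toReal ∂(m1 P)) := by
    rw [integral_toReal hfm.aemeasurable (Eventually.of_forall fun x => (hft x).lt_top),
      ENNReal.ofReal_toReal]
    refine ne_top_of_le_ne_top (b := ENNReal.ofReal N) (by simp) ?_
    calc ∫⁻ x, f x ∂(m1 P) ≤ ∫⁻ x, ENNReal.ofReal N ∂(m1 P) := lintegral_mono fun x => by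
          rcases hf x with h | h
          · simp [h]
          · exact h.2
      _ = _ := by simp
  have E2 : ∫⁻ x, g x ∂(m2 P) = ENNReal.ofReal (∫ x, (g x).toReal ∂(m2 P)) := by
    rw [integral_toReal hgm.aemeasurable (Eventually.of_forall fun x => (hgt x).lt_top),
      ENNReal.ofReal_toReal]
    refine ne_top_of_le_ne_top (b := ENNReal.ofReal N) (by simp) ?_
    calc ∫⁻ x, g x ∂(m2 P) ≤ ∫⁻ x, ENNReal.ofReal N ∂(m2 P) := lintegral_mono fun x => by
          rcases hg x with h | h
          · simp [h]
          · exact h.2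
      _ = _ := by simp
  have hn1 : 0 ≤ ∫ x, (f x).toReal ∂(m1 P) := integral_nonneg fun x => ENNReal.toReal_nonneg
  have hn2 : 0 ≤ ∫ x, (g x).toReal ∂(m2 P) := integral_nonneg fun x => ENNReal.toReal_nonneg
  have bnd : ∀ z : X × Y, (f z.1).toReal ^ a * (g z.2).toReal ^ θ ≤ N ^ a * N ^ θ := fun z =>
    mul_le_mul (Real.rpow_le_rpow ENNReal.toReal_nonneg
        (bd_nonneg hN (aux _ (hf z.1)).2).2 ha.le)
      (Real.rpow_le_rpow ENNReal.toReal_nonneg (bd_nonneg hN (aux _ (hg _)).2).2 hθ)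
      (Real.rpow_nonneg ENNReal.toReal_nonneg _)
      (by positivity)
  have nn : ∀ z : X × Y, 0 ≤ (f z.1).toReal ^ a * (g z.2).toReal ^ θ := fun z => by positivity
  have E3 : ∫⁻ z, f z.1 ^ a * g z.2 ^ θ ∂P
      = ENNReal.ofReal (∫ z, (f z.1).toReal ^ a * (g z.2).toReal ^ θ ∂P) := by
    rw [ofReal_integral_eq_lintegral_ofReal _ (Eventually.of_forall nn)]
    · apply lintegral_congr
      intro z
      rw [ENNReal.ofReal_mul (by positivity),
        ← ENNReal.ofReal_rpow_of_nonneg ENNReal.toReal_nonneg ha.le,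
        ← ENNReal.ofReal_rpow_of_nonneg ENNReal.toReal_nonneg hθ,
        ENNReal.ofReal_toReal (hft _), ENNReal.ofReal_toReal (hgt _)]
    · refine Integrable.of_bound (Measurable.aestronglyMeasurable (by fun_prop)) (N ^ a * N ^ θ)
        (Eventually.of_forall fun z => by
          rw [Real.norm_eq_abs, abs_of_nonneg (nn z)]; exact bnd z)
  rw [E1, E2, E3, ENNReal.ofReal_rpow_of_nonneg hn1 ha.le, ENNReal.ofReal_rpow_of_nonneg hn2 hθ,
    ← ENNReal.ofReal_mul (by positivity), ← ENNReal.ofReal_mul (by positivity)]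
  exact ENNReal.ofReal_le_ofReal key

/-- two-sided truncation -/
def TT (k : ℕ) (v : ℝ≥0∞) : ℝ≥0∞ :=
  if v < ENNReal.ofReal (1 / ((k : ℝ) + 1)) then 0 else min v (ENNReal.ofReal ((k : ℝ) + 1))

lemma TT_meas (k : ℕ) : Measurable (TT k) := by
  unfold TT
  exact Measurable.ite measurableSet_Iio measurable_const (by fun_prop)

lemma TT_le (k : ℕ) (v : ℝ≥0∞) : TT k v ≤ v := by
  unfold TT; split_ifs <;> simp

lemma TT_cond (k : ℕ) (v : ℝ≥0∞) : TT k v = 0 ∨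
    (ENNReal.ofReal (1 / ((k : ℝ) + 1)) ≤ TT k v ∧ TT k v ≤ ENNReal.ofReal ((k : ℝ) + 1)) := by
  unfold TT; split_ifs with h
  · simp
  · right
    refine ⟨le_min (not_lt.1 h) (ENNReal.ofReal_le_ofReal ?_), min_le_right _ _⟩
    have : (0:ℝ) ≤ k := by positivity
    rw [div_le_iff₀ (by positivity)]; nlinarith

lemma TT_mono (v : ℝ≥0∞) : Monotone (fun k => TT k v) := by
  intro k l hkl
  have hkl' : (k:ℝ) ≤ l := by exact_mod_cast hkl
  simp only
  unfold TT
  split_ifs with h1 h2 h2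
  · simp
  · simp
  · exfalso; apply h1
    refine lt_of_lt_of_le h2 (ENNReal.ofReal_le_ofReal ?_)
    exact one_div_le_one_div_of_le (by positivity) (by linarith)
  · exact min_le_min le_rfl (ENNReal.ofReal_le_ofReal (by linarith))

lemma TT_tendsto (v : ℝ≥0∞) : Tendsto (fun k => TT k v) atTop (𝓝 v) := by
  have h1 : Tendsto (fun k : ℕ => ENNReal.ofReal ((k : ℝ) + 1)) atTop (𝓝 ⊤) :=
    ENNReal.tendsto_ofReal_nhds_top.2
      (tendsto_atTop_add_const_right _ _ tendsto_natCast_atTop_atTop)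
  have h2 : Tendsto (fun k : ℕ => ENNReal.ofReal (1 / ((k : ℝ) + 1))) atTop (𝓝 0) := by
    have := ENNReal.tendsto_ofReal (tendsto_one_div_add_atTop_nhds_zero_nat (𝕜 := ℝ))
    simpa using this
  rcases eq_or_ne v 0 with h | h
  · subst h
    refine tendsto_const_nhds.congr fun k => ?_
    unfold TT; simp
  · have h3 : Tendsto (fun k : ℕ => min v (ENNReal.ofReal ((k : ℝ) + 1))) atTop (𝓝 (min v ⊤)) :=
      tendsto_const_nhds.min h1
    rw [min_top_right] at h3
    refine h3.congr' ?_
    filter_upwards [h2.eventually (gt_mem_nhds (pos_iff_ne_zero.2 h))] with k hk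
    unfold TT
    rw [if_neg (not_lt.2 hk.le)]

lemma SL (P : Measure (X × Y)) [IsProbabilityMeasure P] (a θ L : ℝ) (ha : 0 < a) (hθ : 0 ≤ θ)
    (c : ℝ≥0∞)
    (hD : ∀ π : Measure (X × Y), IsProbabilityMeasure π → ∀ K : ℝ, π ≤ ENNReal.ofReal K • P →
      (∃ A, MeasurableSet A ∧ m1 P A ≤ c ∧ m1 π Aᶜ = 0) →
      a * DD (m1 π) (m1 P) + θ * DD (m2 π) (m2 P) - DD π P ≤ L)
    (f : X → ℝ≥0∞) (g : Y → ℝ≥0∞) (hfm : Measurable f) (hgm : Measurable g)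
    (hsupp : m1 P {x | f x ≠ 0} ≤ c) :
    ∫⁻ z, f z.1 ^ a * g z.2 ^ θ ∂P ≤
      ENNReal.ofReal (Real.exp L) * (∫⁻ x, f x ∂(m1 P)) ^ a * (∫⁻ y, g y ∂(m2 P)) ^ θ := by
  wlog hg0 : θ = 0 → g = fun _ => 1 generalizing g with hw
  · push Not at hg0
    have hp2 : IsProbabilityMeasure (m2 P) := Measure.isProbabilityMeasure_map (by fun_prop)
    have := hw (fun _ => 1) measurable_const (fun _ => rfl)
    simpa [hg0.1] using this
  have sup : ∀ z : X × Y, f z.1 ^ a * g z.2 ^ θ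
      = ⨆ k, (TT k (f z.1)) ^ a * (TT k (g z.2)) ^ θ := by
    intro z
    have m1 : Monotone fun k => (TT k (f z.1)) ^ a := fun k l h =>
      ENNReal.rpow_le_rpow (TT_mono _ h) ha.le
    have m2 : Monotone fun k => (TT k (g z.2)) ^ θ := fun k l h =>
      ENNReal.rpow_le_rpow (TT_mono _ h) hθ
    have s1 : ⨆ k, (TT k (f z.1)) ^ a = f z.1 ^ a :=
      tendsto_nhds_unique (tendsto_atTop_iSup m1)
        (((ENNReal.continuous_rpow_const).tendsto _).comp (TT_tendsto _))
    have s2 : ⨆ k, (TT k (g z.2)) ^ θ = g z.2 ^ θ :=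
      tendsto_nhds_unique (tendsto_atTop_iSup m2)
        (((ENNReal.continuous_rpow_const).tendsto _).comp (TT_tendsto _))
    rw [← s1, ← s2]
    refine le_antisymm ?_ (iSup_le fun k => mul_le_mul' (le_iSup (fun k => (TT k (f z.1)) ^ a) k)
      (le_iSup (fun k => (TT k (g z.2)) ^ θ) k))
    simp_rw [ENNReal.iSup_mul, ENNReal.mul_iSup]
    refine iSup_le fun i => iSup_le fun j => ?_
    exact le_iSup_of_le (max i j) (mul_le_mul' (m1 (le_max_left i j)) (m2 (le_max_right i j)))
  have hTf : ∀ k, Measurable fun x => TT k (f x) := fun k => (TT_meas k).comp hfm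
  have hTg : ∀ k, Measurable fun x => TT k (g x) := fun k => (TT_meas k).comp hgm
  simp_rw [sup]
  rw [lintegral_iSup]
  · refine iSup_le fun k => ?_
    refine (SLe P a θ L ha hθ c hD (fun x => TT k (f x)) (fun y => TT k (g y)) (hTf k) (hTg k)
      ((k:ℝ)+1) (by have : (0:ℝ) ≤ k := by positivity
                    linarith) (fun _ => TT_cond _ _) (fun _ => TT_cond _ _) ?_ ?_).trans ?_
    · intro h y
      rw [hg0 h]
      unfold TT
      have h0 : (0:ℝ) ≤ k := by positivity
      rw [if_neg]
      · simp
      · rw [not_lt, ENNReal.ofReal_le_one, div_le_iff₀ (by positivity)]; linarith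
    · refine (measure_mono fun x hx => ?_).trans hsupp
      intro h0
      apply hx
      have := TT_le k (f x)
      exact le_antisymm (this.trans h0.le) bot_le
    · gcongr <;> exact TT_le _ _
  · intro k
    have := hTf k
    have := hTg k
    exact (((hTf k).comp measurable_fst).pow_const _).mul
      (((hTg k).comp measurable_snd).pow_const _)
  · intro k l h z
    exact mul_le_mul' (ENNReal.rpow_le_rpow (TT_mono _ h) ha.le)
      (ENNReal.rpow_le_rpow (TT_mono _ h) hθ)

lemma meas_cons {n : ℕ} : Measurable fun z : X × (Fin n → X) => (Fin.cons z.1 z.2 : Fin (n+1) → X) := by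
  refine measurable_pi_iff.2 fun i => ?_
  refine Fin.cases ?_ (fun j => ?_) i
  · simpa using measurable_fst
  · simp only [Fin.cons_succ]; exact (measurable_pi_apply j).comp measurable_snd

lemma lint_cons {n : ℕ} (μs : Fin (n + 1) → Measure X) [∀ i, IsProbabilityMeasure (μs i)]
    (F : (Fin (n + 1) → X) → ℝ≥0∞) (hF : Measurable F) :
    ∫⁻ x, F x ∂(Measure.pi μs) =
      ∫⁻ x, ∫⁻ x', F (Fin.cons x x') ∂(Measure.pi fun i => μs i.succ) ∂(μs 0) := by
  have h := (measurePreserving_piFinSuccAbove μs 0).symm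
  rw [← h.lintegral_comp hF, lintegral_prod _ (by
    exact (hF.comp (MeasurableEquiv.measurable _)).aemeasurable)]
  simp [MeasurableEquiv.piFinSuccAbove, Fin.insertNthEquiv, Fin.zero_succAbove]

lemma kpi_meas {n : ℕ} (κ : Kernel Y X) [IsMarkovKernel κ] :
    Measurable (kpi κ : (Fin n → Y) → Measure (Fin n → X)) := by
  have : ∀ y : Fin n → Y, IsProbabilityMeasure (kpi κ y) := fun y => by
    unfold kpi; infer_instance
  refine Measurable.measure_of_isPiSystem_of_isProbabilityMeasure generateFrom_pi.symm
    isPiSystem_pi ?_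
  rintro _ ⟨s, hs, rfl⟩
  have : (fun y : Fin n → Y => kpi κ y (Set.univ.pi s)) = fun y => ∏ i, κ (y i) (s i) := by
    ext y; unfold kpi; rw [Measure.pi_pi]
  rw [this]
  refine Finset.measurable_prod _ fun i _ => ?_
  exact (κ.measurable_coe (hs i (Set.mem_univ i))).comp (measurable_pi_apply i)

/-- product kernel -/
def KP (n : ℕ) (κ : Kernel Y X) [IsMarkovKernel κ] : Kernel (Fin n → Y) (Fin n → X) :=
  ⟨kpi κ, kpi_meas κ⟩

instance KP_markov (n : ℕ) (κ : Kernel Y X) [IsMarkovKernel κ] : IsMarkovKernel (KP n κ) :=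
  ⟨fun y => by
    change IsProbabilityMeasure (kpi κ y)
    unfold kpi; infer_instance⟩

lemma piM_cons (μ : Measure X) [IsProbabilityMeasure μ] {n : ℕ} (S : Set (Fin (n+1) → X))
    (hS : MeasurableSet S) :
    Measurable (fun x => piM n μ {x' | (Fin.cons x x' : Fin (n+1) → X) ∈ S}) ∧
    piM (n+1) μ S = ∫⁻ x, piM n μ {x' | (Fin.cons x x' : Fin (n+1) → X) ∈ S} ∂μ := by
  have : IsProbabilityMeasure (piM n μ) := by unfold piM; infer_instance
  have hT : MeasurableSet {z : X × (Fin n → X) | (Fin.cons z.1 z.2 : Fin (n+1) → X) ∈ S} :=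
    meas_cons hS
  refine ⟨measurable_measure_prodMk_left hT, ?_⟩
  have := lint_cons (fun _ : Fin (n+1) => μ) (S.indicator 1) (measurable_one.indicator hS)
  rw [lintegral_indicator_one hS] at this
  unfold piM
  rw [this]
  apply lintegral_congr
  intro x
  have hTx : MeasurableSet {x' | (Fin.cons x x' : Fin (n+1) → X) ∈ S} :=
    measurable_prodMk_left hT
  rw [← lintegral_indicator_one hTx]
  rfl

lemma min_pi (μ : Measure X) [IsProbabilityMeasure μ] (c : ℝ≥0∞)
    (h : ∀ A, MeasurableSet A → μ A = 0 ∨ c ≤ μ A) (n : ℕ) :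
    ∀ A : Set (Fin n → X), MeasurableSet A → piM n μ A = 0 ∨ c ^ n ≤ piM n μ A := by
  induction n with
  | zero =>
    intro A hA
    rcases A.eq_empty_or_nonempty with h0 | h0
    · left; simp [h0]
    · right
      rw [Subsingleton.eq_univ_of_nonempty h0]
      unfold piM; simp
  | succ n ih =>
    intro A hA
    obtain ⟨hm, he⟩ := piM_cons μ A hA
    set m := fun x => piM n μ {x' | (Fin.cons x x' : Fin (n+1) → X) ∈ A} with hmdef
    have hmx : ∀ x, m x = 0 ∨ c ^ n ≤ m x := fun x =>
      ih _ ((meas_cons.comp measurable_prodMk_left) hA)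
    have hB : MeasurableSet {x | m x ≠ 0} := (hm (measurableSet_singleton 0)).compl
    rw [he]
    rcases h _ hB with h0 | h0
    · left
      rw [lintegral_eq_zero_iff hm]
      exact ae_iff.2 h0
    · right
      calc c ^ (n+1) = c ^ n * c := pow_succ _ _
        _ ≤ c ^ n * μ {x | m x ≠ 0} := by gcongr
        _ = ∫⁻ x, {x | m x ≠ 0}.indicator (fun _ => c ^ n) x ∂μ := by
          rw [lintegral_indicator_const hB]
        _ ≤ ∫⁻ x, m x ∂μ := by
          apply lintegral_mono
          intro x
          by_cases hx : m x = 0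
          · simp [hx]
          · simp only [Set.indicator, Set.mem_ofPred_eq, hx, not_false_eq_true, if_true, ne_eq]
            exact (hmx x).resolve_left hx

lemma supp_step (μ : Measure X) [IsProbabilityMeasure μ] (c : ℝ≥0∞) (hc0 : c ≠ 0) (hct : c ≠ ⊤)
    (h : c = 1 ∨ ∀ A, MeasurableSet A → μ A = 0 ∨ c ≤ μ A) (n : ℕ)
    (S : Set (Fin (n+1) → X)) (hS : MeasurableSet S) (hSc : piM (n+1) μ S ≤ c ^ (n+1)) :
    μ {x | piM n μ {x' | (Fin.cons x x' : Fin (n+1) → X) ∈ S} ≠ 0} ≤ c ∧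
    ∀ᵐ x ∂μ, piM n μ {x' | (Fin.cons x x' : Fin (n+1) → X) ∈ S} ≤ c ^ n := by
  have : IsProbabilityMeasure (piM n μ) := by unfold piM; infer_instance
  rcases h with h | h
  · subst h
    exact ⟨prob_le_one, Eventually.of_forall fun x => by rw [one_pow]; exact prob_le_one⟩
  obtain ⟨hm, he⟩ := piM_cons μ S hS
  set m := fun x => piM n μ {x' | (Fin.cons x x' : Fin (n+1) → X) ∈ S} with hmdef
  have hmx : ∀ x, m x = 0 ∨ c ^ n ≤ m x := fun x =>
    min_pi μ c h n _ ((meas_cons.comp measurable_prodMk_left) hS)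
  have hB : MeasurableSet {x | m x ≠ 0} := (hm (measurableSet_singleton 0)).compl
  have hle : ∀ x, {x | m x ≠ 0}.indicator (fun _ => c ^ n) x ≤ m x := by
    intro x
    by_cases hx : m x = 0
    · simp [hx]
    · simp only [Set.indicator, Set.mem_ofPred_eq, hx, not_false_eq_true, if_true, ne_eq]
      exact (hmx x).resolve_left hx
  have hI : ∫⁻ x, {x | m x ≠ 0}.indicator (fun _ => c ^ n) x ∂μ = c ^ n * μ {x | m x ≠ 0} := by
    rw [lintegral_indicator_const hB]
  rw [he] at hSc
  constructor
  · have h1 : c ^ n * μ {x | m x ≠ 0} ≤ c ^ n * c := by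
      rw [← hI, ← pow_succ]; exact (lintegral_mono hle).trans hSc
    exact (ENNReal.mul_le_mul_iff_right (pow_ne_zero n hc0) (ENNReal.pow_ne_top hct)).1 h1
  · change ∀ᵐ x ∂μ, m x ≤ c ^ n
    rcases h _ hB with h0 | h0
    · have : ∀ᵐ x ∂μ, m x = 0 := ae_iff.2 h0
      filter_upwards [this] with x hx
      rw [hx]; simp
    · have := ae_eq_of_ae_le_of_lintegral_le (Eventually.of_forall hle)
        (by rw [hI]; exact ENNReal.mul_ne_top (ENNReal.pow_ne_top hct) (measure_ne_top _ _))
        hm.aemeasurable (by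
          rw [hI]; refine hSc.trans ?_
          rw [pow_succ]; gcongr)
      filter_upwards [this] with x hx
      rw [← hx]
      exact Set.indicator_le_self' (by simp) x

lemma tensor (μ : Measure X) [IsProbabilityMeasure μ] (ν : Measure Y) [IsProbabilityMeasure ν]
    (κ : Kernel Y X) [IsMarkovKernel κ] (hμκ : ∀ A, MeasurableSet A → μ A = ∫⁻ y, κ y A ∂ν)
    (a θ : ℝ) (ha : 0 < a) (hθ : 0 ≤ θ) (C c : ℝ≥0∞) (hc0 : c ≠ 0) (hct : c ≠ ⊤)
    (h : c = 1 ∨ ∀ A, MeasurableSet A → μ A = 0 ∨ c ≤ μ A)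
    (H : ∀ (f : X → ℝ≥0∞) (g : Y → ℝ≥0∞), Measurable f → Measurable g → μ {x | f x ≠ 0} ≤ c →
      ∫⁻ y, (∫⁻ x, f x ^ a ∂(κ y)) * g y ^ θ ∂ν ≤ C * (∫⁻ x, f x ∂μ) ^ a * (∫⁻ y, g y ∂ν) ^ θ)
    (n : ℕ) :
    ∀ (f : (Fin n → X) → ℝ≥0∞) (g : (Fin n → Y) → ℝ≥0∞), Measurable f → Measurable g →
      piM n μ {x | f x ≠ 0} ≤ c ^ n →
      ∫⁻ y, (∫⁻ x, f x ^ a ∂(kpi κ y)) * g y ^ θ ∂(piM n ν)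
        ≤ C ^ n * (∫⁻ x, f x ∂(piM n μ)) ^ a * (∫⁻ y, g y ∂(piM n ν)) ^ θ := by
  induction n with
  | zero =>
    intro f g hf hg _
    have h1 : ∀ y : Fin 0 → Y, kpi κ y = Measure.dirac isEmptyElim :=
      fun y => Measure.pi_of_empty _ _
    simp_rw [h1]
    unfold piM
    rw [Measure.pi_of_empty, Measure.pi_of_empty]
    simp
  | succ n ih =>
    intro f g hf hg hs
    have : IsProbabilityMeasure (piM n μ) := by unfold piM; infer_instance
    have : IsProbabilityMeasure (piM n ν) := by unfold piM; infer_instance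
    have hfc : Measurable fun z : X × (Fin n → X) => f (Fin.cons z.1 z.2) := hf.comp meas_cons
    have hgc : Measurable fun z : Y × (Fin n → Y) => g (Fin.cons z.1 z.2) := hg.comp meas_cons
    have hSm : MeasurableSet {x | f x ≠ 0} := (hf (measurableSet_singleton 0)).compl
    obtain ⟨hB, hae⟩ := supp_step μ c hc0 hct h n _ hSm hs
    simp only [Set.mem_ofPred_eq] at hB hae
    obtain ⟨hmm, -⟩ := piM_cons μ _ hSm
    simp only [Set.mem_ofPred_eq] at hmm
    set F : X → ℝ≥0∞ := fun x => ∫⁻ x', f (Fin.cons x x') ∂(piM n μ) with hF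
    set G : Y → ℝ≥0∞ := fun y => ∫⁻ y', g (Fin.cons y y') ∂(piM n ν) with hG
    have hFm : Measurable F := hfc.lintegral_prod_right'
    have hGm : Measurable G := hgc.lintegral_prod_right'
    have hFs : μ {x | F x ≠ 0} ≤ c := by
      refine (measure_mono fun x hx => ?_).trans hB
      intro h0
      apply hx
      rw [hF]
      simp only
      have hm : Measurable fun x' => f (Fin.cons x x') := hfc.comp measurable_prodMk_left
      rw [lintegral_eq_zero_iff hm]
      exact ae_iff.2 h0
    have eF : ∫⁻ x, f x ∂(piM (n+1) μ) = ∫⁻ x, F x ∂μ := lint_cons (fun _ => μ) f hf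
    have eG : ∫⁻ x, g x ∂(piM (n+1) ν) = ∫⁻ x, G x ∂ν := lint_cons (fun _ => ν) g hg
    -- a.e. transfer
    have hbad : ∀ᵐ y ∂ν, ∀ᵐ x ∂(κ y),
        piM n μ {x' | f (Fin.cons x x' : Fin (n+1) → X) ≠ 0} ≤ c ^ n := by
      have hN : MeasurableSet
          {x | ¬ piM n μ {x' | f (Fin.cons x x' : Fin (n+1) → X) ≠ 0} ≤ c ^ n} :=
        (measurableSet_le hmm measurable_const).compl
      have h0 := ae_iff.1 hae
      rw [hμκ _ hN, lintegral_eq_zero_iff (κ.measurable_coe hN)] at h0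
      filter_upwards [h0] with y hy
      exact ae_iff.2 hy
    have hinner : Measurable fun z : X × (Fin n → Y) =>
        ∫⁻ x', f (Fin.cons z.1 x') ^ a ∂(kpi κ z.2) := by
      have : Measurable fun w : (X × (Fin n → Y)) × (Fin n → X) => f (Fin.cons w.1.1 w.2) ^ a :=
        (hfc.comp ((measurable_fst.comp measurable_fst).prodMk measurable_snd)).pow_const a
      exact Measurable.lintegral_kernel_prod_right' (κ := (KP n κ).comap Prod.snd measurable_snd) this
    have houter : Measurable fun y : Fin (n+1) → Y =>
        (∫⁻ x, f x ^ a ∂(kpi κ y)) * g y ^ θ := by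
      refine Measurable.mul ?_ (hg.pow_const _)
      exact Measurable.lintegral_kernel (κ := KP (n+1) κ) (hf.pow_const a)
    calc ∫⁻ y, (∫⁻ x, f x ^ a ∂(kpi κ y)) * g y ^ θ ∂(piM (n+1) ν)
        = ∫⁻ y, ∫⁻ y', (∫⁻ x, f x ^ a ∂(kpi κ (Fin.cons y y' : Fin (n+1) → Y)))
            * g (Fin.cons y y') ^ θ ∂(piM n ν) ∂ν := lint_cons (fun _ => ν) _ houter
      _ = ∫⁻ y, ∫⁻ y', ∫⁻ x, (∫⁻ x', f (Fin.cons x x') ^ a ∂(kpi κ y'))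
            * g (Fin.cons y y') ^ θ ∂(κ y) ∂(piM n ν) ∂ν := by
          refine lintegral_congr fun y => lintegral_congr fun y' => ?_
          have hm : Measurable fun x => ∫⁻ x', f (Fin.cons x x') ^ a ∂(kpi κ y') :=
            hinner.comp measurable_prodMk_right
          rw [lintegral_mul_const _ hm]
          congr 1
          have := lint_cons (fun i => κ ((Fin.cons y y' : Fin (n+1) → Y) i)) (fun x => f x ^ a)
            (hf.pow_const a)
          simpa [kpi] using this
      _ = ∫⁻ y, ∫⁻ x, ∫⁻ y', (∫⁻ x', f (Fin.cons x x') ^ a ∂(kpi κ y'))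
            * g (Fin.cons y y') ^ θ ∂(piM n ν) ∂(κ y) ∂ν := by
          refine lintegral_congr fun y => ?_
          rw [lintegral_lintegral_swap]
          refine Measurable.aemeasurable ?_
          refine Measurable.mul (hinner.comp measurable_swap) ?_
          exact ((hgc.comp measurable_prodMk_left).comp measurable_fst).pow_const θ
      _ ≤ ∫⁻ y, ∫⁻ x, C ^ n * (F x ^ a * G y ^ θ) ∂(κ y) ∂ν := by
          refine lintegral_mono_ae ?_
          filter_upwards [hbad] with y hy
          refine lintegral_mono_ae ?_
          filter_upwards [hy] with x hx
          rw [← mul_assoc]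
          exact ih (fun x' => f (Fin.cons x x')) (fun y' => g (Fin.cons y y'))
            (hfc.comp measurable_prodMk_left) (hgc.comp measurable_prodMk_left) hx
      _ = C ^ n * ∫⁻ y, (∫⁻ x, F x ^ a ∂(κ y)) * G y ^ θ ∂ν := by
          have hm : Measurable fun y => ∫⁻ x, F x ^ a ∂(κ y) :=
            Measurable.lintegral_kernel (hFm.pow_const a)
          have hm2 : Measurable fun y => (∫⁻ x, F x ^ a ∂(κ y)) * G y ^ θ :=
            hm.mul (hGm.pow_const _)
          rw [← lintegral_const_mul _ hm2]
          refine lintegral_congr fun y => ?_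
          rw [lintegral_const_mul _ ((hFm.pow_const a).mul_const _),
            lintegral_mul_const _ (hFm.pow_const a)]
      _ ≤ C ^ n * (C * (∫⁻ x, F x ∂μ) ^ a * (∫⁻ y, G y ∂ν) ^ θ) := by
          gcongr
          exact H F G hFm hGm hFs
      _ = _ := by rw [eF, eG, pow_succ]; ring

lemma lint_cond (P : Measure (X × Y)) [IsProbabilityMeasure P] (κ : Kernel Y X) [IsMarkovKernel κ]
    (hκ : IsCondKernel P κ) (F : X × Y → ℝ≥0∞) (hF : Measurable F) :
    ∫⁻ z, F z ∂P = ∫⁻ y, ∫⁻ x, F (x, y) ∂(κ y) ∂(m2 P) := by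
  have hp2 : IsProbabilityMeasure (m2 P) := Measure.isProbabilityMeasure_map (by fun_prop)
  have hP : P = ((m2 P) ⊗ₘ κ).map Prod.swap := by
    have : IsProbabilityMeasure (((m2 P) ⊗ₘ κ).map Prod.swap) :=
      Measure.isProbabilityMeasure_map (by fun_prop)
    refine Measure.ext_prod fun {A B} hA hB => ?_
    rw [hκ A B hA hB, Measure.map_apply measurable_swap (hA.prod hB), Set.preimage_swap_prod,
      Measure.compProd_apply_prod hB hA]
  conv_lhs => rw [hP]
  rw [lintegral_map hF measurable_swap]
  have hm : Measurable fun z : Y × X => F z.swap := hF.comp measurable_swap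
  rw [Measure.lintegral_compProd hm]
  rfl

lemma m1_cond (P : Measure (X × Y)) [IsProbabilityMeasure P] (κ : Kernel Y X) [IsMarkovKernel κ]
    (hκ : IsCondKernel P κ) (A : Set X) (hA : MeasurableSet A) :
    m1 P A = ∫⁻ y, κ y A ∂(m2 P) := by
  have := hκ A Set.univ hA MeasurableSet.univ
  rw [Measure.restrict_univ] at this
  rw [← this, m1, Measure.map_apply measurable_fst hA, Set.prod_univ]

lemma supp_DD {Ω : Type*} [MeasurableSpace Ω] (ρ μ : Measure Ω) [IsProbabilityMeasure ρ]
    [IsProbabilityMeasure μ] (h : ρ ≪ μ ∧ Integrable (fun x => Real.log (ρ.rnDeriv μ x).toReal) ρ)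
    (A : Set Ω) (hA : MeasurableSet A) (hρ : ρ Aᶜ = 0) :
    0 < (μ A).toReal ∧ -Real.log (μ A).toReal ≤ DD ρ μ := by
  have hae : ∀ᵐ x ∂ρ, x ∈ A := by
    rw [ae_iff]; exact hρ
  have h1 : ∀ᵐ x ∂ρ, A.indicator (fun _ => (1:ℝ)) x = 1 := by
    filter_upwards [hae] with x hx
    simp [hx]
  have hlog : (fun x => Real.log (A.indicator (fun _ => (1:ℝ)) x)) =ᵐ[ρ] fun _ => 0 := by
    filter_upwards [h1] with x hx
    rw [hx]; simp
  have := gibbs ρ μ h.1 h.2 (A.indicator fun _ => 1) (measurable_const.indicator hA)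
    (fun x => Set.indicator_nonneg (by simp) x) (by filter_upwards [h1] with x hx; rw [hx]; simp)
    ((integrable_const 1).indicator hA) ((integrable_congr hlog).2 (by simp))
  rw [integral_congr_ae hlog, integral_indicator_const _ hA] at this
  simp only [smul_eq_mul, mul_one, integral_zero, Measure.real] at this
  refine ⟨this.1, ?_⟩
  unfold DD
  linarith [this.2]

lemma theta_set (P : Measure (X × Y)) [IsProbabilityMeasure P] (q : ℝ) (hq : 1 ≤ q)
    (B : Set X) (hB : MeasurableSet B) (h0 : m1 P B ≠ 0) (s : ℝ)
    (hs : s ≤ -Real.log (m1 P B).toReal) : ThetaGe1 P (conj q) s ≠ ⊤ := by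
  have hp1 : IsProbabilityMeasure (m1 P) := Measure.isProbabilityMeasure_map (by fun_prop)
  set S : Set (X × Y) := Prod.fst ⁻¹' B with hS
  have hSm : MeasurableSet S := measurable_fst hB
  have hPS : m1 P B = P S := by rw [m1, Measure.map_apply measurable_fst hB]
  rw [hPS] at h0
  have : IsProbabilityMeasure (ProbabilityTheory.cond P S) := cond_isProbabilityMeasure h0
  have hq1 : IsProbabilityMeasure (m1 (ProbabilityTheory.cond P S)) :=
    Measure.isProbabilityMeasure_map (by fun_prop)
  have hK : ProbabilityTheory.cond P S ≤ ENNReal.ofReal ((P S)⁻¹.toReal) • P := by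
    rw [ENNReal.ofReal_toReal (ENNReal.inv_ne_top.2 h0), ProbabilityTheory.cond]
    refine Measure.le_intro fun A _ _ => ?_
    simp only [Measure.smul_apply, smul_eq_mul]
    gcongr
    exact Measure.restrict_le_self
  have k1 := kl_fin (m1 (ProbabilityTheory.cond P S)) (m1 P) _ (marg_le hK measurable_fst)
  have hc : m1 (ProbabilityTheory.cond P S) Bᶜ = 0 := by
    rw [m1, Measure.map_apply measurable_fst hB.compl, cond_apply hSm]
    rw [show S ∩ Prod.fst ⁻¹' Bᶜ = ∅ by ext z; simp [hS]]
    simp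
  have hd := (supp_DD _ _ k1 B hB hc).2
  have := theta_le P q hq _ _ hK s (hs.trans hd)
  exact ne_top_of_le_ne_top (EReal.coe_ne_top _) this

lemma dual {Ω : Type*} [MeasurableSpace Ω] (ν : Measure Ω) [IsProbabilityMeasure ν]
    (F : Ω → ℝ≥0∞) (hF : Measurable F) (q : ℝ) (hq : 1 ≤ q) (D : ℝ≥0∞)
    (h : ∀ g : Ω → ℝ≥0∞, Measurable g →
      ∫⁻ y, F y * g y ^ (1 - 1/q) ∂ν ≤ D * (∫⁻ y, g y ∂ν) ^ (1 - 1/q)) :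
    enorm ν F q ≤ D := by
  have hq0 : 0 < q := by linarith
  have key : ∀ N : ℕ, ∫⁻ y, (min (F y) N) ^ q ∂ν ≤ D ^ q := by
    intro N
    set Z := ∫⁻ y, (min (F y) N) ^ q ∂ν with hZ
    have hZt : Z ≠ ⊤ := by
      have : Z ≤ ∫⁻ y, (N : ℝ≥0∞) ^ q ∂ν := by
        refine lintegral_mono fun y => ?_
        exact ENNReal.rpow_le_rpow (min_le_right _ _) hq0.le
      refine ne_top_of_le_ne_top ?_ this
      simp only [lintegral_const, measure_univ, mul_one]
      exact ENNReal.rpow_ne_top_of_nonneg hq0.le (by simp)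
    have h1 := h (fun y => (min (F y) N) ^ q) ((hF.min measurable_const).pow_const q)
    have h2 : Z ≤ ∫⁻ y, F y * ((min (F y) N) ^ q) ^ (1 - 1/q) ∂ν := by
      refine lintegral_mono fun y => ?_
      rw [← ENNReal.rpow_mul]
      calc (min (F y) (N : ℝ≥0∞)) ^ q = (min (F y) (N : ℝ≥0∞)) ^ (1 + q * (1 - 1/q)) := by
            congr 1; field_simp; ring
        _ = min (F y) (N : ℝ≥0∞) * (min (F y) (N : ℝ≥0∞)) ^ (q * (1 - 1/q)) := by
            rw [ENNReal.rpow_add_of_nonneg _ _ zero_le_one, ENNReal.rpow_one]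
            have : q * (1 - 1/q) = q - 1 := by field_simp
            rw [this]; linarith
        _ ≤ _ := by gcongr; exact min_le_left _ _
    have h3 : Z ≤ D * Z ^ (1 - 1/q) := h2.trans h1
    by_cases hZ0 : Z = 0
    · rw [hZ0]; exact zero_le
    have h4 : Z ^ (1/q) ≤ D := by
      calc Z ^ (1/q) = Z * Z ^ (-(1 - 1/q)) := by
            conv_rhs => rw [← ENNReal.rpow_one Z]
            rw [← ENNReal.rpow_mul, one_mul, ← ENNReal.rpow_add _ _ hZ0 hZt]
            congr 1; ring
        _ ≤ D * Z ^ (1 - 1/q) * Z ^ (-(1 - 1/q)) := by gcongr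
        _ = D := by
            rw [mul_assoc, ← ENNReal.rpow_add _ _ hZ0 hZt]
            simp
    have := ENNReal.rpow_le_rpow h4 hq0.le
    rwa [← ENNReal.rpow_mul, one_div, inv_mul_cancel₀ hq0.ne', ENNReal.rpow_one] at this
  have hsup : ∀ y, F y ^ q = ⨆ N : ℕ, (min (F y) N) ^ q := by
    intro y
    have hmono : Monotone fun N : ℕ => (min (F y) (N : ℝ≥0∞)) ^ q := by
      intro i j hij
      refine ENNReal.rpow_le_rpow (min_le_min le_rfl ?_) hq0.le
      exact_mod_cast hij
    refine (iSup_eq_of_tendsto hmono ?_).symm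
    have : Tendsto (fun N : ℕ => min (F y) (N : ℝ≥0∞)) atTop (𝓝 (min (F y) ⊤)) :=
      tendsto_const_nhds.min ENNReal.tendsto_nat_nhds_top
    rw [min_top_right] at this
    exact (ENNReal.continuous_rpow_const.tendsto _).comp this
  have hle : ∫⁻ y, F y ^ q ∂ν ≤ D ^ q := by
    simp_rw [hsup]
    rw [lintegral_iSup (fun N => (hF.min measurable_const).pow_const q)]
    · exact iSup_le key
    · intro i j hij y
      refine ENNReal.rpow_le_rpow (min_le_min le_rfl ?_) hq0.le
      exact_mod_cast hij
  unfold enorm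
  have := ENNReal.rpow_le_rpow hle (by positivity : (0:ℝ) ≤ 1/q)
  rwa [← ENNReal.rpow_mul, mul_one_div, div_self hq0.ne', ENNReal.rpow_one] at this

lemma core (P : Measure (X × Y)) [IsProbabilityMeasure P] (κ : Kernel Y X) [IsMarkovKernel κ]
    (hκ : IsCondKernel P κ) (q : ℝ) (hq : 1 ≤ q) (r : ℝ) (hr : 0 < r) (L : ℝ)
    (c : ℝ≥0∞) (hc0 : c ≠ 0) (hct : c ≠ ⊤)
    (h : c = 1 ∨ ∀ A, MeasurableSet A → m1 P A = 0 ∨ c ≤ m1 P A)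
    (hD : ∀ π : Measure (X × Y), IsProbabilityMeasure π → ∀ K : ℝ, π ≤ ENNReal.ofReal K • P →
      (∃ A, MeasurableSet A ∧ m1 P A ≤ c ∧ m1 π Aᶜ = 0) →
      (1/r) * DD (m1 π) (m1 P) + (1 - 1/q) * DD (m2 π) (m2 P) - DD π P ≤ L)
    (n : ℕ) (f : (Fin n → X) → ℝ) (hf : Measurable f) (hf0 : ∀ x, 0 ≤ f x)
    (hs : piM n (m1 P) {x | 0 < f x} ≤ c ^ n) :
    enorm (piM n (m2 P)) (condOp κ f) q ≤
      ENNReal.ofReal (Real.exp L) ^ n * rnorm (piM n (m1 P)) f r := by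
  have hp1 : IsProbabilityMeasure (m1 P) := Measure.isProbabilityMeasure_map (by fun_prop)
  have hp2 : IsProbabilityMeasure (m2 P) := Measure.isProbabilityMeasure_map (by fun_prop)
  have : IsProbabilityMeasure (piM n (m2 P)) := by unfold piM; infer_instance
  have hθ : 0 ≤ 1 - 1/q := by
    have : 1/q ≤ 1 := (div_le_one (by linarith)).2 hq
    linarith
  have ha : 0 < 1/r := by positivity
  have hfe : Measurable fun x => ENNReal.ofReal (f x) := hf.ennreal_ofReal
  have H : ∀ (f : X → ℝ≥0∞) (g : Y → ℝ≥0∞), Measurable f → Measurable g →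
      m1 P {x | f x ≠ 0} ≤ c →
      ∫⁻ y, (∫⁻ x, f x ^ (1/r) ∂(κ y)) * g y ^ (1 - 1/q) ∂(m2 P) ≤
        ENNReal.ofReal (Real.exp L) * (∫⁻ x, f x ∂(m1 P)) ^ (1/r)
          * (∫⁻ y, g y ∂(m2 P)) ^ (1 - 1/q) := by
    intro f g hf hg hs
    have h1 := SL P (1/r) (1 - 1/q) L ha hθ c hD f g hf hg hs
    have hm : Measurable fun z : X × Y => f z.1 ^ (1/r) * g z.2 ^ (1 - 1/q) :=
      ((hf.comp measurable_fst).pow_const _).mul ((hg.comp measurable_snd).pow_const _)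
    rw [lint_cond P κ hκ _ hm] at h1
    refine le_trans (le_of_eq ?_) h1
    refine lintegral_congr fun y => ?_
    exact (lintegral_mul_const _ (hf.pow_const _)).symm
  have T := tensor (m1 P) (m2 P) κ (m1_cond P κ hκ) (1/r) (1 - 1/q) ha hθ _ c hc0 hct h H n
    (fun x => ENNReal.ofReal (f x) ^ r)
  have hFm : Measurable (condOp κ f) := Measurable.lintegral_kernel (κ := KP n κ) hfe
  refine dual _ _ hFm q hq _ fun g hg => ?_
  have hset : {x | ENNReal.ofReal (f x) ^ r ≠ 0} = {x | 0 < f x} := by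
    ext x
    simp [ENNReal.rpow_eq_zero_iff, hr, not_lt.2 hr.le]
  have := T g (hfe.pow_const r) hg (by rw [hset]; exact hs)
  have e : ∀ x, (ENNReal.ofReal (f x) ^ r) ^ (1/r) = ENNReal.ofReal (f x) := fun x => by
    rw [← ENNReal.rpow_mul, mul_one_div, div_self hr.ne', ENNReal.rpow_one]
  simp_rw [e] at this
  exact this

lemma pi_null (P : Measure (X × Y)) [IsProbabilityMeasure P] (κ : Kernel Y X) [IsMarkovKernel κ]
    (hκ : IsCondKernel P κ) (n : ℕ) (A : Set (Fin n → X)) (hA : MeasurableSet A)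
    (h0 : piM n (m1 P) A = 0) : ∀ᵐ y ∂(piM n (m2 P)), kpi κ y A = 0 := by
  have hp1 : IsProbabilityMeasure (m1 P) := Measure.isProbabilityMeasure_map (by fun_prop)
  have hp2 : IsProbabilityMeasure (m2 P) := Measure.isProbabilityMeasure_map (by fun_prop)
  have : IsProbabilityMeasure (piM n (m1 P)) := by unfold piM; infer_instance
  have H : ∀ (f : X → ℝ≥0∞) (g : Y → ℝ≥0∞), Measurable f → Measurable g →
      m1 P {x | f x ≠ 0} ≤ 1 →
      ∫⁻ y, (∫⁻ x, f x ^ (1:ℝ) ∂(κ y)) * g y ^ (0:ℝ) ∂(m2 P) ≤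
        1 * (∫⁻ x, f x ∂(m1 P)) ^ (1:ℝ) * (∫⁻ y, g y ∂(m2 P)) ^ (0:ℝ) := by
    intro f g hf hg _
    simp only [ENNReal.rpow_one, ENNReal.rpow_zero, mul_one, one_mul]
    have := lint_cond P κ hκ (fun z => f z.1) (hf.comp measurable_fst)
    simp only at this
    rw [← this, m1, lintegral_map hf measurable_fst]
  have T := tensor (m1 P) (m2 P) κ (m1_cond P κ hκ) 1 0 one_pos le_rfl 1 1 (by simp) (by simp)
    (Or.inl rfl) H n (A.indicator 1) (fun _ => 1) (measurable_one.indicator hA) measurable_const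
    (by rw [one_pow]; exact prob_le_one)
  simp only [ENNReal.rpow_one, ENNReal.rpow_zero, mul_one, one_mul, one_pow,
    lintegral_indicator_one hA, h0] at T
  have hm : Measurable fun y => kpi κ y A := (KP n κ).measurable_coe hA
  have := (lintegral_eq_zero_iff hm).1 (le_antisymm T (zero_le))
  filter_upwards [this] with y hy
  exact hy

lemma contr (P : Measure (X × Y)) [IsProbabilityMeasure P] (κ : Kernel Y X) [IsMarkovKernel κ]
    (hκ : IsCondKernel P κ) (q : ℝ) (hq : 1 ≤ q) (n : ℕ) (f : (Fin n → X) → ℝ)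
    (hf : Measurable f) :
    enorm (piM n (m2 P)) (condOp κ f) q ≤ rnormInf (piM n (m1 P)) f := by
  have hp2 : IsProbabilityMeasure (m2 P) := Measure.isProbabilityMeasure_map (by fun_prop)
  have : IsProbabilityMeasure (piM n (m2 P)) := by unfold piM; infer_instance
  have hq0 : 0 < q := by linarith
  set M := rnormInf (piM n (m1 P)) f with hM
  have hfe : Measurable fun x => ENNReal.ofReal (f x) := hf.ennreal_ofReal
  have hae : ∀ᵐ x ∂(piM n (m1 P)), ENNReal.ofReal (f x) ≤ M := ENNReal.ae_le_essSup _
  have hA : MeasurableSet {x | ¬ ENNReal.ofReal (f x) ≤ M} :=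
    (measurableSet_le hfe measurable_const).compl
  have h1 := pi_null P κ hκ n _ hA (ae_iff.1 hae)
  have h2 : ∀ᵐ y ∂(piM n (m2 P)), condOp κ f y ≤ M := by
    filter_upwards [h1] with y hy
    have : IsProbabilityMeasure (kpi κ y) := by unfold kpi; infer_instance
    calc condOp κ f y ≤ ∫⁻ _, M ∂(kpi κ y) := lintegral_mono_ae (ae_iff.2 hy)
      _ = M := by simp
  unfold enorm
  have h3 : ∫⁻ y, condOp κ f y ^ q ∂(piM n (m2 P)) ≤ M ^ q := by
    calc _ ≤ ∫⁻ _, M ^ q ∂(piM n (m2 P)) := by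
          refine lintegral_mono_ae ?_
          filter_upwards [h2] with y hy
          exact ENNReal.rpow_le_rpow hy hq0.le
      _ = M ^ q := by simp
  have := ENNReal.rpow_le_rpow h3 (by positivity : (0:ℝ) ≤ 1/q)
  rwa [← ENNReal.rpow_mul, mul_one_div, div_self hq0.ne', ENNReal.rpow_one] at this

lemma eexp_coe (x : ℝ) : eexp (x : EReal) = ENNReal.ofReal (Real.exp x) := by
  simp [eexp]

lemma elog_exp (x : ℝ) : elog (ENNReal.ofReal (Real.exp x)) = (x : EReal) := by
  have h1 : ENNReal.ofReal (Real.exp x) ≠ 0 := by simp [Real.exp_pos]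
  simp only [elog, h1, if_false, ENNReal.ofReal_ne_top]
  rw [ENNReal.toReal_ofReal (Real.exp_pos x).le, Real.log_exp]

lemma ex_exp (A : ℝ≥0∞) (h0 : A ≠ 0) (ht : A ≠ ⊤) : ∃ a : ℝ, A = ENNReal.ofReal (Real.exp a) :=
  ⟨Real.log A.toReal, by
    rw [Real.exp_log (ENNReal.toReal_pos h0 ht), ENNReal.ofReal_toReal ht]⟩

lemma rnorm_ne0 {Ω : Type*} [MeasurableSpace Ω] (μ : Measure Ω) (f : Ω → ℝ) (hf : Adm μ f)
    (p : ℝ) (hp : 0 < p) : rnorm μ f p ≠ 0 := by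
  intro h
  unfold rnorm enorm at h
  rw [ENNReal.rpow_eq_zero_iff] at h
  rcases h with h | h
  · rw [lintegral_eq_zero_iff (hf.1.ennreal_ofReal.pow_const p)] at h
    apply hf.2.2
    filter_upwards [h.1] with x hx
    simp only [Pi.zero_apply, ENNReal.rpow_eq_zero_iff, ENNReal.ofReal_eq_zero] at hx
    rcases hx with hx | hx
    · exact le_antisymm hx.1 (hf.2.1 x)
    · exact absurd hx.1 ENNReal.ofReal_ne_top
  · have := h.2
    have h3 : 0 < 1 / p := by positivity
    linarith

lemma rnormInf_ne0 {Ω : Type*} [MeasurableSpace Ω] (μ : Measure Ω) (f : Ω → ℝ) (hf : Adm μ f) :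
    rnormInf μ f ≠ 0 := by
  intro h
  unfold rnormInf enormInf at h
  apply hf.2.2
  have hae : ∀ᵐ x ∂μ, ENNReal.ofReal (f x) ≤ essSup (fun x => ENNReal.ofReal (f x)) μ :=
    ENNReal.ae_le_essSup _
  filter_upwards [hae] with x hx
  rw [h] at hx
  exact le_antisymm (ENNReal.ofReal_eq_zero.1 (le_antisymm hx zero_le)) (hf.2.1 x)

lemma DD_self {Ω : Type*} [MeasurableSpace Ω] (μ : Measure Ω) [IsProbabilityMeasure μ] :
    DD μ μ = 0 := by
  unfold DD
  rw [integral_congr_ae (g := fun _ => 0)]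
  · simp
  · filter_upwards [μ.rnDeriv_self] with x hx
    rw [hx]; simp

lemma theta_zero (P : Measure (X × Y)) [IsProbabilityMeasure P] (q : ℝ) (hq : 1 ≤ q) :
    ThetaGe1 P (conj q) 0 ≤ 0 := by
  have hp1 : IsProbabilityMeasure (m1 P) := Measure.isProbabilityMeasure_map (by fun_prop)
  have hp2 : IsProbabilityMeasure (m2 P) := Measure.isProbabilityMeasure_map (by fun_prop)
  have := theta_le P q hq P 1 (by simp) 0 (by rw [DD_self])
  simpa [DD_self] using this

lemma subgrad_real (Θ : ℝ → EReal) (α : ℝ) (u : ℝ≥0∞) (hu : u ≠ ⊤) (h : IsSubgrad1 Θ α u)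
    (s : ℝ) (hs : 0 ≤ s) : Θ α + ((u.toReal * (s - α) : ℝ) : EReal) ≤ Θ s := by
  have := h s hs
  rwa [← EReal.coe_ennreal_toReal hu, ← EReal.coe_mul] at this

lemma set_log (m : ℝ≥0∞) (h0 : m ≠ 0) (ht : m ≠ ⊤) (s : ℝ) :
    m ≤ ENNReal.ofReal (Real.exp (-s)) ↔ s ≤ -Real.log m.toReal := by
  obtain ⟨b, rfl⟩ := ex_exp m h0 ht
  rw [ENNReal.toReal_ofReal (Real.exp_pos b).le, Real.log_exp,
    ENNReal.ofReal_le_ofReal_iff (Real.exp_pos _).le, Real.exp_le_exp]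
  constructor <;> intro h <;> linarith

lemma supp_c {Ω : Type*} [MeasurableSpace Ω] (μ : Measure Ω) [IsProbabilityMeasure μ] (f : Ω → ℝ)
    (hf : Adm μ f) (n : ℕ) (α : ℝ)
    (h : (((n : ℝ) * α : ℝ) : EReal) ≤ -elog (μ {x | 0 < f x})) :
    μ {x | 0 < f x} ≠ 0 ∧ μ {x | 0 < f x} ≤ ENNReal.ofReal (Real.exp (-α)) ^ n := by
  have h0 : μ {x | 0 < f x} ≠ 0 := by
    intro h0
    apply hf.2.2
    have : ∀ᵐ x ∂μ, ¬ 0 < f x := by rw [ae_iff]; simpa using h0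
    filter_upwards [this] with x hx
    exact le_antisymm (not_lt.1 hx) (hf.2.1 x)
  refine ⟨h0, ?_⟩
  rw [← ENNReal.ofReal_pow (Real.exp_pos _).le, ← Real.exp_nat_mul,
    show (n : ℝ) * -α = -((n : ℝ) * α) by ring, set_log _ h0 (measure_ne_top _ _)]
  rw [elog, if_neg h0, if_neg (measure_ne_top _ _), ← EReal.coe_neg, EReal.coe_le_coe_iff] at h
  exact h

lemma theta_ne_top (P : Measure (X × Y)) [IsProbabilityMeasure P] (q : ℝ) (hq : 1 ≤ q) (α : ℝ)
    (n : ℕ) (hn : 1 ≤ n) (S : Set (Fin n → X)) (hS : MeasurableSet S)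
    (h0 : piM n (m1 P) S ≠ 0) (hc : piM n (m1 P) S ≤ ENNReal.ofReal (Real.exp (-α)) ^ n) :
    ThetaGe1 P (conj q) α ≠ ⊤ := by
  have hp1 : IsProbabilityMeasure (m1 P) := Measure.isProbabilityMeasure_map (by fun_prop)
  intro hT
  have hB : ∀ B, MeasurableSet B → m1 P B ≤ ENNReal.ofReal (Real.exp (-α)) → m1 P B = 0 := by
    intro B hB hle
    by_contra hne
    exact theta_set P q hq B hB hne α ((set_log _ hne (measure_ne_top _ _) α).1 hle) hT
  obtain ⟨m, rfl⟩ : ∃ m, n = m + 1 := ⟨n - 1, by omega⟩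
  have hs := (supp_step (m1 P) (ENNReal.ofReal (Real.exp (-α))) (by simp [Real.exp_pos]) (by simp)
    (Or.inr fun A hA => by
      rcases le_total (ENNReal.ofReal (Real.exp (-α))) (m1 P A) with h | h
      · exact Or.inr h
      · exact Or.inl (hB A hA h)) m S hS hc).1
  obtain ⟨hm, he⟩ := piM_cons (m1 P) S hS
  have hz := hB _ (hm (measurableSet_singleton 0)).compl hs
  apply h0
  rw [he, lintegral_eq_zero_iff hm]
  exact ae_iff.2 hz

lemma pow_exp (L : ℝ) (n : ℕ) :
    ENNReal.ofReal (Real.exp L) ^ n = ENNReal.ofReal (Real.exp (n * L)) := by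
  rw [← ENNReal.ofReal_pow (Real.exp_pos _).le, ← Real.exp_nat_mul]

lemma mul_exp (x y : ℝ) : ENNReal.ofReal (Real.exp x) * ENNReal.ofReal (Real.exp y)
    = ENNReal.ofReal (Real.exp (x + y)) := by
  rw [← ENNReal.ofReal_mul (Real.exp_pos _).le, ← Real.exp_add]

lemma case_zero (P : Measure (X × Y)) [IsProbabilityMeasure P] (κ : Kernel Y X) [IsMarkovKernel κ]
    (hκ : IsCondKernel P κ) (α : ℝ) (q : ℝ) (hq : 1 ≤ q)
    (hgrad : IsSubgrad1 (fun s => ThetaGe1 P (conj q) s) α ⊤) (T : ℝ)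
    (hT : ThetaGe1 P (conj q) α = (T : EReal)) (p : ℝ) (hp : 0 < p)
    (n : ℕ) (f : (Fin n → X) → ℝ) (hf : Adm (piM n (m1 P)) f)
    (hs : piM n (m1 P) {x | 0 < f x} ≤ ENNReal.ofReal (Real.exp (-α)) ^ n) :
    enorm (piM n (m2 P)) (condOp κ f) q ≤
      ENNReal.ofReal (Real.exp (-n * (T - α / p))) * rnorm (piM n (m1 P)) f p := by
  have hp1 : IsProbabilityMeasure (m1 P) := Measure.isProbabilityMeasure_map (by fun_prop)
  have hgt : ∀ s, 0 ≤ s → α < s → ThetaGe1 P (conj q) s = ⊤ := by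
    intro s h0 hs
    have := hgrad s h0
    simp only [hT, EReal.coe_ennreal_top] at this
    rw [EReal.top_mul_coe_of_pos (by linarith), EReal.coe_add_top] at this
    exact top_le_iff.1 this
  have := core P κ hκ q hq p hp (α / p - T) (ENNReal.ofReal (Real.exp (-α)))
    (by simp [Real.exp_pos]) (by simp)
    (Or.inr fun A hA => by
      by_contra hcon
      push Not at hcon
      obtain ⟨h0, hlt⟩ := hcon
      have hpos := ENNReal.toReal_pos h0 (measure_ne_top _ _)
      have hle1 : (m1 P A).toReal ≤ 1 := by
        have := ENNReal.toReal_mono ENNReal.one_ne_top (prob_le_one (μ := m1 P) (s := A))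
        simpa using this
      have hα : α < -Real.log (m1 P A).toReal := by
        have h1 := (ENNReal.lt_ofReal_iff_toReal_lt (measure_ne_top _ _)).1 hlt
        have := (Real.log_lt_iff_lt_exp hpos).2 h1
        linarith
      exact theta_set P q hq A hA h0 _ le_rfl
        (hgt _ (by have := Real.log_nonpos hpos.le hle1; linarith) hα))
    (by
      rintro π hπ K hK ⟨A, hA, hAc, hA0⟩
      have hq1 : IsProbabilityMeasure (m1 π) := Measure.isProbabilityMeasure_map (by fun_prop)
      have k1 := kl_fin (m1 π) (m1 P) K (marg_le hK measurable_fst)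
      obtain ⟨hpos, hle⟩ := supp_DD _ _ k1 A hA hA0
      have h0 : m1 P A ≠ 0 := fun h => by rw [h] at hpos; simp at hpos
      have hα := ((set_log _ h0 (measure_ne_top _ _) α).1 hAc).trans hle
      have hα2 : DD (m1 π) (m1 P) ≤ α := by
        by_contra hcon
        have h1 := hgt _ (DD_nonneg _ _ k1) (not_le.1 hcon)
        have h2 := theta_le P q hq π K hK _ le_rfl
        rw [h1] at h2
        exact EReal.coe_ne_top _ (top_le_iff.1 h2)
      have h3 := theta_le P q hq π K hK α hα
      rw [hT, EReal.coe_le_coe_iff] at h3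
      have : DD (m1 π) (m1 P) = α := le_antisymm hα2 hα
      rw [this, one_div, inv_mul_eq_div]
      linarith)
    n f hf.1 hf.2.1 hs
  rw [pow_exp] at this
  convert this using 4
  ring

lemma case_mid (P : Measure (X × Y)) [IsProbabilityMeasure P] (κ : Kernel Y X) [IsMarkovKernel κ]
    (hκ : IsCondKernel P κ) (α : ℝ) (q : ℝ) (hq : 1 ≤ q) (r : ℝ) (hr : 0 < r) (T : ℝ)
    (hgrad : ∀ s, 0 ≤ s → ((T + (1/r) * (s - α) : ℝ) : EReal) ≤ ThetaGe1 P (conj q) s)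
    (n : ℕ) (f : (Fin n → X) → ℝ) (hf : Adm (piM n (m1 P)) f) :
    enorm (piM n (m2 P)) (condOp κ f) q ≤
      ENNReal.ofReal (Real.exp (-n * (T - α / r))) * rnorm (piM n (m1 P)) f r := by
  have hp1 : IsProbabilityMeasure (m1 P) := Measure.isProbabilityMeasure_map (by fun_prop)
  have : IsProbabilityMeasure (piM n (m1 P)) := by unfold piM; infer_instance
  have := core P κ hκ q hq r hr (α / r - T) 1 (by simp) (by simp) (Or.inl rfl)
    (by
      rintro π hπ K hK -
      have hq1 : IsProbabilityMeasure (m1 π) := Measure.isProbabilityMeasure_map (by fun_prop)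
      have k1 := kl_fin (m1 π) (m1 P) K (marg_le hK measurable_fst)
      have h1 := (hgrad _ (DD_nonneg _ _ k1)).trans (theta_le P q hq π K hK _ le_rfl)
      rw [EReal.coe_le_coe_iff] at h1
      have : (1/r) * (DD (m1 π) (m1 P) - α) = (1/r) * DD (m1 π) (m1 P) - α / r := by ring
      linarith)
    n f hf.1 hf.2.1 (by rw [one_pow]; exact prob_le_one)
  rw [pow_exp] at this
  convert this using 4
  ring

lemma conv_mid {Ω : Type*} [MeasurableSpace Ω] (μ : Measure Ω) (f : Ω → ℝ) (hf : Adm μ f)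
    (p r α T : ℝ) (hp : 0 < p) (hr : 0 < r) (n : ℕ)
    (h1 : r ≤ p → (((n : ℝ) * α : ℝ) : EReal) ≤ ent μ f p r)
    (h2 : p ≤ r → ent μ f p r ≤ (((n : ℝ) * α : ℝ) : EReal)) :
    ENNReal.ofReal (Real.exp (-n * (T - α / r))) * rnorm μ f r ≤
      ENNReal.ofReal (Real.exp (-n * (T - α / p))) * rnorm μ f p := by
  by_cases hpr : r = p
  · subst hpr; exact le_rfl
  have hent : ent μ f p r
      = ((p * r / (p - r) : ℝ) : EReal) * (elog (rnorm μ f p) - elog (rnorm μ f r)) := by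
    rw [ent, if_neg hpr, if_neg hr.ne']
  rw [hent] at h1 h2
  have hA0 := rnorm_ne0 μ f hf p hp
  have hB0 := rnorm_ne0 μ f hf r hr
  by_cases hAt : rnorm μ f p = ⊤
  · rw [hAt, ENNReal.mul_top (by simp [Real.exp_pos])]
    exact le_top
  obtain ⟨a, ha⟩ := ex_exp _ hA0 hAt
  by_cases hBt : rnorm μ f r = ⊤
  · exfalso
    rw [ha, elog_exp, hBt, show elog ⊤ = ⊤ by simp [elog], EReal.sub_top] at h1 h2
    rcases lt_or_gt_of_ne hpr with h | h
    · have hc : 0 < p * r / (p - r) := div_pos (by positivity) (by linarith)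
      have := h1 h.le
      rw [EReal.coe_mul_bot_of_pos hc] at this
      exact EReal.coe_ne_bot _ (le_bot_iff.1 this)
    · have hc : p * r / (p - r) < 0 := div_neg_of_pos_of_neg (by positivity) (by linarith)
      have := h2 h.le
      rw [EReal.coe_mul_bot_of_neg hc] at this
      exact EReal.coe_ne_top _ (top_le_iff.1 this)
  obtain ⟨b, hb⟩ := ex_exp _ hB0 hBt
  rw [ha, hb] at h1 h2 ⊢
  rw [elog_exp, elog_exp, ← EReal.coe_sub, ← EReal.coe_mul, EReal.coe_le_coe_iff] at h1 h2
  rw [mul_exp, mul_exp]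
  refine ENNReal.ofReal_le_ofReal (Real.exp_le_exp.2 ?_)
  have key : n * α * (1/r - 1/p) ≤ a - b := by
    rcases lt_or_gt_of_ne hpr with h | h
    · have hc : 0 < p - r := by linarith
      have := h1 h.le
      calc n * α * (1/r - 1/p) = n * α * ((p - r) / (p * r)) := by field_simp
        _ ≤ p * r / (p - r) * (a - b) * ((p - r) / (p * r)) := by gcongr
        _ = a - b := by field_simp
    · have hc : 0 < r - p := by linarith
      have hc' : p - r ≠ 0 := by linarith
      have := h2 h.le
      have h3 : n * α * ((p - r) / (p * r)) ≤ p * r / (p - r) * (a - b) * ((p - r) / (p * r)) :=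
        mul_le_mul_of_nonpos_right this
          (div_nonpos_of_nonpos_of_nonneg (by linarith) (by positivity))
      calc n * α * (1/r - 1/p) = n * α * ((p - r) / (p * r)) := by field_simp
        _ ≤ _ := h3
        _ = a - b := by field_simp
  have e : n * α * (1/r - 1/p) = n * (α/r) - n * (α/p) := by ring
  linarith

lemma conv_top {Ω : Type*} [MeasurableSpace Ω] (μ : Measure Ω) (f : Ω → ℝ) (hf : Adm μ f)
    (p α T : ℝ) (hp : 0 < p) (hT : T ≤ 0) (n : ℕ)
    (h2 : entTop μ f p ≤ (((n : ℝ) * α : ℝ) : EReal)) :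
    rnormInf μ f ≤ ENNReal.ofReal (Real.exp (-n * (T - α / p))) * rnorm μ f p := by
  have hA0 := rnorm_ne0 μ f hf p hp
  have hB0 := rnormInf_ne0 μ f hf
  by_cases hAt : rnorm μ f p = ⊤
  · rw [hAt, ENNReal.mul_top (by simp [Real.exp_pos])]
    exact le_top
  by_cases hBt : rnormInf μ f = ⊤
  · rw [entTop, if_pos hBt, if_pos hp] at h2
    exact absurd (top_le_iff.1 h2) (EReal.coe_ne_top _)
  rw [entTop, if_neg hBt] at h2
  obtain ⟨a, ha⟩ := ex_exp _ hA0 hAt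
  obtain ⟨b, hb⟩ := ex_exp _ hB0 hBt
  rw [ha, hb] at h2 ⊢
  rw [elog_exp, elog_exp, ← EReal.coe_sub, ← EReal.coe_mul, EReal.coe_le_coe_iff] at h2
  rw [mul_exp]
  refine ENNReal.ofReal_le_ofReal (Real.exp_le_exp.2 ?_)
  have h3 : b - a ≤ n * α / p := by
    rw [le_div_iff₀ hp]; linarith
  have h4 : n * T ≤ 0 := mul_nonpos_of_nonneg_of_nonpos (by positivity) hT
  have e : n * α / p = n * (α/p) := by ring
  linarith

/-- Strong forward Brascamp–Lieb inequality, single-function version;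
Theorem `thm:strongBL_single`, part 1. -/
theorem statement6 [TopologicalSpace X] [PolishSpace X] [BorelSpace X]
    [TopologicalSpace Y] [PolishSpace Y] [BorelSpace Y]
    (P : Measure (X × Y)) [IsProbabilityMeasure P]
    (hndX : ∀ x : X, m1 P ≠ Measure.dirac x) (hndY : ∀ y : Y, m2 P ≠ Measure.dirac y)
    (κ : Kernel Y X) [IsMarkovKernel κ] (hκ : IsCondKernel P κ)
    (α : ℝ) (hα0 : 0 ≤ α) (hαmax : (α : EReal) ≤ alphaMax (m1 P))
    (q : ℝ) (hq : 1 ≤ q)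
    (ps : ℝ≥0∞) (hgrad : IsSubgrad1 (fun s => ThetaGe1 P (conj q) s) α ps⁻¹)
    (p : ℝ) (hp : 0 < p)
    (n : ℕ) (hn : 1 ≤ n)
    (f : (Fin n → X) → ℝ) (hf : Adm (piM n (m1 P)) f)
    (hf1 : ps ≤ ENNReal.ofReal p →
      (((n : ℝ) * α : ℝ) : EReal) ≤ entE (piM n (m1 P)) f p ps)
    (hf2 : ENNReal.ofReal p ≤ ps →
      entE (piM n (m1 P)) f p ps ≤ (((n : ℝ) * α : ℝ) : EReal)) :
    enorm (piM n (m2 P)) (condOp κ f) q ≤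
      eexp (((-(n : ℝ) : ℝ) : EReal) * (ThetaGe1 P (conj q) α - ((α / p : ℝ) : EReal)))
        * rnorm (piM n (m1 P)) f p := by
  have hp1 : IsProbabilityMeasure (m1 P) := Measure.isProbabilityMeasure_map (by fun_prop)
  have hpn : IsProbabilityMeasure (piM n (m1 P)) := by unfold piM; infer_instance
  have hA0 := rnorm_ne0 _ f hf p hp
  have hn0 : (-(n : ℝ)) < 0 := by
    have : (1 : ℝ) ≤ n := by exact_mod_cast hn
    linarith
  have hz : ps = 0 → piM n (m1 P) {x | 0 < f x} ≠ 0 ∧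
      piM n (m1 P) {x | 0 < f x} ≤ ENNReal.ofReal (Real.exp (-α)) ^ n := by
    intro h0
    subst h0
    refine supp_c _ f hf n α ?_
    have := hf1 zero_le
    rw [entE, if_neg (by simp), ent, ENNReal.toReal_zero, if_neg hp.ne, if_pos rfl] at this
    exact this
  have hT_top : ThetaGe1 P (conj q) α ≠ ⊤ := by
    by_cases h0 : ps = 0
    · exact theta_ne_top P q hq α n hn _ (measurableSet_lt measurable_const hf.1) (hz h0).1 (hz h0).2
    · intro hT
      have h1 := subgrad_real _ α _ (ENNReal.inv_ne_top.2 h0) hgrad 0 le_rfl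
      simp only [hT, EReal.top_add_coe] at h1
      have h2 := h1.trans (theta_zero P q hq)
      exact absurd (top_le_iff.1 h2) (by simp)
  by_cases hT_bot : ThetaGe1 P (conj q) α = ⊥
  · rw [hT_bot, EReal.bot_sub, EReal.coe_mul_bot_of_neg hn0]
    have : eexp ⊤ = ⊤ := by simp [eexp]
    rw [this, ENNReal.top_mul hA0]
    exact le_top
  obtain ⟨T, hT⟩ : ∃ T : ℝ, ThetaGe1 P (conj q) α = (T : EReal) :=
    ⟨_, (EReal.coe_toReal hT_top hT_bot).symm⟩
  have hR : eexp (((-(n : ℝ) : ℝ) : EReal) * (ThetaGe1 P (conj q) α - ((α / p : ℝ) : EReal)))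
      = ENNReal.ofReal (Real.exp (-n * (T - α / p))) := by
    rw [hT, ← EReal.coe_sub, ← EReal.coe_mul, eexp_coe]
  rw [hR]
  by_cases h0 : ps = 0
  · have hs := (hz h0).2
    subst h0
    rw [ENNReal.inv_zero] at hgrad
    exact case_zero P κ hκ α q hq hgrad T hT p hp n f hf hs
  have hg := subgrad_real _ α _ (ENNReal.inv_ne_top.2 h0) hgrad
  simp only [hT] at hg
  by_cases htop : ps = ⊤
  · subst htop
    have hT0 : T ≤ 0 := by
      have := (hg 0 le_rfl).trans (theta_zero P q hq)
      simpa using this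
    refine (contr P κ hκ q hq n f hf.1).trans ?_
    refine conv_top _ f hf p α T hp hT0 n ?_
    have := hf2 le_top
    rwa [entE, if_pos rfl] at this
  have hr : 0 < ps.toReal := ENNReal.toReal_pos h0 htop
  refine (case_mid P κ hκ α q hq ps.toReal hr T ?_ n f hf).trans ?_
  · intro s hs
    have := hg s hs
    rwa [ENNReal.toReal_inv, ← one_div, ← EReal.coe_add] at this
  · rw [entE, if_neg htop] at hf1 hf2
    refine conv_mid _ f hf p ps.toReal α T hp hr n (fun h => hf1 ?_) (fun h => hf2 ?_)
    · rw [← ENNReal.ofReal_toReal htop]; exact ENNReal.ofReal_le_ofReal h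
    · rw [← ENNReal.ofReal_toReal htop]; exact ENNReal.ofReal_le_ofReal h

end BL
end
end

section
/- Strong small-set expansion theorem (inequalities): for every n ≥ 1, α ∈ [0,α_max], and β ∈ [0,β_max], one has Θ̲^{(n)}(α,β) ≥ Θ̲(α,β); and Θ̄^{(n)}(α,β) ≤ Θ̄(α,β) if α > 0 and β > 0, Θ̄^{(n)}(α,0) ≤ α, and Θ̄^{(n)}(0,β) ≤ β. -/
open MeasureTheory ProbabilityTheory Set Filter
open scoped ENNReal NNReal BigOperators Classical Topology

noncomputable section

namespace BL

variable {X : Type*} {Y : Type*} [MeasurableSpace X] [MeasurableSpace Y]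

/-! ### The n-dimensional noise-stability exponents -/

/-- `Θ̲^{(n)}(α,β) = -(1/n) log sup {P^{⊗n}(A×B) : P_X^{⊗n}(A) ≤ e^{-nα}, P_Y^{⊗n}(B) ≤ e^{-nβ}}`. -/
def ThetaLn (P : Measure (X × Y)) (n : ℕ) (α β : ℝ) : EReal :=
  -((((n : ℝ)⁻¹ : ℝ) : EReal) *
    elog (⨆ (A : Set (Fin n → X)) (B : Set (Fin n → Y))
        (_ : MeasurableSet A) (_ : MeasurableSet B)
        (_ : piM n (m1 P) A ≤ ENNReal.ofReal (Real.exp (-((n : ℝ) * α))))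
        (_ : piM n (m2 P) B ≤ ENNReal.ofReal (Real.exp (-((n : ℝ) * β)))),
        piM n P (prodSet A B)))

/-- `Θ̄^{(n)}(α,β) = -(1/n) log inf {P^{⊗n}(A×B) : P_X^{⊗n}(A) ≥ e^{-nα}, P_Y^{⊗n}(B) ≥ e^{-nβ}}`. -/
def ThetaUn (P : Measure (X × Y)) (n : ℕ) (α β : ℝ) : EReal :=
  -((((n : ℝ)⁻¹ : ℝ) : EReal) *
    elog (⨅ (A : Set (Fin n → X)) (B : Set (Fin n → Y))
        (_ : MeasurableSet A) (_ : MeasurableSet B)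
        (_ : ENNReal.ofReal (Real.exp (-((n : ℝ) * α))) ≤ piM n (m1 P) A)
        (_ : ENNReal.ofReal (Real.exp (-((n : ℝ) * β))) ≤ piM n (m2 P) B),
        piM n P (prodSet A B)))

/-- Weak separation of a point from a convex set in finite dimension. -/
lemma aux_sep {V : Type*} [NormedAddCommGroup V] [NormedSpace ℝ V] [FiniteDimensional ℝ V]
    {C : Set V} (hC : Convex ℝ C) (hne : C.Nonempty) {x : V} (hx : x ∉ C) :
    ∃ l : V →ₗ[ℝ] ℝ, l ≠ 0 ∧ ∀ c ∈ C, l c ≤ l x := by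
  by_cases hi : (interior C).Nonempty
  · obtain ⟨f, hf⟩ := geometric_hahn_banach_open_point hC.interior isOpen_interior
      (fun h => hx (interior_subset h))
    refine ⟨f.toLinearMap, ?_, ?_⟩
    · intro h0
      obtain ⟨a, ha⟩ := hi
      have := hf a ha
      have h1 : f a = 0 := by simpa using congrArg (fun g : V →ₗ[ℝ] ℝ => g a) h0
      have h2 : f x = 0 := by simpa using congrArg (fun g : V →ₗ[ℝ] ℝ => g x) h0
      linarith
    · intro c hc
      have h1 : c ∈ closure (interior C) := by
        rw [hC.closure_interior_eq_closure_of_nonempty_interior hi]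
        exact subset_closure hc
      have h2 : closure (interior C) ⊆ {y | f y ≤ f x} :=
        closure_minimal (fun a ha => (hf a ha).le) (isClosed_le f.continuous continuous_const)
      exact h2 h1
  · have h1 : affineSpan ℝ C ≠ ⊤ := 
      fun h => hi (hC.interior_nonempty_iff_affineSpan_eq_top.2 h)
    have h2 : (affineSpan ℝ C).direction < ⊤ := by
      rw [lt_top_iff_ne_top]
      intro h
      apply h1
      exact (AffineSubspace.direction_eq_top_iff_of_nonempty
        ((affineSpan_nonempty ℝ).2 hne)).1 h
    obtain ⟨l, hl0, hl⟩ := Submodule.exists_le_ker_of_lt_top _ h2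
    obtain ⟨c0, hc0⟩ := hne
    have hk : ∀ c ∈ C, l c = l c0 := by
      intro c hc
      have : c -ᵥ c0 ∈ (affineSpan ℝ C).direction :=
        AffineSubspace.vsub_mem_direction (subset_affineSpan ℝ C hc) (subset_affineSpan ℝ C hc0)
      have := hl this
      rw [LinearMap.mem_ker, vsub_eq_sub, map_sub] at this
      linarith
    rcases le_total (l c0) (l x) with h | h
    · exact ⟨l, hl0, fun c hc => by rw [hk c hc]; exact h⟩
    · exact ⟨-l, neg_ne_zero.2 hl0, fun c hc => by simp [hk c hc, h]⟩

lemma aux_bary {V : Type*} [NormedAddCommGroup V] [NormedSpace ℝ V] [FiniteDimensional ℝ V]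
    {Ω : Type*} [MeasurableSpace Ω] (μ : Measure Ω) [IsProbabilityMeasure μ]
    (f : Ω → V) (hf : Integrable f μ) (k : ℕ) :
    ∀ (W : Submodule ℝ V) (C : Set V), Module.finrank ℝ W ≤ k → Convex ℝ C →
      (∀ᵐ ω ∂μ, f ω ∈ C) → (∀ c ∈ C, c - ∫ ω, f ω ∂μ ∈ W) → ∫ ω, f ω ∂μ ∈ C := by
  set b := ∫ ω, f ω ∂μ with hb
  induction k with
  | zero =>
    intro W C hW hC hfC hCW
    obtain ⟨ω, hω⟩ := hfC.exists
    have hW0 : W = ⊥ := Submodule.finrank_eq_zero.1 (Nat.le_zero.1 hW)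
    have := hCW _ hω
    rw [hW0, Submodule.mem_bot, sub_eq_zero] at this
    rw [← this]; exact hω
  | succ k ih =>
    intro W C hW hC hfC hCW
    by_contra hbC
    let C' : Set W := {w | b + (w : V) ∈ C}
    have hC' : Convex ℝ C' := by
      intro w hw w' hw' s t hs ht hst
      have := hC hw hw' hs ht hst
      show b + ((s • w + t • w' : W) : V) ∈ C
      convert this using 1
      have : b = s • b + t • b := by rw [← add_smul, hst, one_smul]
      simp only [Submodule.coe_add, Submodule.coe_smul, smul_add]
      conv_lhs => rw [this]
      abel
    obtain ⟨ω, hω⟩ := hfC.exists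
    have hne : C'.Nonempty := ⟨⟨f ω - b, hCW _ hω⟩, by show b + (f ω - b) ∈ C; simpa using hω⟩
    have h0 : (0 : W) ∉ C' := by
      intro h; apply hbC; simpa [C'] using h
    obtain ⟨l, hl0, hl⟩ := aux_sep hC' hne h0
    obtain ⟨L, hL⟩ := LinearMap.exists_extend l
    have hLl : ∀ w : W, L (w : V) = l w := fun w => by rw [← hL]; rfl
    have hLC : ∀ c ∈ C, L (c - b) ≤ 0 := by
      intro c hc
      have := hl ⟨c - b, hCW c hc⟩ (by show b + (c - b) ∈ C; simpa using hc)
      rw [map_zero] at this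
      rw [← hLl] at this
      exact this
    let Lc : V →L[ℝ] ℝ := LinearMap.toContinuousLinearMap L
    have hIntg : Integrable (fun ω => f ω - b) μ := hf.sub (integrable_const b)
    have hIntg2 : Integrable (fun ω => Lc (f ω - b)) μ := Lc.integrable_comp hIntg
    have hI : ∫ ω, Lc (f ω - b) ∂μ = 0 := by
      rw [Lc.integral_comp_comm hIntg, integral_sub hf (integrable_const b)]
      simp [← hb]
    have hnp : (fun ω => -Lc (f ω - b)) =ᵐ[μ] 0 := by
      refine (integral_eq_zero_iff_of_nonneg_ae ?_ hIntg2.neg).1 ?_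
      · filter_upwards [hfC] with ω hω
        have h3 : Lc (f ω - b) ≤ 0 := hLC _ hω
        exact neg_nonneg.2 h3
      · have h4 : ∫ ω, -Lc (f ω - b) ∂μ = 0 := by rw [integral_neg, hI, neg_zero]
        exact h4
    let C2 : Set V := C ∩ {c | L (c - b) = 0}
    have hC2 : Convex ℝ C2 := by
      refine hC.inter ?_
      intro c hc c' hc' s t hs ht hst
      have : (s • c + t • c') - b = s • (c - b) + t • (c' - b) := by
        have : b = s • b + t • b := by rw [← add_smul, hst, one_smul]
        conv_lhs => rw [this]
        simp only [smul_sub]; abel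
      show L _ = 0
      rw [this, map_add, map_smul, map_smul, show L (c - b) = 0 from hc,
        show L (c' - b) = 0 from hc']
      simp
    have := ih (W ⊓ LinearMap.ker L) C2 ?_ hC2 ?_ ?_
    · exact hbC this.1
    · have hlt : W ⊓ LinearMap.ker L < W := by
        refine lt_of_le_of_ne inf_le_left ?_
        intro h
        apply hl0
        ext w
        have : (w : V) ∈ W ⊓ LinearMap.ker L := by rw [h]; exact w.2
        have h5 : L (w : V) = 0 := this.2
        rw [hLl] at h5
        simpa using h5
      have := Submodule.finrank_lt_finrank_of_lt hlt
      omega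
    · filter_upwards [hfC, hnp] with ω h1 h2
      refine ⟨h1, ?_⟩
      have h3 : Lc (f ω - b) = 0 := neg_eq_zero.1 h2
      exact h3
    · intro c hc
      exact ⟨hCW c hc.1, hc.2⟩

lemma aux_integral_mem {V : Type*} [NormedAddCommGroup V] [NormedSpace ℝ V]
    [FiniteDimensional ℝ V]
    {Ω : Type*} [MeasurableSpace Ω] (μ : Measure Ω) [IsProbabilityMeasure μ]
    (f : Ω → V) (hf : Integrable f μ) {C : Set V} (hC : Convex ℝ C)
    (hfC : ∀ᵐ ω ∂μ, f ω ∈ C) : ∫ ω, f ω ∂μ ∈ C :=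
  aux_bary μ f hf _ ⊤ C le_rfl hC hfC (fun _ _ => Submodule.mem_top)

lemma aux_carath {s : Set (ℝ × ℝ × ℝ)} {x : ℝ × ℝ × ℝ} (hx : x ∈ convexHull ℝ s) :
    ∃ (q : Fin 4 → ℝ) (p : Fin 4 → ℝ × ℝ × ℝ), (∀ i, 0 ≤ q i) ∧ ∑ i, q i = 1 ∧
      (∀ i, p i ∈ s) ∧ ∑ i, q i • p i = x := by
  obtain ⟨x0, hx0⟩ : s.Nonempty := convexHull_nonempty_iff.1 ⟨x, hx⟩
  obtain ⟨ι, _, z, w, hz, hind, hw, hw1, hwx⟩ := eq_pos_convex_span_of_mem_convexHull hx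
  have hcard : Fintype.card ι ≤ 4 := by
    have h1 := hind.card_le_finrank_succ
    have h2 : Module.finrank ℝ (vectorSpan ℝ (Set.range z)) ≤ Module.finrank ℝ (ℝ × ℝ × ℝ) :=
      Submodule.finrank_le _
    have h3 : Module.finrank ℝ (ℝ × ℝ × ℝ) = 3 := by simp
    omega
  obtain ⟨e⟩ : Nonempty (ι ↪ Fin 4) :=
    Function.Embedding.nonempty_of_card_le (by simpa using hcard)
  have hinj := e.injective
  refine ⟨Function.extend e w 0, Function.extend e z (fun _ => x0), ?_, ?_, ?_, ?_⟩
  · intro i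
    by_cases h : ∃ a, e a = i
    · obtain ⟨a, rfl⟩ := h
      rw [hinj.extend_apply]; exact (hw a).le
    · rw [Function.extend_apply' _ _ _ h]; simp
  · rw [← hw1]
    symm
    refine Fintype.sum_of_injective e hinj _ _ ?_ ?_
    · intro i hi; rw [Function.extend_apply' _ _ _ hi]; rfl
    · intro a; rw [hinj.extend_apply]
  · intro i
    by_cases h : ∃ a, e a = i
    · obtain ⟨a, rfl⟩ := h
      rw [hinj.extend_apply]; exact hz ⟨a, rfl⟩
    · rw [Function.extend_apply' _ _ _ h]; exact hx0
  · rw [← hwx]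
    symm
    refine Fintype.sum_of_injective e hinj _ _ ?_ ?_
    · intro i hi; rw [Function.extend_apply' _ _ _ hi]; simp
    · intro a; rw [hinj.extend_apply, hinj.extend_apply]



open InformationTheory

/-! ### Part B: divergences -/

lemma aux_klDiv_compProd {A B : Type*} [MeasurableSpace A] [MeasurableSpace B]
    [StandardBorelSpace B] (μ : Measure A) [IsProbabilityMeasure μ]
    (κ η : Kernel A B) [IsMarkovKernel κ] [IsMarkovKernel η]
    (h : ∀ᵐ a ∂μ, κ a ≪ η a) :
    klDiv (μ ⊗ₘ κ) (μ ⊗ₘ η) = ∫⁻ a, klDiv (κ a) (η a) ∂μ ∧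
      AEMeasurable (fun a => klDiv (κ a) (η a)) μ := by
  set f := Kernel.rnDeriv κ η with hf
  have hfm : Measurable (Function.uncurry f) := Kernel.measurable_rnDeriv κ η
  have hac : μ ⊗ₘ κ ≪ μ ⊗ₘ η := Measure.absolutelyContinuous_compProd_right_iff.2 h
  have e1 : μ ⊗ₘ κ = (μ ⊗ₘ η).withDensity (fun p => f p.1 p.2) := by
    rw [← Measure.compProd_withDensity hfm]
    refine Measure.compProd_congr ?_
    filter_upwards [h] with a ha
    exact (Kernel.withDensity_rnDeriv_eq ha).symm
  have e2 : (μ ⊗ₘ κ).rnDeriv (μ ⊗ₘ η) =ᵐ[μ ⊗ₘ η] fun p => f p.1 p.2 := by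
    conv_lhs => rw [e1]
    exact Measure.rnDeriv_withDensity _ hfm
  have hm : Measurable (fun p : A × B => ENNReal.ofReal (klFun (f p.1 p.2).toReal)) := by
    have : Measurable (fun p : A × B => f p.1 p.2) := hfm
    exact (measurable_klFun.comp this.ennreal_toReal).ennreal_ofReal
  have e3 : ∀ᵐ a ∂μ, klDiv (κ a) (η a)
      = ∫⁻ b, ENNReal.ofReal (klFun (f a b).toReal) ∂(η a) := by
    filter_upwards [h] with a ha
    rw [klDiv_eq_lintegral_klFun_of_ac ha]
    refine lintegral_congr_ae ?_
    filter_upwards [Kernel.rnDeriv_eq_rnDeriv_measure (κ := κ) (η := η) (a := a)] with b hb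
    rw [hf, hb]
  constructor
  · rw [klDiv_eq_lintegral_klFun_of_ac hac, lintegral_congr_ae e3,
      ← Measure.lintegral_compProd (μ := μ) (κ := η) hm]
    refine lintegral_congr_ae ?_
    filter_upwards [e2] with p hp
    rw [hp]
  · exact ⟨_, Measurable.lintegral_kernel_prod_right' hm, e3⟩

lemma aux_KL_eq {A : Type*} [MeasurableSpace A] (Q P : Measure A) [IsProbabilityMeasure Q]
    [IsProbabilityMeasure P] : KL Q P = (klDiv Q P : EReal) := by
  unfold KL
  split_ifs with h
  · have h1 := toReal_klDiv (μ := Q) (ν := P) h.1 h.2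
    have h2 := klDiv_ne_top (μ := Q) (ν := P) h.1 h.2
    rw [← ENNReal.ofReal_toReal h2, EReal.coe_ennreal_ofReal, h1]
    simp only [probReal_univ, add_sub_cancel_right]
    rw [max_eq_left]
    · rfl
    · have := h1 ▸ ENNReal.toReal_nonneg (a := klDiv Q P)
      simpa using this
  · rw [klDiv_eq_top_iff.2 (fun h1 h2 => h ⟨h1, h2⟩)]; rfl

lemma aux_KL_real {A : Type*} [MeasurableSpace A] (Q P : Measure A) [IsProbabilityMeasure Q]
    [IsProbabilityMeasure P] (h : klDiv Q P ≠ ⊤) :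
    KL Q P = (((klDiv Q P).toReal : ℝ) : EReal) := by
  rw [aux_KL_eq, EReal.coe_ennreal_toReal h]

lemma aux_dv {A : Type*} [MeasurableSpace A] (Q P : Measure A) [IsProbabilityMeasure Q]
    [IsProbabilityMeasure P] (h : klDiv Q P ≠ ⊤) (f : A → ℝ) (hf : Measurable f)
    (M : ℝ) (hM : ∀ x, |f x| ≤ M) :
    ∫ x, f x ∂Q - (klDiv Q P).toReal ≤ Real.log (∫ x, Real.exp (f x) ∂P) := by
  obtain ⟨h1, h2⟩ := klDiv_ne_top_iff.1 h
  have hfQ : Integrable f Q := Integrable.of_bound hf.aestronglyMeasurable M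
    (ae_of_all _ fun x => by simpa using hM x)
  have hfP : Integrable (fun x => Real.exp (f x)) P :=
    Integrable.of_bound (hf.exp).aestronglyMeasurable (Real.exp M)
      (ae_of_all _ fun x => by
        simpa using (le_abs_self _).trans (hM x))
  have h3 := integral_llr_tilted_right h1 hfQ hfP h2
  have h4 := integrable_llr_tilted_right h1 hfQ h2 hfP
  have := isProbabilityMeasure_tilted hfP
  have h5 := integral_llr_add_sub_measure_univ_nonneg (h1.trans (absolutelyContinuous_tilted hfP)) h4
  have h6 := toReal_klDiv h1 h2
  simp only [probReal_univ, add_sub_cancel_right] at h5 h6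
  linarith

/-- The divergence from `P` of a probability measure carried by `A` is at least `-log P(A)`. -/
lemma aux_kl_ge {A : Type*} [MeasurableSpace A] (Q P : Measure A) [IsProbabilityMeasure Q]
    [IsProbabilityMeasure P] (h : klDiv Q P ≠ ⊤) (S : Set A) (hS : MeasurableSet S)
    (hQ : Q Sᶜ = 0) (a : ℝ) (hP : P S ≤ ENNReal.ofReal (Real.exp (-a))) :
    a ≤ (klDiv Q P).toReal := by
  have key : ∀ M : ℝ, 0 ≤ M → Real.exp (-(klDiv Q P).toReal) ≤ Real.exp (-a) + Real.exp (-M) := by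
    intro M hM
    have h1 := aux_dv Q P h (Sᶜ.indicator (fun _ => -M)) (measurable_const.indicator hS.compl) M ?_
    · have h2 : ∫ x, Sᶜ.indicator (fun _ => -M) x ∂Q = 0 := by
        rw [integral_indicator hS.compl]
        simp [Measure.restrict_eq_zero.2 hQ]
      rw [h2, zero_sub] at h1
      have h3 : ∫ x, Real.exp (Sᶜ.indicator (fun _ => -M) x) ∂P ≤ Real.exp (-a) + Real.exp (-M) := by
        have : ∀ x, Real.exp (Sᶜ.indicator (fun _ => -M) x)
            ≤ S.indicator (fun _ => (1 : ℝ)) x + Real.exp (-M) := by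
          intro x
          by_cases hx : x ∈ S
          · simp [hx, Real.exp_nonneg]
          · simp [hx]
        calc _ ≤ ∫ x, (S.indicator (fun _ => (1 : ℝ)) x + Real.exp (-M)) ∂P := by
              refine integral_mono_of_nonneg (ae_of_all _ fun x => (Real.exp_pos _).le) ?_
                (ae_of_all _ this)
              exact ((integrable_const _).indicator hS).add (integrable_const _)
          _ = P.real S + Real.exp (-M) := by
              rw [integral_add ((integrable_const _).indicator hS) (integrable_const _)]
              simp [integral_indicator hS]
          _ ≤ _ := by
              gcongr
              exact ENNReal.toReal_le_of_le_ofReal (Real.exp_pos _).le hP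
      have h4 : 0 < ∫ x, Real.exp (Sᶜ.indicator (fun _ => -M) x) ∂P := by
        refine integral_exp_pos ?_
        refine Integrable.of_bound ((measurable_const.indicator hS.compl).exp).aestronglyMeasurable 1
          (ae_of_all _ fun x => ?_)
        by_cases hx : x ∈ S
        · simp [hx]
        · simp [hx, hM]
      calc _ ≤ Real.exp (Real.log (∫ x, Real.exp (Sᶜ.indicator (fun _ => -M) x) ∂P)) :=
            Real.exp_le_exp.2 h1
        _ = _ := Real.exp_log h4
        _ ≤ _ := h3
    · intro x
      by_cases hx : x ∈ S
      · simp [hx, hM]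
      · simp [hx, abs_of_nonneg hM]
  have h2 : Real.exp (-(klDiv Q P).toReal) ≤ Real.exp (-a) := by
    have : Tendsto (fun M : ℝ => Real.exp (-a) + Real.exp (-M)) atTop (𝓝 (Real.exp (-a) + 0)) :=
      tendsto_const_nhds.add Real.tendsto_exp_neg_atTop_nhds_zero
    rw [add_zero] at this
    exact ge_of_tendsto this (eventually_atTop.2 ⟨0, fun M hM => key M hM⟩)
  have := Real.exp_le_exp.1 h2
  linarith

/-- Divergence of a conditioned measure. -/
lemma aux_kl_cond {A : Type*} [MeasurableSpace A] (P : Measure A)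
    [IsProbabilityMeasure P] (S : Set A) (hS : MeasurableSet S) (hP : P S ≠ 0) :
    klDiv (P[|S]) P ≠ ⊤ ∧ (klDiv (P[|S]) P).toReal = -Real.log (P S).toReal := by
  have : IsProbabilityMeasure (P[|S]) := cond_isProbabilityMeasure hP
  have hac : P[|S] ≪ P := cond_absolutelyContinuous
  have hr : (P[|S]).rnDeriv P =ᵐ[P] fun x => S.indicator (fun _ => (P S)⁻¹) x := by
    have : P[|S] = P.withDensity (S.indicator (fun _ => (P S)⁻¹)) := by
      rw [withDensity_indicator hS, withDensity_const]; rfl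
    rw [this]
    exact Measure.rnDeriv_withDensity _ (measurable_const.indicator hS)
  have hl : llr (P[|S]) P =ᵐ[P[|S]] fun _ => -Real.log (P S).toReal := by
    filter_upwards [hac.ae_le hr, ae_cond_mem hS] with x h1 h2
    rw [llr, h1, Set.indicator_of_mem h2, ENNReal.toReal_inv, Real.log_inv]
  have hi : Integrable (llr (P[|S]) P) (P[|S]) := (integrable_congr hl).2 (integrable_const _)
  refine ⟨klDiv_ne_top hac hi, ?_⟩
  rw [toReal_klDiv hac hi, integral_congr_ae hl]
  simp

/-! ### Part C: tensorization of divergence triples -/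

lemma aux_chain_a {A B : Type*} [MeasurableSpace A] [MeasurableSpace B]
    [StandardBorelSpace B] [Nonempty B] (Q : Measure (A × B)) [IsProbabilityMeasure Q]
    (P1 : Measure A) (P2 : Measure B) [IsProbabilityMeasure P1] [IsProbabilityMeasure P2]
    (h : klDiv Q (P1.prod P2) ≠ ⊤) :
    (∀ᵐ z ∂Q.fst, Q.condKernel z ≪ P2) ∧
    klDiv Q (P1.prod P2) = klDiv Q.fst P1 + ∫⁻ z, klDiv (Q.condKernel z) P2 ∂Q.fst ∧
    AEMeasurable (fun z => klDiv (Q.condKernel z) P2) Q.fst := by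
  have e : klDiv Q (P1.prod P2) = klDiv Q.fst P1 +
      klDiv (Q.fst ⊗ₘ Q.condKernel) (Q.fst ⊗ₘ Kernel.const A P2) := by
    conv_lhs => rw [← Measure.disintegrate Q Q.condKernel, ← Measure.compProd_const]
    exact klDiv_compProd_eq_add _ _ _ _
  have h2 : klDiv (Q.fst ⊗ₘ Q.condKernel) (Q.fst ⊗ₘ Kernel.const A P2) ≠ ⊤ := by
    intro h3; rw [h3, add_top] at e; exact h e
  have hac := Measure.absolutelyContinuous_compProd_right_iff.1 (klDiv_ne_top_iff.1 h2).1
  simp only [Kernel.const_apply] at hac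
  have h4 := aux_klDiv_compProd Q.fst Q.condKernel (Kernel.const A P2) (by simpa using hac)
  simp only [Kernel.const_apply] at h4
  refine ⟨hac, ?_, h4.2⟩
  rw [e, h4.1]

lemma aux_chain_b {A B C D : Type*} [MeasurableSpace A] [MeasurableSpace B]
    [MeasurableSpace C] [MeasurableSpace D]
    [StandardBorelSpace B] [Nonempty B] [StandardBorelSpace D] [Nonempty D]
    (Q : Measure (A × B)) [IsProbabilityMeasure Q]
    (P1 : Measure A) (P2 : Measure B) [IsProbabilityMeasure P1] [IsProbabilityMeasure P2]
    (f : A → C) (g : B → D) (hf : Measurable f) (hg : Measurable g)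
    (hac : ∀ᵐ z ∂Q.fst, Q.condKernel z ≪ P2) :
    klDiv (Q.map (Prod.map f g)) ((P1.map f).prod (P2.map g)) ≤
      klDiv (Q.fst.map f) (P1.map f) + ∫⁻ z, klDiv ((Q.condKernel z).map g) (P2.map g) ∂Q.fst ∧
    AEMeasurable (fun z => klDiv ((Q.condKernel z).map g) (P2.map g)) Q.fst := by
  have : IsProbabilityMeasure (P1.map f) := Measure.isProbabilityMeasure_map hf.aemeasurable
  have : IsProbabilityMeasure (P2.map g) := Measure.isProbabilityMeasure_map hg.aemeasurable
  have : IsProbabilityMeasure (Q.map (Prod.map f g)) :=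
    Measure.isProbabilityMeasure_map (hf.prodMap hg).aemeasurable
  have : IsMarkovKernel (Q.condKernel.map g) := Kernel.IsMarkovKernel.map _ hg
  set R := Q.map (Prod.map f g) with hR
  have hRf : R.fst = Q.fst.map f := by
    rw [hR, Measure.fst, Measure.fst, Measure.map_map measurable_fst (hf.prodMap hg),
      Measure.map_map hf measurable_fst]
    rfl
  have e : klDiv R ((P1.map f).prod (P2.map g)) = klDiv R.fst (P1.map f) +
      klDiv R (R.fst.prod (P2.map g)) := by
    conv_lhs => rw [← Measure.disintegrate R R.condKernel, ← Measure.compProd_const]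
    conv_rhs => rw [← Measure.compProd_const]
    conv_rhs => enter [2,1]; rw [← Measure.disintegrate R R.condKernel]
    exact klDiv_compProd_eq_add _ _ _ _
  have h4 := aux_klDiv_compProd Q.fst (Q.condKernel.map g) (Kernel.const A (P2.map g)) (by
    filter_upwards [hac] with z hz
    rw [Kernel.map_apply _ hg, Kernel.const_apply]
    exact hz.map hg)
  simp only [Kernel.const_apply, Kernel.map_apply _ hg] at h4
  refine ⟨?_, h4.2⟩
  rw [e, hRf, ← h4.1]
  gcongr
  have e5 : Q.fst ⊗ₘ (Q.condKernel.map g) = Q.map (Prod.map id g) := by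
    conv_rhs => rw [← Measure.disintegrate Q Q.condKernel]
    rw [Measure.compProd_map hg]
  have e6 : R = (Q.fst ⊗ₘ (Q.condKernel.map g)).map (Prod.map f id) := by
    rw [e5, Measure.map_map (hf.prodMap measurable_id) (measurable_id.prodMap hg)]
    rfl
  have e7 : (Q.fst.map f).prod (P2.map g) =
      (Q.fst ⊗ₘ Kernel.const A (P2.map g)).map (Prod.map f id) := by
    rw [Measure.compProd_const, ← Measure.map_prod_map _ _ hf measurable_id, Measure.map_id]
  rw [e7, e6]
  exact klDiv_map_le _ _ (hf.prodMap measurable_id)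

lemma aux_piM_map {Z W : Type*} [MeasurableSpace Z] [MeasurableSpace W]
    (P : Measure Z) [IsProbabilityMeasure P] (g : Z → W) (hg : Measurable g) (n : ℕ) :
    (piM n P).map (fun z i => g (z i)) = piM n (P.map g) := by
  have : IsProbabilityMeasure (P.map g) := Measure.isProbabilityMeasure_map hg.aemeasurable
  exact (Measure.pi_map_pi (fun _ => hg.aemeasurable))

instance aux_piM_prob {Z : Type*} [MeasurableSpace Z] (n : ℕ) (P : Measure Z)
    [IsProbabilityMeasure P] : IsProbabilityMeasure (piM n P) := by
  unfold piM; infer_instance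

lemma aux_succ {Z : Type*} [MeasurableSpace Z] (n : ℕ) (P : Measure Z)
    [IsProbabilityMeasure P] :
    (piM (n + 1) P).map (MeasurableEquiv.piFinSuccAbove (fun _ => Z) 0) = P.prod (piM n P) :=
  (measurePreserving_piFinSuccAbove (fun _ : Fin (n + 1) => P) 0).map_eq

lemma aux_succ_symm {Z : Type*} [MeasurableSpace Z] (n : ℕ) (P : Measure Z)
    [IsProbabilityMeasure P] :
    (P.prod (piM n P)).map (MeasurableEquiv.piFinSuccAbove (fun _ : Fin (n + 1) => Z) 0).symm
      = piM (n + 1) P := by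
  rw [← aux_succ, Measure.map_map (MeasurableEquiv.measurable _) (MeasurableEquiv.measurable _)]
  simp

lemma aux_step_s {Z W : Type*} [MeasurableSpace Z] [MeasurableSpace W]
    [StandardBorelSpace Z] [Nonempty Z] [StandardBorelSpace W] [Nonempty W]
    (P : Measure Z) [IsProbabilityMeasure P] (g : Z → W) (hg : Measurable g) (n : ℕ)
    (Q : Measure (Fin (n + 1) → Z)) [IsProbabilityMeasure Q]
    (Q' : Measure (Z × (Fin n → Z))) [IsProbabilityMeasure Q']
    (hQ' : Q' = Q.map (MeasurableEquiv.piFinSuccAbove (fun _ => Z) 0))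
    (hac : ∀ᵐ z ∂Q'.fst, Q'.condKernel z ≪ piM n P) :
    klDiv (Q.map (fun z i => g (z i))) (piM (n + 1) (P.map g)) ≤
      klDiv (Q'.fst.map g) (P.map g) +
        ∫⁻ z, klDiv ((Q'.condKernel z).map (fun z i => g (z i))) (piM n (P.map g)) ∂Q'.fst ∧
    AEMeasurable (fun z => klDiv ((Q'.condKernel z).map (fun z i => g (z i)))
      (piM n (P.map g))) Q'.fst := by
  have : IsProbabilityMeasure (P.map g) := Measure.isProbabilityMeasure_map hg.aemeasurable
  have hgv : ∀ m : ℕ, Measurable (fun (z : Fin m → Z) i => g (z i)) := fun m =>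
    measurable_pi_lambda _ fun i => hg.comp (measurable_pi_apply i)
  have h := aux_chain_b Q' P (piM n P) g (fun z i => g (z i)) hg (hgv n) hac
  rw [aux_piM_map P g hg n] at h
  refine ⟨le_trans ?_ h.1, h.2⟩
  rw [← aux_succ_symm n (P.map g)]
  have e : Q.map (fun z i => g (z i)) = (Q'.map (Prod.map g (fun z i => g (z i)))).map
      (MeasurableEquiv.piFinSuccAbove (fun _ : Fin (n + 1) => W) 0).symm := by
    rw [hQ', Measure.map_map (MeasurableEquiv.measurable _) (hg.prodMap (hgv n)),
      Measure.map_map ((MeasurableEquiv.measurable _).comp (hg.prodMap (hgv n)))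
        (MeasurableEquiv.measurable _)]
    congr 1
    funext z i
    refine Fin.cases ?_ (fun j => ?_) i
    · simp [MeasurableEquiv.piFinSuccAbove]
    · simp [MeasurableEquiv.piFinSuccAbove]
      rfl
  rw [e]
  exact klDiv_map_le _ _ (MeasurableEquiv.measurable _)

/-! ### Part D: induction on the dimension -/

/-- Triples of divergences. -/
def auxTri (P : Measure (X × Y)) (n : ℕ) (Q : Measure (Fin n → X × Y)) : ℝ × ℝ × ℝ :=
  ((klDiv (Q.map fstv) (piM n (m1 P))).toReal, (klDiv (Q.map sndv) (piM n (m2 P))).toReal,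
    (klDiv Q (piM n P)).toReal)

def auxR (P : Measure (X × Y)) : Set (ℝ × ℝ × ℝ) :=
  {w | ∃ π : Measure (X × Y), IsProbabilityMeasure π ∧ klDiv π P ≠ ⊤ ∧
    w = ((klDiv (m1 π) (m1 P)).toReal, (klDiv (m2 π) (m2 P)).toReal, (klDiv π P).toReal)}

def auxT (P : Measure (X × Y)) (n : ℕ) : Set (ℝ × ℝ × ℝ) :=
  {w | ∃ a ∈ convexHull ℝ (auxR P), w.1 ≤ n * a.1 ∧ w.2.1 ≤ n * a.2.1 ∧ n * a.2.2 ≤ w.2.2}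

lemma auxT_convex (P : Measure (X × Y)) (n : ℕ) : Convex ℝ (auxT P n) := by
  rintro w ⟨a, ha, h1, h2, h3⟩ w' ⟨a', ha', h1', h2', h3'⟩ s t hs ht hst
  refine ⟨s • a + t • a', convex_convexHull ℝ _ ha ha' hs ht hst, ?_, ?_, ?_⟩
  · simp only [Prod.fst_add, Prod.smul_fst, smul_eq_mul]
    nlinarith [mul_le_mul_of_nonneg_left h1 hs, mul_le_mul_of_nonneg_left h1' ht]
  · simp only [Prod.snd_add, Prod.smul_snd, Prod.fst_add, Prod.smul_fst, smul_eq_mul]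
    nlinarith [mul_le_mul_of_nonneg_left h2 hs, mul_le_mul_of_nonneg_left h2' ht]
  · simp only [Prod.snd_add, Prod.smul_snd, smul_eq_mul]
    nlinarith [mul_le_mul_of_nonneg_left h3 hs, mul_le_mul_of_nonneg_left h3' ht]

lemma aux_fstv_meas (n : ℕ) : Measurable (fstv : (Fin n → X × Y) → Fin n → X) :=
  measurable_pi_lambda _ fun i => measurable_fst.comp (measurable_pi_apply i)

lemma aux_sndv_meas (n : ℕ) : Measurable (sndv : (Fin n → X × Y) → Fin n → Y) :=
  measurable_pi_lambda _ fun i => measurable_snd.comp (measurable_pi_apply i)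

instance aux_m1_prob (P : Measure (X × Y)) [IsProbabilityMeasure P] :
    IsProbabilityMeasure (m1 P) := Measure.isProbabilityMeasure_map measurable_fst.aemeasurable

instance aux_m2_prob (P : Measure (X × Y)) [IsProbabilityMeasure P] :
    IsProbabilityMeasure (m2 P) := Measure.isProbabilityMeasure_map measurable_snd.aemeasurable

lemma aux_fstv_map (P : Measure (X × Y)) [IsProbabilityMeasure P] (n : ℕ) :
    (piM n P).map fstv = piM n (m1 P) := aux_piM_map P Prod.fst measurable_fst n

lemma aux_sndv_map (P : Measure (X × Y)) [IsProbabilityMeasure P] (n : ℕ) :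
    (piM n P).map sndv = piM n (m2 P) := aux_piM_map P Prod.snd measurable_snd n

lemma auxR_mem (P : Measure (X × Y)) [IsProbabilityMeasure P] : (0, 0, 0) ∈ auxR P := by
  refine ⟨P, inferInstance, ?_, ?_⟩
  · rw [klDiv_self]; simp
  · simp only [klDiv_self]; simp

/-- Integrability and integral of the real part of a divergence dominated by a finite one. -/
lemma aux_toReal_int {Ω : Type*} [MeasurableSpace Ω] {μ : Measure Ω} {f : Ω → ℝ≥0∞}
    (hf : AEMeasurable f μ) (h : ∫⁻ ω, f ω ∂μ ≠ ⊤) :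
    Integrable (fun ω => (f ω).toReal) μ ∧ ∫ ω, (f ω).toReal ∂μ = (∫⁻ ω, f ω ∂μ).toReal :=
  ⟨integrable_toReal_of_lintegral_ne_top hf h,
    integral_toReal hf (ae_lt_top' hf h)⟩

lemma aux_tri_mem [StandardBorelSpace X] [StandardBorelSpace Y]
    (P : Measure (X × Y)) [IsProbabilityMeasure P] (n : ℕ) :
    ∀ Q : Measure (Fin n → X × Y), IsProbabilityMeasure Q → klDiv Q (piM n P) ≠ ⊤ →
      auxTri P n Q ∈ auxT P n := by
  have hne : Nonempty (X × Y) := by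
    by_contra h
    rw [not_nonempty_iff] at h
    have := measure_univ (μ := P)
    rw [Set.univ_eq_empty_iff.2 h, measure_empty] at this
    exact zero_ne_one this
  obtain ⟨x0, y0⟩ := hne
  have : Nonempty X := ⟨x0⟩
  have : Nonempty Y := ⟨y0⟩
  induction n with
  | zero =>
    intro Q hQ _
    have hp1 : IsProbabilityMeasure (Q.map fstv) :=
      Measure.isProbabilityMeasure_map (aux_fstv_meas 0).aemeasurable
    have hp2 : IsProbabilityMeasure (Q.map sndv) :=
      Measure.isProbabilityMeasure_map (aux_sndv_meas 0).aemeasurable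
    refine ⟨(0, 0, 0), subset_convexHull ℝ _ (auxR_mem P), ?_, ?_, ?_⟩
    · have : Q.map fstv = piM 0 (m1 P) := by
        ext s _
        rcases Set.eq_empty_or_nonempty s with rfl | hs
        · simp
        · rw [Subsingleton.eq_univ_of_nonempty hs, measure_univ, measure_univ]
      simp [auxTri, this]
    · have : Q.map sndv = piM 0 (m2 P) := by
        ext s _
        rcases Set.eq_empty_or_nonempty s with rfl | hs
        · simp
        · rw [Subsingleton.eq_univ_of_nonempty hs, measure_univ, measure_univ]
      simp [auxTri, this]
    · simp [auxTri]
  | succ n ih =>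
    intro Q hQ hfin
    set Q' : Measure ((X × Y) × (Fin n → X × Y)) :=
      Q.map (MeasurableEquiv.piFinSuccAbove (fun _ => X × Y) 0) with hQ'
    have : IsProbabilityMeasure Q' :=
      Measure.isProbabilityMeasure_map (MeasurableEquiv.measurable _).aemeasurable
    have hd : klDiv Q' (P.prod (piM n P)) ≤ klDiv Q (piM (n + 1) P) := by
      rw [hQ', ← aux_succ]
      exact klDiv_map_le _ _ (MeasurableEquiv.measurable _)
    have hfin' : klDiv Q' (P.prod (piM n P)) ≠ ⊤ := ne_top_of_le_ne_top hfin hd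
    obtain ⟨hac, hch, hdm⟩ := aux_chain_a Q' P (piM n P) hfin'
    obtain ⟨hs, hsm⟩ := aux_step_s P Prod.fst measurable_fst n Q Q' hQ' hac
    obtain ⟨ht, htm⟩ := aux_step_s P Prod.snd measurable_snd n Q Q' hQ' hac
    have hfst : klDiv Q'.fst P ≠ ⊤ := by
      intro h; rw [h, top_add] at hch; exact hfin' hch
    have hIntg : ∫⁻ z, klDiv (Q'.condKernel z) (piM n P) ∂Q'.fst ≠ ⊤ := by
      intro h; rw [h, add_top] at hch; exact hfin' hch
    have hs1 : ∀ z, klDiv ((Q'.condKernel z).map fstv) (piM n (m1 P))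
        ≤ klDiv (Q'.condKernel z) (piM n P) := fun z => by
      rw [← aux_fstv_map]; exact klDiv_map_le _ _ (aux_fstv_meas n)
    have ht1 : ∀ z, klDiv ((Q'.condKernel z).map sndv) (piM n (m2 P))
        ≤ klDiv (Q'.condKernel z) (piM n P) := fun z => by
      rw [← aux_sndv_map]; exact klDiv_map_le _ _ (aux_sndv_meas n)
    have hIntgs : ∫⁻ z, klDiv ((Q'.condKernel z).map fstv) (piM n (m1 P)) ∂Q'.fst ≠ ⊤ :=
      ne_top_of_le_ne_top hIntg (lintegral_mono hs1)
    have hIntgt : ∫⁻ z, klDiv ((Q'.condKernel z).map sndv) (piM n (m2 P)) ∂Q'.fst ≠ ⊤ :=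
      ne_top_of_le_ne_top hIntg (lintegral_mono ht1)
    have Is := aux_toReal_int (f := fun z => klDiv ((Q'.condKernel z).map fstv) (piM n (m1 P)))
      hsm hIntgs
    have It := aux_toReal_int (f := fun z => klDiv ((Q'.condKernel z).map sndv) (piM n (m2 P)))
      htm hIntgt
    have Id := aux_toReal_int (f := fun z => klDiv (Q'.condKernel z) (piM n P)) hdm hIntg
    have hmem : ∀ᵐ z ∂Q'.fst, auxTri P n (Q'.condKernel z) ∈ auxT P n := by
      filter_upwards [ae_lt_top' hdm hIntg] with z hz
      exact ih _ inferInstance hz.ne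
    have Itri : Integrable (fun z => auxTri P n (Q'.condKernel z)) Q'.fst :=
      Is.1.prodMk (It.1.prodMk Id.1)
    have hb := aux_integral_mem Q'.fst _ Itri (auxT_convex P n) hmem
    have e1 : ∫ z, auxTri P n (Q'.condKernel z) ∂Q'.fst =
        (∫ z, (klDiv ((Q'.condKernel z).map fstv) (piM n (m1 P))).toReal ∂Q'.fst,
         ∫ z, (klDiv ((Q'.condKernel z).map sndv) (piM n (m2 P))).toReal ∂Q'.fst,
         ∫ z, (klDiv (Q'.condKernel z) (piM n P)).toReal ∂Q'.fst) := by
      rw [← integral_pair It.1 Id.1, ← integral_pair Is.1 (It.1.prodMk Id.1)]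
      rfl
    rw [e1, Is.2, It.2, Id.2] at hb
    obtain ⟨a, ha, h1, h2, h3⟩ := hb
    have hs0 : klDiv (m1 Q'.fst) (m1 P) ≠ ⊤ :=
      ne_top_of_le_ne_top hfst (klDiv_map_le _ _ measurable_fst)
    have ht0 : klDiv (m2 Q'.fst) (m2 P) ≠ ⊤ :=
      ne_top_of_le_ne_top hfst (klDiv_map_le _ _ measurable_snd)
    set r : ℝ × ℝ × ℝ := ((klDiv (m1 Q'.fst) (m1 P)).toReal, (klDiv (m2 Q'.fst) (m2 P)).toReal,
      (klDiv Q'.fst P).toReal) with hr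
    have hrR : r ∈ auxR P := ⟨Q'.fst, inferInstance, hfst, rfl⟩
    have hn : (0 : ℝ) < (n : ℝ) + 1 := by positivity
    have hS : (klDiv (Q.map fstv) (piM (n + 1) (m1 P))).toReal ≤ r.1 + n * a.1 := by
      have := ENNReal.toReal_mono (ENNReal.add_ne_top.2 ⟨hs0, hIntgs⟩) hs
      rw [ENNReal.toReal_add (by exact hs0) (by exact hIntgs)] at this
      exact this.trans (by gcongr)
    have hT : (klDiv (Q.map sndv) (piM (n + 1) (m2 P))).toReal ≤ r.2.1 + n * a.2.1 := by
      have := ENNReal.toReal_mono (ENNReal.add_ne_top.2 ⟨ht0, hIntgt⟩) ht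
      rw [ENNReal.toReal_add (by exact ht0) (by exact hIntgt)] at this
      exact this.trans (by gcongr)
    have hD : r.2.2 + n * a.2.2 ≤ (klDiv Q (piM (n + 1) P)).toReal := by
      have h5 := ENNReal.toReal_mono hfin hd
      rw [hch, ENNReal.toReal_add hfst hIntg] at h5
      refine le_trans ?_ h5
      gcongr
    refine ⟨(1 / ((n : ℝ) + 1)) • r + ((n : ℝ) / ((n : ℝ) + 1)) • a,
      convex_convexHull ℝ _ (subset_convexHull ℝ _ hrR) ha (by positivity) (by positivity)
        (by field_simp; ring), ?_, ?_, ?_⟩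
    · simp only [Prod.fst_add, Prod.smul_fst, smul_eq_mul, Nat.cast_add, Nat.cast_one]
      refine hS.trans (le_of_eq ?_)
      field_simp
    · simp only [Prod.snd_add, Prod.smul_snd, Prod.fst_add, Prod.smul_fst, smul_eq_mul,
        Nat.cast_add, Nat.cast_one]
      refine hT.trans (le_of_eq ?_)
      field_simp
    · simp only [Prod.snd_add, Prod.smul_snd, smul_eq_mul, Nat.cast_add, Nat.cast_one]
      refine le_trans (le_of_eq ?_) hD
      field_simp

/-! ### Part E: the first inequality -/

lemma aux_elog_le {x : ℝ≥0∞} {c : ℝ} (h : x ≤ ENNReal.ofReal (Real.exp c)) :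
    elog x ≤ (c : EReal) := by
  unfold elog
  split_ifs with h1 h2
  · exact bot_le
  · rw [h2] at h; exact absurd (top_le_iff.1 h) ENNReal.ofReal_ne_top
  · rw [EReal.coe_le_coe_iff]
    have h3 : 0 < x.toReal := ENNReal.toReal_pos h1 h2
    rw [Real.log_le_iff_le_exp h3]
    exact ENNReal.toReal_le_of_le_ofReal (Real.exp_pos _).le h

lemma aux_le_elog {x : ℝ≥0∞} {c : ℝ} (h : ENNReal.ofReal (Real.exp c) ≤ x) :
    (c : EReal) ≤ elog x := by
  unfold elog
  split_ifs with h1 h2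
  · rw [h1] at h
    have := ENNReal.ofReal_eq_zero.1 (le_zero_iff.1 h)
    exact absurd this (not_le.2 (Real.exp_pos c))
  · exact le_top
  · rw [EReal.coe_le_coe_iff]
    have h3 : 0 < x.toReal := ENNReal.toReal_pos h1 h2
    rw [Real.le_log_iff_exp_le h3]
    exact (ENNReal.ofReal_le_iff_le_toReal h2).1 h

lemma aux_scale_le {n : ℕ} (hn : 1 ≤ n) {x : EReal} {r : ℝ}
    (h : x ≤ ((-(n * r) : ℝ) : EReal)) :
    (r : EReal) ≤ -((((n : ℝ)⁻¹ : ℝ) : EReal) * x) := by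
  have hn0 : (0 : ℝ) < n := by exact_mod_cast hn
  have h1 : (((n : ℝ)⁻¹ : ℝ) : EReal) * x ≤ (((n : ℝ)⁻¹ : ℝ) : EReal) * ((-(n * r) : ℝ) : EReal) :=
    mul_le_mul_of_nonneg_left h (by exact_mod_cast (inv_pos.2 hn0).le)
  rw [EReal.le_neg]
  refine h1.trans (le_of_eq ?_)
  rw [← EReal.coe_mul, ← EReal.coe_neg]
  congr 1
  field_simp

lemma aux_le_scale {n : ℕ} (hn : 1 ≤ n) {x : EReal} {r : ℝ}
    (h : ((-(n * r) : ℝ) : EReal) ≤ x) :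
    -((((n : ℝ)⁻¹ : ℝ) : EReal) * x) ≤ (r : EReal) := by
  have hn0 : (0 : ℝ) < n := by exact_mod_cast hn
  have h1 : (((n : ℝ)⁻¹ : ℝ) : EReal) * ((-(n * r) : ℝ) : EReal) ≤ (((n : ℝ)⁻¹ : ℝ) : EReal) * x :=
    mul_le_mul_of_nonneg_left h (by exact_mod_cast (inv_pos.2 hn0).le)
  rw [EReal.neg_le]
  refine le_trans (le_of_eq ?_) h1
  rw [← EReal.coe_mul, ← EReal.coe_neg]
  congr 1
  field_simp

lemma aux_phiL_le (P : Measure (X × Y)) [IsProbabilityMeasure P] {w : ℝ × ℝ × ℝ}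
    (hw : w ∈ auxR P) : 0 ≤ w.1 ∧ 0 ≤ w.2.1 ∧ phiL P w.1 w.2.1 ≤ ((w.2.2 : ℝ) : EReal) := by
  obtain ⟨π, hπ, hfin, rfl⟩ := hw
  have h1 : klDiv (m1 π) (m1 P) ≠ ⊤ := ne_top_of_le_ne_top hfin (klDiv_map_le _ _ measurable_fst)
  have h2 : klDiv (m2 π) (m2 P) ≠ ⊤ := ne_top_of_le_ne_top hfin (klDiv_map_le _ _ measurable_snd)
  refine ⟨ENNReal.toReal_nonneg, ENNReal.toReal_nonneg, ?_⟩
  unfold phiL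
  refine iInf_le_of_le (m1 π) <| iInf_le_of_le (m2 π) <| iInf_le_of_le inferInstance <|
    iInf_le_of_le inferInstance <| iInf_le_of_le (klDiv_ne_top_iff.1 h1).1 <|
    iInf_le_of_le (klDiv_ne_top_iff.1 h2).1 <| iInf_le_of_le (aux_KL_real _ _ h1) <|
    iInf_le_of_le (aux_KL_real _ _ h2) ?_
  unfold Dmin
  refine iInf_le_of_le π <| iInf_le_of_le ⟨hπ, rfl, rfl⟩ ?_
  rw [aux_KL_real _ _ hfin]

lemma aux_coe_sum {ι : Type*} (s : Finset ι) (f : ι → ℝ) :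
    ((∑ i ∈ s, f i : ℝ) : EReal) = ∑ i ∈ s, (f i : EReal) := by
  induction s using Finset.induction_on with
  | empty => simp
  | insert a s ha ih => rw [Finset.sum_insert ha, Finset.sum_insert ha, EReal.coe_add, ih]

lemma aux_lce_le (P : Measure (X × Y)) [IsProbabilityMeasure P] {a : ℝ × ℝ × ℝ}
    (ha : a ∈ convexHull ℝ (auxR P)) : lce2 (phiL P) a.1 a.2.1 ≤ ((a.2.2 : ℝ) : EReal) := by
  obtain ⟨q, p, hq, hq1, hp, rfl⟩ := aux_carath ha
  unfold lce2
  refine iInf_le_of_le q <| iInf_le_of_le (fun i => ((p i).1, (p i).2.1)) <|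
    iInf_le_of_le hq <| iInf_le_of_le hq1 <|
    iInf_le_of_le (fun i => ⟨(aux_phiL_le P (hp i)).1, (aux_phiL_le P (hp i)).2.1⟩) <|
    iInf_le_of_le ?_ <| iInf_le_of_le ?_ ?_
  · simp [Prod.fst_sum]
  · simp [Prod.snd_sum, Prod.fst_sum]
  · simp only [Prod.snd_sum, Prod.smul_snd, smul_eq_mul]
    rw [aux_coe_sum]
    refine Finset.sum_le_sum fun i _ => ?_
    rw [EReal.coe_mul]
    exact mul_le_mul_of_nonneg_left (aux_phiL_le P (hp i)).2.2 (by exact_mod_cast hq i)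

lemma aux_prodSet_meas {n : ℕ} {A : Set (Fin n → X)} {B : Set (Fin n → Y)}
    (hA : MeasurableSet A) (hB : MeasurableSet B) : MeasurableSet (prodSet A B) :=
  (aux_fstv_meas n hA).inter (aux_sndv_meas n hB)

lemma aux_ThetaL_le [StandardBorelSpace X] [StandardBorelSpace Y]
    (P : Measure (X × Y)) [IsProbabilityMeasure P] (n : ℕ) (hn : 1 ≤ n) (α β : ℝ)
    (A : Set (Fin n → X)) (B : Set (Fin n → Y)) (hA : MeasurableSet A) (hB : MeasurableSet B)
    (hPA : piM n (m1 P) A ≤ ENNReal.ofReal (Real.exp (-((n : ℝ) * α))))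
    (hPB : piM n (m2 P) B ≤ ENNReal.ofReal (Real.exp (-((n : ℝ) * β))))
    (hp : piM n P (prodSet A B) ≠ 0) :
    ThetaL P α β ≤ ((-((n : ℝ)⁻¹ * Real.log (piM n P (prodSet A B)).toReal) : ℝ) : EReal) := by
  have hn0 : (0 : ℝ) < n := by exact_mod_cast hn
  set S := prodSet A B with hS
  have hSm : MeasurableSet S := aux_prodSet_meas hA hB
  set Q := (piM n P)[|S] with hQ
  have : IsProbabilityMeasure Q := cond_isProbabilityMeasure hp
  obtain ⟨hfin, hval⟩ := aux_kl_cond (piM n P) S hSm hp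
  obtain ⟨a, ha, h1, h2, h3⟩ := aux_tri_mem P n Q inferInstance hfin
  have hp1 : IsProbabilityMeasure (Q.map fstv) :=
    Measure.isProbabilityMeasure_map (aux_fstv_meas n).aemeasurable
  have hp2 : IsProbabilityMeasure (Q.map sndv) :=
    Measure.isProbabilityMeasure_map (aux_sndv_meas n).aemeasurable
  have hs : (n : ℝ) * α ≤ (klDiv (Q.map fstv) (piM n (m1 P))).toReal := by
    refine aux_kl_ge _ _ ?_ A hA ?_ _ hPA
    · rw [← aux_fstv_map]
      exact ne_top_of_le_ne_top hfin (klDiv_map_le _ _ (aux_fstv_meas n))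
    · rw [Measure.map_apply (aux_fstv_meas n) hA.compl]
      refine measure_mono_null ?_ (ae_cond_mem (μ := piM n P) hSm)
      intro z hz hz2
      exact hz hz2.1
  have ht : (n : ℝ) * β ≤ (klDiv (Q.map sndv) (piM n (m2 P))).toReal := by
    refine aux_kl_ge _ _ ?_ B hB ?_ _ hPB
    · rw [← aux_sndv_map]
      exact ne_top_of_le_ne_top hfin (klDiv_map_le _ _ (aux_sndv_meas n))
    · rw [Measure.map_apply (aux_sndv_meas n) hB.compl]
      refine measure_mono_null ?_ (ae_cond_mem (μ := piM n P) hSm)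
      intro z hz hz2
      exact hz hz2.2
  have h1' : α ≤ a.1 := le_of_mul_le_mul_left (hs.trans h1) hn0
  have h2' : β ≤ a.2.1 := le_of_mul_le_mul_left (ht.trans h2) hn0
  have h3' : a.2.2 ≤ -((n : ℝ)⁻¹ * Real.log (piM n P S).toReal) := by
    have h4 : (n : ℝ) * a.2.2 ≤ -Real.log (piM n P S).toReal := by
      rw [← hval]; exact h3
    have h5 : a.2.2 = (n : ℝ)⁻¹ * (n * a.2.2) := by field_simp
    rw [h5, ← mul_neg]
    exact mul_le_mul_of_nonneg_left h4 (inv_pos.2 hn0).le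
  unfold ThetaL
  refine iInf_le_of_le a.1 <| iInf_le_of_le a.2.1 <| iInf_le_of_le h1' <| iInf_le_of_le h2' ?_
  exact (aux_lce_le P ha).trans (EReal.coe_le_coe_iff.2 h3')

lemma aux_part1 [StandardBorelSpace X] [StandardBorelSpace Y]
    (P : Measure (X × Y)) [IsProbabilityMeasure P] (n : ℕ) (hn : 1 ≤ n) (α β : ℝ) :
    ThetaL P α β ≤ ThetaLn P n α β := by
  have hn0 : (0 : ℝ) < n := by exact_mod_cast hn
  have key : ∀ r : ℝ, (r : EReal) ≤ ThetaL P α β → (r : EReal) ≤ ThetaLn P n α β := by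
    intro r hr
    unfold ThetaLn
    refine aux_scale_le hn (aux_elog_le ?_)
    refine iSup_le fun A => iSup_le fun B => iSup_le fun hA => iSup_le fun hB =>
      iSup_le fun hPA => iSup_le fun hPB => ?_
    by_cases hp : piM n P (prodSet A B) = 0
    · rw [hp]; exact bot_le
    · have h1 := hr.trans (aux_ThetaL_le P n hn α β A B hA hB hPA hPB hp)
      rw [EReal.coe_le_coe_iff] at h1
      have hpos : 0 < (piM n P (prodSet A B)).toReal :=
        ENNReal.toReal_pos hp (measure_ne_top _ _)
      rw [ENNReal.le_ofReal_iff_toReal_le (measure_ne_top _ _) (Real.exp_pos _).le,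
        ← Real.log_le_iff_le_exp hpos]
      have h2 := mul_le_mul_of_nonneg_left h1 hn0.le
      have h3 : (n : ℝ) * -((n : ℝ)⁻¹ * Real.log (piM n P (prodSet A B)).toReal)
        = - Real.log (piM n P (prodSet A B)).toReal := by field_simp
      linarith
  exact EReal.ge_of_forall_gt_iff_ge.1 fun r hr => key r hr.le

/-! ### Part F: the degenerate bounds -/

lemma aux_part3 (P : Measure (X × Y)) [IsProbabilityMeasure P] (n : ℕ) (hn : 1 ≤ n) (α : ℝ) :
    ThetaUn P n α 0 ≤ (α : EReal) := by
  unfold ThetaUn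
  refine aux_le_scale hn (aux_le_elog ?_)
  refine le_iInf fun A => le_iInf fun B => le_iInf fun hA => le_iInf fun hB =>
    le_iInf fun hPA => le_iInf fun hPB => ?_
  refine hPA.trans ?_
  simp only [mul_zero, neg_zero, Real.exp_zero, ENNReal.ofReal_one] at hPB
  have hB0 : piM n (m2 P) Bᶜ = 0 :=
    (prob_compl_eq_zero_iff hB).2 (le_antisymm prob_le_one hPB)
  rw [← aux_sndv_map, Measure.map_apply (aux_sndv_meas n) hB.compl] at hB0
  rw [← aux_fstv_map, Measure.map_apply (aux_fstv_meas n) hA]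
  refine measure_mono_ae ?_
  filter_upwards [show ∀ᵐ z ∂(piM n P), sndv z ∈ B from hB0] with z hz hz2
  exact ⟨hz2, hz⟩

lemma aux_part4 (P : Measure (X × Y)) [IsProbabilityMeasure P] (n : ℕ) (hn : 1 ≤ n) (β : ℝ) :
    ThetaUn P n 0 β ≤ (β : EReal) := by
  unfold ThetaUn
  refine aux_le_scale hn (aux_le_elog ?_)
  refine le_iInf fun A => le_iInf fun B => le_iInf fun hA => le_iInf fun hB =>
    le_iInf fun hPA => le_iInf fun hPB => ?_
  refine hPB.trans ?_
  simp only [mul_zero, neg_zero, Real.exp_zero, ENNReal.ofReal_one] at hPA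
  have hA0 : piM n (m1 P) Aᶜ = 0 :=
    (prob_compl_eq_zero_iff hA).2 (le_antisymm prob_le_one hPA)
  rw [← aux_fstv_map, Measure.map_apply (aux_fstv_meas n) hA.compl] at hA0
  rw [← aux_sndv_map, Measure.map_apply (aux_sndv_meas n) hB]
  refine measure_mono_ae ?_
  filter_upwards [show ∀ᵐ z ∂(piM n P), fstv z ∈ A from hA0] with z hz hz2
  exact ⟨hz, hz2⟩

/-! ### Part G: the one-shot reverse inequality -/

/-- Divergence of a tilted measure, bounded tilt. -/
lemma aux_tilt {A : Type*} [MeasurableSpace A] (P : Measure A) [IsProbabilityMeasure P]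
    (f : A → ℝ) (hf : Measurable f) (M : ℝ) (hM : ∀ x, |f x| ≤ M) :
    IsProbabilityMeasure (P.tilted f) ∧ klDiv (P.tilted f) P ≠ ⊤ ∧
    (klDiv (P.tilted f) P).toReal
      = ∫ x, f x ∂(P.tilted f) - Real.log (∫ x, Real.exp (f x) ∂P) := by
  have hfP : Integrable (fun x => Real.exp (f x)) P :=
    Integrable.of_bound (hf.exp).aestronglyMeasurable (Real.exp M)
      (ae_of_all _ fun x => by
        simpa using (le_abs_self _).trans (hM x))
  have hpr : IsProbabilityMeasure (P.tilted f) := isProbabilityMeasure_tilted hfP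
  have hac : P.tilted f ≪ P := tilted_absolutelyContinuous P f
  have hfQ : Integrable f (P.tilted f) := Integrable.of_bound hf.aestronglyMeasurable M
    (ae_of_all _ fun x => by simpa using hM x)
  have hl : llr (P.tilted f) P =ᵐ[P.tilted f]
      fun x => f x - Real.log (∫ x, Real.exp (f x) ∂P) :=
    hac.ae_le (log_rnDeriv_tilted_left_self hfP)
  have hi : Integrable (llr (P.tilted f) P) (P.tilted f) :=
    (integrable_congr hl).2 (hfQ.sub (integrable_const _))
  refine ⟨hpr, klDiv_ne_top hac hi, ?_⟩
  rw [toReal_klDiv hac hi, integral_congr_ae hl, integral_sub hfQ (integrable_const _)]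
  simp

/-- Admissible test functions with values in `[δ,1]`. -/
def auxCls {A : Type*} [MeasurableSpace A] (δ : ℝ) (φ : A → ℝ) : Prop :=
  Measurable φ ∧ ∀ x, δ ≤ φ x ∧ φ x ≤ 1

lemma auxCls_int {A : Type*} [MeasurableSpace A] {δ : ℝ} (hδ : 0 < δ) {φ : A → ℝ}
    (h : auxCls δ φ) (P : Measure A) [IsProbabilityMeasure P] :
    Integrable φ P ∧ δ ≤ ∫ x, φ x ∂P ∧ ∫ x, φ x ∂P ≤ 1 := by
  have hi : Integrable φ P := Integrable.of_bound h.1.aestronglyMeasurable 1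
    (ae_of_all _ fun x => by
      rw [Real.norm_eq_abs, abs_of_nonneg (hδ.le.trans (h.2 x).1)]; exact (h.2 x).2)
  refine ⟨hi, ?_, ?_⟩
  · calc δ = ∫ x, δ ∂P := by simp
      _ ≤ _ := integral_mono (integrable_const _) hi fun x => (h.2 x).1
  · calc _ ≤ ∫ x, (1 : ℝ) ∂P := integral_mono hi (integrable_const _) fun x => (h.2 x).2
      _ = 1 := by simp

lemma aux_oneshot (P : Measure (X × Y)) [IsProbabilityMeasure P] (c u v : ℝ)
    (H : ∀ (QX : Measure X) (QY : Measure Y), IsProbabilityMeasure QX → IsProbabilityMeasure QY →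
      klDiv QX (m1 P) ≠ ⊤ → klDiv QY (m2 P) ≠ ⊤ →
      Dmin QX QY P ≤ ((c + u * (klDiv QX (m1 P)).toReal + v * (klDiv QY (m2 P)).toReal : ℝ) : EReal))
    (δ : ℝ) (hδ : 0 < δ) (φ : X → ℝ) (ψ : Y → ℝ) (hφ : auxCls δ φ) (hψ : auxCls δ ψ) :
    Real.exp (-c) * ((∫ x, φ x ∂(m1 P)) ^ u * (∫ y, ψ y ∂(m2 P)) ^ v) ≤
      ∫ z, φ z.1 ^ u * ψ z.2 ^ v ∂P := by
  have hpφ : ∀ x, 0 < φ x := fun x => hδ.trans_le (hφ.2 x).1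
  have hpψ : ∀ x, 0 < ψ x := fun x => hδ.trans_le (hψ.2 x).1
  have hbd : ∀ t : ℝ, δ ≤ t → t ≤ 1 → |Real.log t| ≤ -Real.log δ := by
    intro t h1 h2
    rw [abs_of_nonpos (Real.log_nonpos (hδ.le.trans h1) h2)]
    exact neg_le_neg (Real.log_le_log hδ h1)
  have hfm : Measurable (fun x => Real.log (φ x)) := hφ.1.log
  have hgm : Measurable (fun x => Real.log (ψ x)) := hψ.1.log
  have hfb : ∀ x, |Real.log (φ x)| ≤ -Real.log δ := fun x => hbd _ (hφ.2 x).1 (hφ.2 x).2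
  have hgb : ∀ x, |Real.log (ψ x)| ≤ -Real.log δ := fun x => hbd _ (hψ.2 x).1 (hψ.2 x).2
  obtain ⟨hX1, hX2, hX3⟩ := aux_tilt (m1 P) _ hfm _ hfb
  obtain ⟨hY1, hY2, hY3⟩ := aux_tilt (m2 P) _ hgm _ hgb
  set QX := (m1 P).tilted (fun x => Real.log (φ x)) with hQX
  set QY := (m2 P).tilted (fun x => Real.log (ψ x)) with hQY
  simp only [Real.exp_log (hpφ _)] at hX3
  simp only [Real.exp_log (hpψ _)] at hY3
  have hIφ := auxCls_int hδ hφ (m1 P)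
  have hIψ := auxCls_int hδ hψ (m2 P)
  set a := ∫ x, φ x ∂(m1 P) with ha
  set b := ∫ y, ψ y ∂(m2 P) with hb
  have ha0 : 0 < a := hδ.trans_le hIφ.2.1
  have hb0 : 0 < b := hδ.trans_le hIψ.2.1
  set I := ∫ z, φ z.1 ^ u * ψ z.2 ^ v ∂P with hI
  have hexp : ∀ z : X × Y, Real.exp (u * Real.log (φ z.1) + v * Real.log (ψ z.2))
      = φ z.1 ^ u * ψ z.2 ^ v := by
    intro z
    rw [Real.exp_add, Real.rpow_def_of_pos (hpφ _), Real.rpow_def_of_pos (hpψ _),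
      mul_comm u, mul_comm v]
  have hhm : Measurable (fun z : X × Y => u * Real.log (φ z.1) + v * Real.log (ψ z.2)) :=
    ((hfm.comp measurable_fst).const_mul u).add ((hgm.comp measurable_snd).const_mul v)
  have hhb : ∀ z : X × Y, |u * Real.log (φ z.1) + v * Real.log (ψ z.2)|
      ≤ |u| * (-Real.log δ) + |v| * (-Real.log δ) := by
    intro z
    refine (abs_add_le _ _).trans ?_
    rw [abs_mul, abs_mul]
    exact add_le_add (mul_le_mul_of_nonneg_left (hfb _) (abs_nonneg _))
      (mul_le_mul_of_nonneg_left (hgb _) (abs_nonneg _))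
  have hI0 : 0 < I := by
    rw [hI]
    simp only [← hexp]
    refine integral_exp_pos ?_
    exact Integrable.of_bound (hhm.exp).aestronglyMeasurable
      (Real.exp (|u| * (-Real.log δ) + |v| * (-Real.log δ)))
      (ae_of_all _ fun x => by
        rw [Real.norm_eq_abs, Real.abs_exp]
        exact Real.exp_le_exp.2 ((le_abs_self _).trans (hhb x)))
  have key : ∀ ε : ℝ, 0 < ε → u * Real.log a + v * Real.log b - c ≤ Real.log I + ε := by
    intro ε hε
    have h1 := (H QX QY hX1 hY1 hX2 hY2).trans_lt
      (EReal.coe_lt_coe_iff.2 (lt_add_of_pos_right _ hε))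
    unfold Dmin at h1
    obtain ⟨π, h2⟩ := iInf_lt_iff.1 h1
    obtain ⟨⟨hπ, hπ1, hπ2⟩, h3⟩ := iInf_lt_iff.1 h2
    have hfin : klDiv π P ≠ ⊤ := by
      intro h
      rw [aux_KL_eq, h] at h3
      exact absurd h3 (not_lt.2 le_top)
    rw [aux_KL_real _ _ hfin, EReal.coe_lt_coe_iff] at h3
    have h4 := aux_dv π P hfin _ hhm _ hhb
    simp only [hexp] at h4
    have i1 : Integrable (fun z : X × Y => u * Real.log (φ z.1)) π :=
      Integrable.of_bound ((hfm.comp measurable_fst).const_mul u).aestronglyMeasurable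
        (|u| * (-Real.log δ)) (ae_of_all _ fun x => by
          rw [Real.norm_eq_abs, abs_mul]; exact mul_le_mul_of_nonneg_left (hfb _) (abs_nonneg _))
    have i2 : Integrable (fun z : X × Y => v * Real.log (ψ z.2)) π :=
      Integrable.of_bound ((hgm.comp measurable_snd).const_mul v).aestronglyMeasurable
        (|v| * (-Real.log δ)) (ae_of_all _ fun x => by
          rw [Real.norm_eq_abs, abs_mul]; exact mul_le_mul_of_nonneg_left (hgb _) (abs_nonneg _))
    have e1 : ∫ z, Real.log (φ z.1) ∂π = ∫ x, Real.log (φ x) ∂QX := by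
      rw [← hπ1, integral_map measurable_fst.aemeasurable hfm.aestronglyMeasurable]
    have e2 : ∫ z, Real.log (ψ z.2) ∂π = ∫ x, Real.log (ψ x) ∂QY := by
      rw [← hπ2, integral_map measurable_snd.aemeasurable hgm.aestronglyMeasurable]
    rw [integral_add i1 i2, integral_const_mul, integral_const_mul, e1, e2] at h4
    have h5 : ∫ x, Real.log (φ x) ∂QX = (klDiv QX (m1 P)).toReal + Real.log a := by linarith
    have h6 : ∫ x, Real.log (ψ x) ∂QY = (klDiv QY (m2 P)).toReal + Real.log b := by linarith
    rw [h5, h6] at h4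
    linarith
  have h7 : u * Real.log a + v * Real.log b - c ≤ Real.log I :=
    le_of_forall_pos_le_add key
  calc _ = Real.exp (u * Real.log a + v * Real.log b - c) := by
        rw [Real.rpow_def_of_pos ha0, Real.rpow_def_of_pos hb0, ← Real.exp_add, ← Real.exp_add]
        congr 1; ring
    _ ≤ Real.exp (Real.log I) := Real.exp_le_exp.2 h7
    _ = I := Real.exp_log hI0

/-! ### Part H: tensorization -/

/-- Gluing a first coordinate. -/
def auxGlue {Z : Type*} [MeasurableSpace Z] {n : ℕ} (z : Z) (w : Fin n → Z) : Fin (n + 1) → Z :=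
  (MeasurableEquiv.piFinSuccAbove (fun _ : Fin (n + 1) => Z) 0).symm (z, w)

lemma auxGlue_meas {Z : Type*} [MeasurableSpace Z] {n : ℕ} :
    Measurable (fun p : Z × (Fin n → Z) => auxGlue p.1 p.2) :=
  (MeasurableEquiv.piFinSuccAbove (fun _ : Fin (n + 1) => Z) 0).symm.measurable

lemma auxGlue_fst {n : ℕ} (z : X × Y) (w : Fin n → X × Y) :
    fstv (auxGlue z w) = auxGlue z.1 (fstv w) := by
  funext i
  refine Fin.cases ?_ (fun j => ?_) i
  · simp [auxGlue, fstv, MeasurableEquiv.piFinSuccAbove]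
  · simp [auxGlue, fstv, MeasurableEquiv.piFinSuccAbove]

lemma auxGlue_snd {n : ℕ} (z : X × Y) (w : Fin n → X × Y) :
    sndv (auxGlue z w) = auxGlue z.2 (sndv w) := by
  funext i
  refine Fin.cases ?_ (fun j => ?_) i
  · simp [auxGlue, sndv, MeasurableEquiv.piFinSuccAbove]
  · simp [auxGlue, sndv, MeasurableEquiv.piFinSuccAbove]

lemma auxCls_glue {Z : Type*} [MeasurableSpace Z] {n : ℕ} {δ : ℝ} {F : (Fin (n + 1) → Z) → ℝ}
    (hF : auxCls δ F) (z : Z) : auxCls δ (fun w : Fin n → Z => F (auxGlue z w)) :=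
  ⟨hF.1.comp (auxGlue_meas.comp (measurable_const.prodMk measurable_id)), fun _ => hF.2 _⟩

lemma aux_fubini {Z : Type*} [MeasurableSpace Z] (P : Measure Z) [IsProbabilityMeasure P]
    {n : ℕ} {δ : ℝ} (hδ : 0 < δ) {F : (Fin (n + 1) → Z) → ℝ} (hF : auxCls δ F) :
    auxCls δ (fun z => ∫ w, F (auxGlue z w) ∂(piM n P)) ∧
    ∫ x, F x ∂(piM (n + 1) P) = ∫ z, ∫ w, F (auxGlue z w) ∂(piM n P) ∂P := by
  have hm : Measurable (fun p : Z × (Fin n → Z) => F (auxGlue p.1 p.2)) := hF.1.comp auxGlue_meas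
  refine ⟨⟨?_, fun z => ?_⟩, ?_⟩
  · exact (hm.stronglyMeasurable.integral_prod_right
      (f := fun z w => F (auxGlue z w)) (ν := piM n P)).measurable
  · exact (auxCls_int hδ (auxCls_glue hF z) (piM n P)).2
  · have hc : auxCls δ (fun p : Z × (Fin n → Z) => F (auxGlue p.1 p.2)) := ⟨hm, fun _ => hF.2 _⟩
    rw [← aux_succ_symm n P, integral_map_equiv]
    exact integral_prod _ (auxCls_int hδ hc (P.prod (piM n P))).1

lemma auxCls_pow {A B C : Type*} [MeasurableSpace A] [MeasurableSpace B] [MeasurableSpace C]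
    {δ u v : ℝ} (hδ : 0 < δ) (hu : 0 < u) (hv : 0 < v)
    {φ : A → ℝ} {ψ : B → ℝ} (hφ : auxCls δ φ) (hψ : auxCls δ ψ)
    {f : C → A} {g : C → B} (hf : Measurable f) (hg : Measurable g) :
    auxCls (δ ^ u * δ ^ v) (fun z => φ (f z) ^ u * ψ (g z) ^ v) := by
  refine ⟨((hφ.1.comp hf).pow_const u).mul ((hψ.1.comp hg).pow_const v), fun z => ⟨?_, ?_⟩⟩
  · have h1 := (hφ.2 (f z)).1
    have h2 := (hψ.2 (g z)).1
    have h3 := Real.rpow_le_rpow hδ.le h1 hu.le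
    have h4 := Real.rpow_le_rpow hδ.le h2 hv.le
    exact mul_le_mul h3 h4 (Real.rpow_nonneg hδ.le _) ((Real.rpow_nonneg hδ.le _).trans h3)
  · have h1 := hφ.2 (f z)
    have h2 := hψ.2 (g z)
    exact mul_le_one₀ (Real.rpow_le_one (hδ.le.trans h1.1) h1.2 hu.le)
      (Real.rpow_nonneg (hδ.le.trans h2.1) _)
      (Real.rpow_le_one (hδ.le.trans h2.1) h2.2 hv.le)

lemma aux_tensor (P : Measure (X × Y)) [IsProbabilityMeasure P] (c u v : ℝ)
    (hu : 0 < u) (hv : 0 < v)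
    (H : ∀ (QX : Measure X) (QY : Measure Y), IsProbabilityMeasure QX → IsProbabilityMeasure QY →
      klDiv QX (m1 P) ≠ ⊤ → klDiv QY (m2 P) ≠ ⊤ →
      Dmin QX QY P ≤ ((c + u * (klDiv QX (m1 P)).toReal + v * (klDiv QY (m2 P)).toReal : ℝ) : EReal))
    (δ : ℝ) (hδ : 0 < δ) (n : ℕ) : ∀ (φ : (Fin n → X) → ℝ) (ψ : (Fin n → Y) → ℝ),
    auxCls δ φ → auxCls δ ψ →
    Real.exp (-(n * c)) * ((∫ x, φ x ∂(piM n (m1 P))) ^ u * (∫ y, ψ y ∂(piM n (m2 P))) ^ v) ≤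
      ∫ z, φ (fstv z) ^ u * ψ (sndv z) ^ v ∂(piM n P) := by
  induction n with
  | zero =>
    intro φ ψ hφ hψ
    have e1 : ∫ x, φ x ∂(piM 0 (m1 P)) = φ default := by
      have : φ = fun _ => φ default := by
        funext x; rw [Subsingleton.elim x default]
      rw [this]; simp
    have e2 : ∫ x, ψ x ∂(piM 0 (m2 P)) = ψ default := by
      have : ψ = fun _ => ψ default := by
        funext x; rw [Subsingleton.elim x default]
      rw [this]; simp
    have e3 : ∀ z : Fin 0 → X × Y, φ (fstv z) ^ u * ψ (sndv z) ^ v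
        = φ default ^ u * ψ default ^ v := by
      intro z
      rw [Subsingleton.elim (fstv z) default, Subsingleton.elim (sndv z) default]
    rw [e1, e2]
    simp only [e3]
    simp
  | succ n ih =>
    intro φ ψ hφ hψ
    obtain ⟨hΦ, eΦ⟩ := aux_fubini (m1 P) hδ hφ
    obtain ⟨hΨ, eΨ⟩ := aux_fubini (m2 P) hδ hψ
    have hδ' : 0 < δ ^ u * δ ^ v := mul_pos (Real.rpow_pos_of_pos hδ _) (Real.rpow_pos_of_pos hδ _)
    have hF := auxCls_pow hδ hu hv hφ hψ (aux_fstv_meas (X := X) (Y := Y) (n + 1))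
      (aux_sndv_meas (X := X) (Y := Y) (n + 1))
    obtain ⟨hI, eI⟩ := aux_fubini P hδ' hF
    rw [eΦ, eΨ, eI]
    have h1 := aux_oneshot P c u v H δ hδ _ _ hΦ hΨ
    have h2 := mul_le_mul_of_nonneg_left h1 (Real.exp_pos (-(n * c))).le
    have hG := auxCls_pow hδ hu hv hΦ hΨ (measurable_fst (α := X) (β := Y))
      (measurable_snd (α := X) (β := Y))
    calc _ = Real.exp (-(n * c)) * (Real.exp (-c) *
          ((∫ z, ∫ w, φ (auxGlue z w) ∂(piM n (m1 P)) ∂(m1 P)) ^ u *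
            (∫ z, ∫ w, ψ (auxGlue z w) ∂(piM n (m2 P)) ∂(m2 P)) ^ v)) := by
          rw [← mul_assoc (Real.exp _) (Real.exp _), ← Real.exp_add]
          congr 2
          push_cast; ring
      _ ≤ _ := h2
      _ ≤ _ := by
          rw [← integral_const_mul]
          refine integral_mono ((auxCls_int hδ' hG P).1.const_mul _) (auxCls_int hδ' hI P).1 ?_
          intro z
          have h3 := ih _ _ (auxCls_glue hφ z.1) (auxCls_glue hψ z.2)
          simp only [auxGlue_fst, auxGlue_snd]
          exact h3

lemma aux_sets (P : Measure (X × Y)) [IsProbabilityMeasure P] (c u v : ℝ)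
    (hu : 0 < u) (hv : 0 < v)
    (H : ∀ (QX : Measure X) (QY : Measure Y), IsProbabilityMeasure QX → IsProbabilityMeasure QY →
      klDiv QX (m1 P) ≠ ⊤ → klDiv QY (m2 P) ≠ ⊤ →
      Dmin QX QY P ≤ ((c + u * (klDiv QX (m1 P)).toReal + v * (klDiv QY (m2 P)).toReal : ℝ) : EReal))
    (n : ℕ) (A : Set (Fin n → X)) (B : Set (Fin n → Y)) (hA : MeasurableSet A)
    (hB : MeasurableSet B) :
    Real.exp (-(n * c)) * ((piM n (m1 P)).real A ^ u * (piM n (m2 P)).real B ^ v) ≤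
      (piM n P).real (prodSet A B) := by
  have key : ∀ δ : ℝ, 0 < δ → δ < 1 →
      Real.exp (-(n * c)) * ((piM n (m1 P)).real A ^ u * (piM n (m2 P)).real B ^ v) ≤
      (piM n P).real (prodSet A B) + (δ ^ u + δ ^ v) := by
    intro δ hδ hδ1
    have hA' : auxCls δ (fun x => max (A.indicator (fun _ => (1 : ℝ)) x) δ) := by
      refine ⟨(measurable_const.indicator hA).max measurable_const, fun x => ⟨le_max_right _ _, ?_⟩⟩
      refine max_le ?_ hδ1.le
      by_cases hx : x ∈ A <;> simp [hx]
    have hB' : auxCls δ (fun x => max (B.indicator (fun _ => (1 : ℝ)) x) δ) := by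
      refine ⟨(measurable_const.indicator hB).max measurable_const, fun x => ⟨le_max_right _ _, ?_⟩⟩
      refine max_le ?_ hδ1.le
      by_cases hx : x ∈ B <;> simp [hx]
    have h1 := aux_tensor P c u v hu hv H δ hδ n _ _ hA' hB'
    have hAi : (piM n (m1 P)).real A ≤
        ∫ x, max (A.indicator (fun _ => (1 : ℝ)) x) δ ∂(piM n (m1 P)) := by
      rw [← integral_indicator_one hA]
      exact integral_mono ((integrable_const (1 : ℝ)).indicator hA)
        (auxCls_int hδ hA' _).1 fun x => le_max_left _ _
    have hBi : (piM n (m2 P)).real B ≤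
        ∫ x, max (B.indicator (fun _ => (1 : ℝ)) x) δ ∂(piM n (m2 P)) := by
      rw [← integral_indicator_one hB]
      exact integral_mono ((integrable_const (1 : ℝ)).indicator hB)
        (auxCls_int hδ hB' _).1 fun x => le_max_left _ _
    have hδ' : 0 < δ ^ u * δ ^ v := mul_pos (Real.rpow_pos_of_pos hδ _) (Real.rpow_pos_of_pos hδ _)
    have hF := auxCls_pow hδ hu hv hA' hB' (aux_fstv_meas (X := X) (Y := Y) n)
      (aux_sndv_meas (X := X) (Y := Y) n)
    have hSm : MeasurableSet (prodSet A B) := aux_prodSet_meas hA hB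
    have hSi : Integrable ((prodSet A B).indicator (1 : (Fin n → X × Y) → ℝ)) (piM n P) :=
      (integrable_const (1 : ℝ)).indicator hSm
    refine le_trans ?_ (h1.trans ?_)
    · refine mul_le_mul_of_nonneg_left ?_ (Real.exp_pos _).le
      exact mul_le_mul (Real.rpow_le_rpow measureReal_nonneg hAi hu.le)
        (Real.rpow_le_rpow measureReal_nonneg hBi hv.le)
        (Real.rpow_nonneg measureReal_nonneg _)
        (Real.rpow_nonneg (measureReal_nonneg.trans hAi) _)
    · calc _ ≤ ∫ z, ((prodSet A B).indicator (1 : (Fin n → X × Y) → ℝ) z + (δ ^ u + δ ^ v))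
            ∂(piM n P) := by
            refine integral_mono (auxCls_int hδ' hF _).1
              (hSi.add (integrable_const _)) fun z => ?_
            have p1 : 0 ≤ δ ^ u := Real.rpow_nonneg hδ.le _
            have p2 : 0 ≤ δ ^ v := Real.rpow_nonneg hδ.le _
            have p3 : δ ^ u ≤ 1 := Real.rpow_le_one hδ.le hδ1.le hu.le
            have p4 : δ ^ v ≤ 1 := Real.rpow_le_one hδ.le hδ1.le hv.le
            by_cases ha : fstv z ∈ A <;> by_cases hb : sndv z ∈ B
            · simp [ha, hb, prodSet, hδ1.le]; linarith
            · simp [ha, hb, prodSet, hδ1.le, hδ.le]; linarith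
            · simp [ha, hb, prodSet, hδ1.le, hδ.le]; linarith
            · simp [ha, hb, prodSet, hδ.le]; nlinarith
        _ = _ := by
            rw [integral_add hSi (integrable_const _), integral_indicator_one hSm]
            simp
  have hlim : Tendsto (fun δ : ℝ => (piM n P).real (prodSet A B) + (δ ^ u + δ ^ v))
      (𝓝[>] 0) (𝓝 ((piM n P).real (prodSet A B) + (0 + 0))) := by
    refine tendsto_const_nhds.add (Tendsto.add ?_ ?_)
    · have := (Real.continuousAt_rpow_const 0 u (Or.inr hu.le)).tendsto
      rw [Real.zero_rpow hu.ne'] at this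
      exact this.mono_left nhdsWithin_le_nhds
    · have := (Real.continuousAt_rpow_const 0 v (Or.inr hv.le)).tendsto
      rw [Real.zero_rpow hv.ne'] at this
      exact this.mono_left nhdsWithin_le_nhds
  rw [add_zero, add_zero] at hlim
  refine ge_of_tendsto hlim ?_
  filter_upwards [Ioo_mem_nhdsGT (show (0 : ℝ) < 1 by norm_num)] with δ hδ
  exact key δ hδ.1 hδ.2

/-! ### Part I: the second inequality -/

/-- Triples dominated by `φ̄`. -/
def auxU (P : Measure (X × Y)) : Set (ℝ × ℝ × ℝ) :=
  {w | ∃ (QX : Measure X) (QY : Measure Y), IsProbabilityMeasure QX ∧ IsProbabilityMeasure QY ∧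
    klDiv QX (m1 P) ≠ ⊤ ∧ klDiv QY (m2 P) ≠ ⊤ ∧
    w.1 = (klDiv QX (m1 P)).toReal ∧ w.2.1 = (klDiv QY (m2 P)).toReal ∧
    ((w.2.2 : ℝ) : EReal) ≤ Dmin QX QY P}

def auxG (P : Measure (X × Y)) : Set (ℝ × ℝ × ℝ) :=
  {w | ∃ a ∈ convexHull ℝ (auxU P), a.1 ≤ w.1 ∧ a.2.1 ≤ w.2.1 ∧ w.2.2 ≤ a.2.2}

lemma auxG_convex (P : Measure (X × Y)) : Convex ℝ (auxG P) := by
  rintro w ⟨a, ha, h1, h2, h3⟩ w' ⟨a', ha', h1', h2', h3'⟩ s t hs ht hst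
  refine ⟨s • a + t • a', convex_convexHull ℝ _ ha ha' hs ht hst, ?_, ?_, ?_⟩
  · simp only [Prod.fst_add, Prod.smul_fst, smul_eq_mul]
    nlinarith [mul_le_mul_of_nonneg_left h1 hs, mul_le_mul_of_nonneg_left h1' ht]
  · simp only [Prod.snd_add, Prod.smul_snd, Prod.fst_add, Prod.smul_fst, smul_eq_mul]
    nlinarith [mul_le_mul_of_nonneg_left h2 hs, mul_le_mul_of_nonneg_left h2' ht]
  · simp only [Prod.snd_add, Prod.smul_snd, smul_eq_mul]
    nlinarith [mul_le_mul_of_nonneg_left h3 hs, mul_le_mul_of_nonneg_left h3' ht]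

lemma auxU_mem (P : Measure (X × Y)) [IsProbabilityMeasure P] : (0, 0, 0) ∈ auxU P := by
  refine ⟨m1 P, m2 P, inferInstance, inferInstance, ?_, ?_, ?_, ?_, ?_⟩
  · rw [klDiv_self]; simp
  · rw [klDiv_self]; simp
  · rw [klDiv_self]; simp
  · rw [klDiv_self]; simp
  · unfold Dmin
    refine le_iInf fun π => le_iInf fun hπ => ?_
    have := hπ.1
    rw [aux_KL_eq]
    exact EReal.coe_ennreal_nonneg _

lemma aux_le_phiU (P : Measure (X × Y)) [IsProbabilityMeasure P] {w : ℝ × ℝ × ℝ}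
    (hw : w ∈ auxU P) : 0 ≤ w.1 ∧ 0 ≤ w.2.1 ∧ ((w.2.2 : ℝ) : EReal) ≤ phiU P w.1 w.2.1 := by
  obtain ⟨QX, QY, hX, hY, h1, h2, e1, e2, h3⟩ := hw
  refine ⟨e1 ▸ ENNReal.toReal_nonneg, e2 ▸ ENNReal.toReal_nonneg, ?_⟩
  unfold phiU
  refine le_iSup_of_le QX <| le_iSup_of_le QY <| le_iSup_of_le hX <|
    le_iSup_of_le hY <| le_iSup_of_le (klDiv_ne_top_iff.1 h1).1 <|
    le_iSup_of_le (klDiv_ne_top_iff.1 h2).1 <| le_iSup_of_le (e1 ▸ aux_KL_real _ _ h1) <|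
    le_iSup_of_le (e2 ▸ aux_KL_real _ _ h2) h3

lemma aux_le_uce (P : Measure (X × Y)) [IsProbabilityMeasure P] {a : ℝ × ℝ × ℝ}
    (ha : a ∈ convexHull ℝ (auxU P)) :
    0 ≤ a.1 ∧ 0 ≤ a.2.1 ∧ ((a.2.2 : ℝ) : EReal) ≤ uce2 (phiU P) a.1 a.2.1 := by
  obtain ⟨q, p, hq, hq1, hp, rfl⟩ := aux_carath ha
  have e1 : (∑ i, q i • p i).1 = ∑ i, q i * (p i).1 := by simp [Prod.fst_sum]
  have e2 : (∑ i, q i • p i).2.1 = ∑ i, q i * (p i).2.1 := by simp [Prod.snd_sum, Prod.fst_sum]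
  refine ⟨?_, ?_, ?_⟩
  · rw [e1]
    exact Finset.sum_nonneg fun i _ => mul_nonneg (hq i) (aux_le_phiU P (hp i)).1
  · rw [e2]
    exact Finset.sum_nonneg fun i _ => mul_nonneg (hq i) (aux_le_phiU P (hp i)).2.1
  unfold uce2
  refine le_iSup_of_le q <| le_iSup_of_le (fun i => ((p i).1, (p i).2.1)) <|
    le_iSup_of_le hq <| le_iSup_of_le hq1 <|
    le_iSup_of_le (fun i => ⟨(aux_le_phiU P (hp i)).1, (aux_le_phiU P (hp i)).2.1⟩) <|
    le_iSup_of_le e1.symm <| le_iSup_of_le e2.symm ?_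
  simp only [Prod.snd_sum, Prod.smul_snd, smul_eq_mul]
  rw [aux_coe_sum]
  refine Finset.sum_le_sum fun i _ => ?_
  rw [EReal.coe_mul]
  exact mul_le_mul_of_nonneg_left (aux_le_phiU P (hp i)).2.2 (by exact_mod_cast hq i)

lemma auxG_not_mem (P : Measure (X × Y)) [IsProbabilityMeasure P] (α β θ : ℝ)
    (hθ : ThetaU P α β < (θ : EReal)) : (α, β, θ) ∉ auxG P := by
  rintro ⟨a, ha, h1, h2, h3⟩
  obtain ⟨p1, p2, p3⟩ := aux_le_uce P ha
  refine absurd hθ (not_lt.2 ?_)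
  refine (EReal.coe_le_coe_iff.2 h3).trans (p3.trans ?_)
  unfold ThetaU
  exact le_iSup_of_le a.1 <| le_iSup_of_le a.2.1 <| le_iSup_of_le p1 <| le_iSup_of_le h1 <|
    le_iSup_of_le p2 <| le_iSup_of_le h2 le_rfl

lemma aux_support (P : Measure (X × Y)) [IsProbabilityMeasure P] (α β θ : ℝ)
    (hα : 0 < α) (hβ : 0 < β) (hθ : ThetaU P α β < (θ : EReal)) :
    ∃ u v : ℝ, 0 ≤ u ∧ 0 ≤ v ∧ ∀ w ∈ auxU P, w.2.2 ≤ θ + u * (w.1 - α) + v * (w.2.1 - β) := by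
  have h0 : (0, 0, 0) ∈ convexHull ℝ (auxU P) := subset_convexHull ℝ _ (auxU_mem P)
  obtain ⟨l, hl, hG⟩ := aux_sep (auxG_convex P) ⟨_, ⟨_, h0, le_rfl, le_rfl, le_rfl⟩⟩
    (auxG_not_mem P α β θ hθ)
  set l1 := l (1, 0, 0) with hl1
  set l2 := l (0, 1, 0) with hl2
  set l3 := l (0, 0, 1) with hl3
  have hexp : ∀ x y z : ℝ, l (x, y, z) = l1 * x + l2 * y + l3 * z := by
    intro x y z
    have : ((x, y, z) : ℝ × ℝ × ℝ) = x • (1, 0, 0) + y • (0, 1, 0) + z • (0, 0, 1) := by simp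
    rw [this, map_add, map_add, map_smul, map_smul, map_smul]
    simp only [smul_eq_mul]; ring
  have hG' : ∀ x y z : ℝ, (x, y, z) ∈ auxG P →
      l1 * x + l2 * y + l3 * z ≤ l1 * α + l2 * β + l3 * θ := by
    intro x y z h
    have := hG _ h
    rwa [hexp, hexp] at this
  have hmem : ∀ x y z : ℝ, 0 ≤ x → 0 ≤ y → z ≤ 0 → (x, y, z) ∈ auxG P :=
    fun x y z hx hy hz => ⟨_, h0, hx, hy, hz⟩
  set K := l1 * α + l2 * β + l3 * θ with hK
  have hK0 : 0 ≤ K := by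
    have := hG' 0 0 0 (hmem _ _ _ le_rfl le_rfl le_rfl)
    simpa using this
  have n1 : l1 ≤ 0 := by
    by_contra h
    push Not at h
    have := hG' ((K + 1) / l1) 0 0 (hmem _ _ _ (by positivity) le_rfl le_rfl)
    rw [mul_div_cancel₀ _ h.ne'] at this
    linarith
  have n2 : l2 ≤ 0 := by
    by_contra h
    push Not at h
    have := hG' 0 ((K + 1) / l2) 0 (hmem _ _ _ le_rfl (by positivity) le_rfl)
    rw [mul_div_cancel₀ _ h.ne'] at this
    linarith
  have n3 : 0 ≤ l3 := by
    by_contra h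
    push Not at h
    have := hG' 0 0 ((K + 1) / l3) (hmem _ _ _ le_rfl le_rfl
      (div_nonpos_of_nonneg_of_nonpos (by linarith) h.le))
    rw [mul_div_cancel₀ _ h.ne] at this
    linarith
  have n4 : 0 < l3 := by
    rcases n3.lt_or_eq with h | h
    · exact h
    · exfalso
      have q1 : l1 * α ≤ 0 := mul_nonpos_of_nonpos_of_nonneg n1 hα.le
      have q2 : l2 * β ≤ 0 := mul_nonpos_of_nonpos_of_nonneg n2 hβ.le
      rw [← h] at hK
      have r1 : l1 = 0 := (mul_eq_zero.1 (show l1 * α = 0 by linarith)).resolve_right hα.ne'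
      have r2 : l2 = 0 := (mul_eq_zero.1 (show l2 * β = 0 by linarith)).resolve_right hβ.ne'
      apply hl
      ext <;> simp [hexp, r1, r2, ← h]
  refine ⟨-l1 / l3, -l2 / l3, div_nonneg (by linarith) n3, div_nonneg (by linarith) n3, ?_⟩
  rintro ⟨x, y, z⟩ hw
  have := hG' x y z ⟨_, subset_convexHull ℝ _ hw, le_rfl, le_rfl, le_rfl⟩
  have e : θ + -l1 / l3 * (x - α) + -l2 / l3 * (y - β) - z
      = (K - (l1 * x + l2 * y + l3 * z)) / l3 := by
    rw [hK]; field_simp; ring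
  have : 0 ≤ (K - (l1 * x + l2 * y + l3 * z)) / l3 := div_nonneg (by linarith) n3
  show z ≤ θ + -l1 / l3 * (x - α) + -l2 / l3 * (y - β)
  linarith

lemma aux_part2_real (P : Measure (X × Y)) [IsProbabilityMeasure P] (n : ℕ) (hn : 1 ≤ n)
    (α β θ η : ℝ) (hα : 0 < α) (hβ : 0 < β) (hθ : ThetaU P α β < (θ : EReal)) (hη : 0 < η) :
    ThetaUn P n α β ≤ ((θ + η * (α + β) : ℝ) : EReal) := by
  obtain ⟨u, v, hu, hv, huv⟩ := aux_support P α β θ hα hβ hθ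
  have hu' : 0 < u + η := by linarith
  have hv' : 0 < v + η := by linarith
  have H : ∀ (QX : Measure X) (QY : Measure Y), IsProbabilityMeasure QX → IsProbabilityMeasure QY →
      klDiv QX (m1 P) ≠ ⊤ → klDiv QY (m2 P) ≠ ⊤ →
      Dmin QX QY P ≤ (((θ - u * α - v * β) + (u + η) * (klDiv QX (m1 P)).toReal
        + (v + η) * (klDiv QY (m2 P)).toReal : ℝ) : EReal) := by
    intro QX QY hX hY h1 h2
    refine EReal.ge_of_forall_gt_iff_ge.1 fun d hd => ?_
    have : d ≤ θ + u * ((klDiv QX (m1 P)).toReal - α) + v * ((klDiv QY (m2 P)).toReal - β) :=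
      huv ((klDiv QX (m1 P)).toReal, (klDiv QY (m2 P)).toReal, d)
        ⟨QX, QY, hX, hY, h1, h2, rfl, rfl, hd.le⟩
    rw [EReal.coe_le_coe_iff]
    have p1 := mul_nonneg hη.le (ENNReal.toReal_nonneg (a := klDiv QX (m1 P)))
    have p2 := mul_nonneg hη.le (ENNReal.toReal_nonneg (a := klDiv QY (m2 P)))
    linarith
  unfold ThetaUn
  refine aux_le_scale hn (aux_le_elog ?_)
  refine le_iInf fun A => le_iInf fun B => le_iInf fun hA => le_iInf fun hB =>
    le_iInf fun hPA => le_iInf fun hPB => ?_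
  have h1 := aux_sets P _ _ _ hu' hv' H n A B hA hB
  have hPA' : Real.exp (-((n : ℝ) * α)) ≤ (piM n (m1 P)).real A :=
    (ENNReal.ofReal_le_iff_le_toReal (measure_ne_top _ _)).1 hPA
  have hPB' : Real.exp (-((n : ℝ) * β)) ≤ (piM n (m2 P)).real B :=
    (ENNReal.ofReal_le_iff_le_toReal (measure_ne_top _ _)).1 hPB
  rw [ENNReal.ofReal_le_iff_le_toReal (measure_ne_top _ _)]
  refine le_trans ?_ h1
  calc _ = Real.exp (-(n * (θ - u * α - v * β))) *
        (Real.exp (-((n : ℝ) * α)) ^ (u + η) * Real.exp (-((n : ℝ) * β)) ^ (v + η)) := by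
        rw [← Real.exp_mul, ← Real.exp_mul, ← Real.exp_add, ← Real.exp_add]
        congr 1; ring
    _ ≤ _ := by
        refine mul_le_mul_of_nonneg_left ?_ (Real.exp_pos _).le
        exact mul_le_mul (Real.rpow_le_rpow (Real.exp_pos _).le hPA' hu'.le)
          (Real.rpow_le_rpow (Real.exp_pos _).le hPB' hv'.le)
          (Real.rpow_nonneg (Real.exp_pos _).le _)
          (Real.rpow_nonneg measureReal_nonneg _)

lemma aux_part2 (P : Measure (X × Y)) [IsProbabilityMeasure P] (n : ℕ) (hn : 1 ≤ n)
    (α β : ℝ) (hα : 0 < α) (hβ : 0 < β) : ThetaUn P n α β ≤ ThetaU P α β := by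
  refine EReal.le_of_forall_lt_iff_le.1 fun θ hθ => ?_
  refine EReal.le_of_forall_lt_iff_le.1 fun r hr => ?_
  rw [EReal.coe_lt_coe_iff] at hr
  have hab : 0 < α + β := by linarith
  have h := aux_part2_real P n hn α β θ ((r - θ) / (α + β)) hα hβ hθ
    (div_pos (by linarith) hab)
  rwa [div_mul_cancel₀ _ hab.ne', add_sub_cancel] at h

/-- Strong small-set expansion theorem, inequalities;
Theorem `thm:strongsse`. -/
theorem statement9 [TopologicalSpace X] [PolishSpace X] [BorelSpace X]
    [TopologicalSpace Y] [PolishSpace Y] [BorelSpace Y]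
    (P : Measure (X × Y)) [IsProbabilityMeasure P]
    (hndX : ∀ x : X, m1 P ≠ Measure.dirac x) (hndY : ∀ y : Y, m2 P ≠ Measure.dirac y)
    (n : ℕ) (hn : 1 ≤ n)
    (α β : ℝ) (hα0 : 0 ≤ α) (hαmax : (α : EReal) ≤ alphaMax (m1 P))
    (hβ0 : 0 ≤ β) (hβmax : (β : EReal) ≤ alphaMax (m2 P)) :
    (ThetaL P α β ≤ ThetaLn P n α β) ∧
    (0 < α → 0 < β → ThetaUn P n α β ≤ ThetaU P α β) ∧
    (ThetaUn P n α 0 ≤ (α : EReal)) ∧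
    (ThetaUn P n 0 β ≤ (β : EReal)) := by
  have hX : StandardBorelSpace X := inferInstance
  have hY : StandardBorelSpace Y := inferInstance
  exact ⟨aux_part1 P n hn α β, fun hα hβ => aux_part2 P n hn α β hα hβ,
    aux_part3 P n hn α, aux_part4 P n hn β⟩

end BL
end
end
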